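/- The number α₆ = √13 · ln((√13 − 1)/(√13 + 1)) has non-quadraticity measure at most 12.4085; that is, for every real κ > 12.4085, there exist only finitely many real numbers β that are roots of irreducible integer polynomials of degree at most 2 and satisfy |α₆ − β| < H(β)^(−κ), where H(β) denotes the largest absolute value of the coefficients of the irreducible integer polynomial having β as a root. -/

import Mathlib

/-- The height of an integer polynomial: the largest absolute value of its coefficients. -/
def polyHeight (P : Polynomial ℤ) : ℕ :=
  P.support.sup fun i => (P.coeff i).natAbs

section
open MeasureTheory Filter Topology Set

noncomputable def pnf (u : ℝ) : ℝ := Chebyshev.psi (Real.exp u) * Real.exp (-u)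

lemma pnf_nonneg (u : ℝ) : 0 ≤ pnf u :=
  mul_nonneg (Chebyshev.psi_nonneg _) (Real.exp_pos _).le

lemma pnf_le (u : ℝ) : pnf u ≤ Real.log 4 + 4 := by
  unfold pnf
  have := Chebyshev.psi_le_const_mul_self (Real.exp_pos u).le
  rw [Real.exp_neg, ← div_eq_mul_inv, div_le_iff₀ (Real.exp_pos u)]
  exact this

lemma pnf_neg {u : ℝ} (hu : u < 0) : pnf u = 0 := by
  unfold pnf
  rw [Chebyshev.psi_eq_zero_of_le_one, zero_mul]
  exact Real.exp_le_one_iff.2 hu.le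

lemma pnf_meas : Measurable pnf := by
  unfold pnf
  exact (Chebyshev.psi_mono.measurable.comp Real.measurable_exp).mul
    (Real.measurable_exp.comp measurable_neg)

lemma pnf_shift {u v : ℝ} (h : u ≤ v) : Real.exp (-(v - u)) * pnf u ≤ pnf v := by
  unfold pnf
  have h1 : Chebyshev.psi (Real.exp u) ≤ Chebyshev.psi (Real.exp v) :=
    Chebyshev.psi_mono (Real.exp_le_exp.2 h)
  have : Real.exp (-v) = Real.exp (-(v-u)) * Real.exp (-u) := by
    rw [← Real.exp_add]; ring_nf
  rw [this]
  nlinarith [mul_pos (Real.exp_pos (-(v-u))) (Real.exp_pos (-u))]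

noncomputable def pnH (w : ℂ) : ℂ :=
  (ArithmeticFunction.vonMangoldt.LFunctionResidueClassAux (1 : ZMod 1) (1 + w) - 1) / (1 + w)

lemma pnH_cont : ContinuousOn pnH {w | 0 ≤ w.re} := by
  unfold pnH
  apply ContinuousOn.div
  · apply ContinuousOn.sub _ continuousOn_const
    have h := ArithmeticFunction.vonMangoldt.continuousOn_LFunctionResidueClassAux (1 : ZMod 1)
    have h2 : ContinuousOn (fun w : ℂ ↦ 1 + w) {w | 0 ≤ w.re} := by fun_prop
    have h3 : MapsTo (fun w : ℂ ↦ 1 + w) {w | 0 ≤ w.re} {s | 1 ≤ s.re} := by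
      intro w hw
      simpa using hw
    exact ContinuousOn.comp (g := ArithmeticFunction.vonMangoldt.LFunctionResidueClassAux
      (1 : ZMod 1)) h h2 h3
  · fun_prop
  · intro w hw h
    have := congrArg Complex.re h
    simp at this hw
    linarith

lemma pn_laplace {w : ℂ} (hw : 0 < w.re) :
    ∫ u in Ioi (0:ℝ), ((pnf u - 1 : ℝ) : ℂ) * Complex.exp (-w * u) = pnH w := by
  set s : ℂ := 1 + w with hs
  have hsre : 1 < s.re := by simp [hs, hw]
  have hs0 : s ≠ 0 := by
    intro h; rw [h] at hsre; simp at hsre; linarith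
  have hw0 : w ≠ 0 := by
    rintro rfl; simp at hw
  have key : LSeries (fun n ↦ ((ArithmeticFunction.vonMangoldt n : ℝ) : ℂ)) s =
      s * ∫ t in Ioi (1:ℝ), ((Chebyshev.psi t : ℝ) : ℂ) * (t : ℂ) ^ (-(s+1)) := by
    rw [LSeries_eq_mul_integral_of_nonneg (fun n ↦ ArithmeticFunction.vonMangoldt n) zero_le_one
      hsre ?_ (fun n ↦ ArithmeticFunction.vonMangoldt_nonneg)]
    · congr 1
      apply integral_congr_ae
      filter_upwards with t
      congr 1
      rw [Chebyshev.psi]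
      push_cast
      rfl
    · apply Asymptotics.IsBigO.of_bound (Real.log 4 + 4)
      filter_upwards with n
      have := Chebyshev.psi_le_const_mul_self (Nat.cast_nonneg (α := ℝ) n)
      have h2 : ∑ k ∈ Finset.Icc 1 n, ArithmeticFunction.vonMangoldt k = Chebyshev.psi n := by
        rw [Chebyshev.psi]; simp; rfl
      rw [h2, Real.rpow_one, Real.norm_of_nonneg (Chebyshev.psi_nonneg _)]
      simpa using this
  have hL : LSeries (fun n ↦ ((ArithmeticFunction.vonMangoldt n : ℝ) : ℂ)) s =
      ArithmeticFunction.vonMangoldt.LFunctionResidueClassAux (1 : ZMod 1) s + 1 / (s - 1) := by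
    have := ArithmeticFunction.vonMangoldt.eqOn_LFunctionResidueClassAux
      (a := (1 : ZMod 1)) isUnit_one (x := s) hsre
    rw [this]
    simp only [Nat.totient_one, Nat.cast_one, inv_one]
    rw [sub_add_cancel]
    congr 1
    ext n
    congr 1
    rw [ArithmeticFunction.vonMangoldt.residueClass, indicator_of_mem]
    exact Subsingleton.elim _ _
  have himg : Real.exp '' (Ioi 0) = Ioi 1 := by
    ext x; constructor
    · rintro ⟨u, hu, rfl⟩; exact Real.one_lt_exp_iff.2 hu
    · intro hx
      have hx' : (1:ℝ) < x := hx
      exact ⟨Real.log x, Real.log_pos hx', Real.exp_log (by linarith)⟩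
  have hsub : ∫ t in Ioi (1:ℝ), ((Chebyshev.psi t : ℝ) : ℂ) * (t : ℂ) ^ (-(s+1)) =
      ∫ u in Ioi (0:ℝ), ((pnf u : ℝ) : ℂ) * Complex.exp (-w * u) := by
    rw [← himg, integral_image_eq_integral_abs_deriv_smul measurableSet_Ioi
      (fun x _ ↦ (Real.hasDerivAt_exp x).hasDerivWithinAt) Real.exp_injective.injOn]
    apply setIntegral_congr_fun measurableSet_Ioi
    intro u _
    simp only [abs_of_pos (Real.exp_pos u), pnf]
    rw [Complex.real_smul, Complex.ofReal_exp, ← Complex.ofReal_exp u]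
    push_cast
    rw [Complex.cpow_def_of_ne_zero (Complex.exp_ne_zero _), ← Complex.ofReal_exp,
      ← Complex.ofReal_log (Real.exp_pos u).le, Real.log_exp]
    have : (Real.exp u : ℂ) * ((Chebyshev.psi (Real.exp u) : ℝ) * Complex.exp (u * (-(s+1)))) =
      (Chebyshev.psi (Real.exp u) : ℝ) * (Complex.exp u * Complex.exp (u * (-(s+1)))) := by
      push_cast; ring
    rw [this, mul_assoc, ← Complex.exp_add, ← Complex.exp_add]
    congr 2
    rw [hs]; ring
  have hexp : IntegrableOn (fun u : ℝ ↦ Complex.exp (-w * u)) (Ioi 0) :=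
    integrableOn_exp_mul_complex_Ioi (by simpa using hw) 0
  have hint : IntegrableOn (fun u : ℝ ↦ ((pnf u : ℝ) : ℂ) * Complex.exp (-w * u)) (Ioi 0) := by
    apply Integrable.bdd_mul (c := Real.log 4 + 4) hexp
    · exact (Complex.measurable_ofReal.comp pnf_meas).aestronglyMeasurable
    · filter_upwards with u
      rw [Complex.norm_real, Real.norm_of_nonneg (pnf_nonneg u)]
      exact pnf_le u
  have : ∫ u in Ioi (0:ℝ), ((pnf u - 1 : ℝ) : ℂ) * Complex.exp (-w * u) =
     (∫ u in Ioi (0:ℝ), ((pnf u : ℝ) : ℂ) * Complex.exp (-w * u)) -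
     ∫ u in Ioi (0:ℝ), Complex.exp (-w * u) := by
    rw [← integral_sub hint hexp]
    congr 1
    ext u
    push_cast; ring
  rw [this, integral_exp_mul_complex_Ioi (by simpa using hw), ← hsub]
  rw [hL] at key
  have hs1 : s - 1 = w := by rw [hs]; ring
  have : ∫ t in Ioi (1:ℝ), ((Chebyshev.psi t : ℝ) : ℂ) * (t : ℂ) ^ (-(s+1)) =
    (ArithmeticFunction.vonMangoldt.LFunctionResidueClassAux (1 : ZMod 1) s + 1 / (s - 1)) / s := by
    rw [key]; field_simp
  rw [this, pnH, ← hs, hs1]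
  simp only [Complex.ofReal_zero, mul_zero, Complex.exp_zero]
  generalize ArithmeticFunction.vonMangoldt.LFunctionResidueClassAux (1 : ZMod 1) s = A
  field_simp
  rw [hs]; ring
end

section
open MeasureTheory Filter Topology Set

noncomputable def pnK (x : ℝ) : ℝ := 2 * (1 - Real.cos x) / x ^ 2

lemma pnK_nonneg (x : ℝ) : 0 ≤ pnK x := by
  unfold pnK
  have := Real.cos_le_one x
  apply div_nonneg <;> nlinarith [sq_nonneg x]

lemma pnK_meas : Measurable pnK := by
  unfold pnK
  fun_prop

lemma pnK_le (x : ℝ) : pnK x ≤ 5 * (1 + x ^ 2)⁻¹ := by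
  unfold pnK
  rcases eq_or_ne x 0 with rfl | hx
  · simp
  · have hx2 : 0 < x ^ 2 := by positivity
    rw [← div_eq_mul_inv, div_le_div_iff₀ hx2 (by positivity)]
    have := Real.one_sub_sq_div_two_le_cos (x := x)
    have := Real.neg_one_le_cos x
    nlinarith

lemma pnK_int : Integrable pnK := by
  apply (integrable_inv_one_add_sq.const_mul 5).mono' pnK_meas.aestronglyMeasurable
  filter_upwards with x
  rw [Real.norm_of_nonneg (pnK_nonneg x)]
  exact pnK_le x

lemma pnK_pos : 0 < ∫ x, pnK x := by
  rw [integral_pos_iff_support_of_nonneg pnK_nonneg pnK_int]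
  apply lt_of_lt_of_le _ (measure_mono (s := Ioo 0 1) _)
  · simp
  · intro x hx
    have h1 : Real.cos x < 1 := by
      have := Real.cos_lt_cos_of_nonneg_of_le_pi_div_two le_rfl
        (by linarith [hx.2, Real.pi_gt_three] : x ≤ Real.pi / 2) hx.1
      simpa using this
    simp only [Function.mem_support, pnK]
    have : 0 < x := hx.1
    have : 0 < 2 * (1 - Real.cos x) / x ^ 2 := by apply div_pos; linarith; positivity
    exact this.ne'

lemma pnK_fourier {x : ℝ} (hx : x ≠ 0) :
    ∫ t in (-1:ℝ)..1, ((1 - |t| : ℝ) : ℂ) * Complex.exp (Complex.I * t * x) = pnK x := by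
  have hc : Continuous (fun t : ℝ ↦ ((1 - |t| : ℝ) : ℂ) * Complex.exp (Complex.I * t * x)) := by
    fun_prop
  have hxc : (x : ℂ) ≠ 0 := by exact_mod_cast hx
  set y : ℂ := Complex.I * x with hy
  have hy0 : y ≠ 0 := mul_ne_zero Complex.I_ne_zero hxc
  rw [← intervalIntegral.integral_add_adjacent_intervals (b := 0)
    (hc.intervalIntegrable _ _) (hc.intervalIntegrable _ _)]
  have h1 : ∫ t in (-1:ℝ)..0, ((1 - |t| : ℝ) : ℂ) * Complex.exp (Complex.I * t * x) =
      ∫ t in (-1:ℝ)..0, (1 + (t:ℂ)) * Complex.exp (t * y) := by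
    apply intervalIntegral.integral_congr
    intro t ht
    rw [uIcc_of_le (by norm_num)] at ht
    simp only [abs_of_nonpos ht.2]
    congr 1
    · push_cast; ring
    · rw [hy]; congr 1; ring
  have h2 : ∫ t in (0:ℝ)..1, ((1 - |t| : ℝ) : ℂ) * Complex.exp (Complex.I * t * x) =
      ∫ t in (0:ℝ)..1, (1 - (t:ℂ)) * Complex.exp (t * y) := by
    apply intervalIntegral.integral_congr
    intro t ht
    rw [uIcc_of_le (by norm_num)] at ht
    simp only [abs_of_nonneg ht.1]
    congr 1
    · push_cast; ring
    · rw [hy]; congr 1; ring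
  have he : ∀ t : ℝ, HasDerivAt (fun t : ℝ ↦ Complex.exp (t * y)) (y * Complex.exp (t * y)) t := by
    intro t
    have := ((Complex.ofRealCLM.hasDerivAt (x := t)).mul_const y).cexp
    simp at this
    convert this using 1
    ring
  have ht' : ∀ t : ℝ, HasDerivAt (fun t : ℝ ↦ (t : ℂ)) 1 t := fun t ↦ by
    simpa using (hasDerivAt_id t).ofReal_comp
  rw [h1, h2, intervalIntegral.integral_eq_sub_of_hasDerivAt
    (f := fun t : ℝ ↦ (1 + (t:ℂ)) * Complex.exp (t * y) / y - Complex.exp (t * y) / y ^ 2),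
    intervalIntegral.integral_eq_sub_of_hasDerivAt
    (f := fun t : ℝ ↦ (1 - (t:ℂ)) * Complex.exp (t * y) / y + Complex.exp (t * y) / y ^ 2)]
  · have hcos : ((Real.cos x : ℝ) : ℂ) = (Complex.exp y + Complex.exp (-y)) / 2 := by
      rw [Complex.ofReal_cos, Complex.cos, hy]; congr 3 <;> ring_nf
    have hy2 : y ^ 2 = - (x:ℂ)^2 := by rw [hy, mul_pow, Complex.I_sq]; ring
    unfold pnK
    push_cast
    rw [← Complex.ofReal_cos, hcos]
    have hxx : (x:ℂ)^2 = - y^2 := by rw [hy2]; ring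
    rw [hxx]
    simp
    field_simp
    ring
  · intro t _
    refine ((((ht' t).const_sub 1).mul (he t) |>.div_const y).add ((he t).div_const (y^2))).congr_deriv ?_
    field_simp
    ring
  · apply Continuous.intervalIntegrable; fun_prop
  · intro t _
    refine ((((ht' t).const_add 1).mul (he t) |>.div_const y).sub ((he t).div_const (y^2))).congr_deriv ?_
    field_simp
    ring
  · apply Continuous.intervalIntegrable; fun_prop
end

section
open MeasureTheory Filter Topology Set

lemma pnf_abs (u : ℝ) : |pnf u - 1| ≤ Real.log 4 + 5 := by
  have := pnf_nonneg u
  have := pnf_le u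
  have := Real.log_nonneg (show (1:ℝ) ≤ 4 by norm_num)
  rw [abs_le]; constructor <;> linarith

lemma pn_fubini {l v ε : ℝ} (hl : 0 < l) (hε : 0 < ε) :
    ∫ t in (-1:ℝ)..1, ((1 - |t| : ℝ) : ℂ) * Complex.exp (Complex.I * t * (l * v : ℝ)) *
      pnH (ε + Complex.I * (l * t : ℝ)) =
    ∫ u in Ioi (0:ℝ), (((pnf u - 1) * Real.exp (-ε * u) * pnK (l * (v - u)) : ℝ) : ℂ) := by
  set F : ℝ → ℝ → ℂ := fun t u ↦ (((1 - |t| : ℝ) : ℂ) * Complex.exp (Complex.I * t * (l * v : ℝ))) *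
    (((pnf u - 1 : ℝ) : ℂ) * Complex.exp (-(ε + Complex.I * (l * t : ℝ)) * u)) with hF
  have hint : Integrable (Function.uncurry F)
      ((volume.restrict (Ioc (-1:ℝ) 1)).prod (volume.restrict (Ioi (0:ℝ)))) := by
    have h1 : Integrable (fun z : ℝ × ℝ ↦ (Real.log 4 + 5) * Real.exp (-ε * z.2))
        ((volume.restrict (Ioc (-1:ℝ) 1)).prod (volume.restrict (Ioi (0:ℝ)))) := by
      apply Integrable.mul_prod (f := fun _ : ℝ ↦ Real.log 4 + 5)
        (g := fun u : ℝ ↦ Real.exp (-ε * u))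
      · exact integrable_const _
      · exact integrableOn_exp_mul_Ioi (by linarith) 0
    apply h1.mono'
    · apply Measurable.aestronglyMeasurable
      have := pnf_meas
      simp only [hF, Function.uncurry_def]
      fun_prop
    · rw [Measure.prod_restrict]
      refine (ae_restrict_mem (measurableSet_Ioc.prod measurableSet_Ioi)).mono ?_
      rintro ⟨t, u⟩ ⟨ht, hu⟩
      simp only [Function.uncurry, hF, norm_mul, Complex.norm_exp, Complex.norm_real, Real.norm_eq_abs]
      have e1 : |1 - (|t|)| ≤ 1 := by
        have h0 : |t| ≤ 1 := abs_le.2 ⟨ht.1.le, ht.2⟩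
        rw [abs_le]; constructor <;> linarith [abs_nonneg t]
      have e2 := pnf_abs u
      have e3 : (Complex.I * t * (l * v : ℝ)).re = 0 := by simp
      have e4 : (-(ε + Complex.I * (l * t : ℝ)) * u).re = -ε * u := by simp
      rw [e3, e4, Real.exp_zero, mul_one]
      have := Real.exp_pos (-ε * u)
      calc |1 - (|t|)| * (|pnf u - 1| * Real.exp (-ε * u)) ≤
          1 * ((Real.log 4 + 5) * Real.exp (-ε * u)) := by gcongr
        _ = _ := by ring
  rw [intervalIntegral.integral_of_le (by norm_num)]
  have hL : ∀ t : ℝ, ((1 - |t| : ℝ) : ℂ) * Complex.exp (Complex.I * t * (l * v : ℝ)) *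
      pnH (ε + Complex.I * (l * t : ℝ)) = ∫ u in Ioi (0:ℝ), F t u := by
    intro t
    rw [← pn_laplace (by simpa using hε), ← integral_const_mul]
  simp_rw [hL]
  rw [integral_integral_swap hint]
  apply integral_congr_ae
  have hne : ∀ᵐ u ∂(volume.restrict (Ioi (0:ℝ))), u ≠ v := by
    apply ae_restrict_of_ae
    exact (Measure.ae_ne volume v)
  filter_upwards [hne] with u hu
  have hx : l * (v - u) ≠ 0 := mul_ne_zero hl.ne' (sub_ne_zero.2 hu.symm)
  push_cast
  rw [← pnK_fourier hx, intervalIntegral.integral_of_le (by norm_num), ← integral_const_mul]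
  apply integral_congr_ae
  filter_upwards with t
  simp only [hF]
  have : Complex.exp (Complex.I * t * (l * v : ℝ)) * Complex.exp (-(ε + Complex.I * (l * t : ℝ)) * u)
    = Complex.exp (-ε * u) * Complex.exp (Complex.I * t * (l * (v - u) : ℝ)) := by
    rw [← Complex.exp_add, ← Complex.exp_add]; congr 1; push_cast; ring
  push_cast at this ⊢
  linear_combination (1 - ((|t| : ℝ) : ℂ)) * ((pnf u : ℂ) - 1) * this

lemma pnK_shift_int {l : ℝ} (hl : 0 < l) (v : ℝ) : Integrable (fun u ↦ pnK (l * (v - u))) := by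
  have h1 : Integrable (fun u ↦ pnK (l * u)) := (integrable_comp_mul_left_iff pnK hl.ne').2 pnK_int
  exact h1.comp_sub_left v

lemma pn_limit {l v : ℝ} (hl : 0 < l) :
    ∫ t in (-1:ℝ)..1, ((1 - |t| : ℝ) : ℂ) * Complex.exp (Complex.I * t * (l * v : ℝ)) *
      pnH (Complex.I * (l * t : ℝ)) =
    ∫ u in Ioi (0:ℝ), (((pnf u - 1) * pnK (l * (v - u)) : ℝ) : ℂ) := by
  have hA : Tendsto (fun ε : ℝ ↦ ∫ t in (-1:ℝ)..1, ((1 - |t| : ℝ) : ℂ) *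
      Complex.exp (Complex.I * t * (l * v : ℝ)) * pnH (ε + Complex.I * (l * t : ℝ))) (𝓝[>] 0)
      (𝓝 (∫ t in (-1:ℝ)..1, ((1 - |t| : ℝ) : ℂ) * Complex.exp (Complex.I * t * (l * v : ℝ)) *
      pnH (Complex.I * (l * t : ℝ)))) := by
    have hc : ContinuousOn (fun z : ℝ × ℝ ↦ pnH (z.1 + Complex.I * (l * z.2 : ℝ)))
        (Icc 0 1 ×ˢ Icc (-1) 1) := by
      apply pnH_cont.comp (by fun_prop)
      rintro ⟨a, b⟩ ⟨ha, hb⟩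
      simpa using ha.1
    obtain ⟨C, hC⟩ := (isCompact_Icc.prod isCompact_Icc).exists_bound_of_continuousOn hc
    apply intervalIntegral.tendsto_integral_filter_of_dominated_convergence (fun _ ↦ C)
    · have : ∀ᶠ ε : ℝ in 𝓝[>] 0, ε ∈ Ioo (0:ℝ) 1 := Ioo_mem_nhdsGT (by norm_num)
      filter_upwards [this] with ε hε
      apply ContinuousOn.aestronglyMeasurable _ measurableSet_uIoc
      apply ContinuousOn.mul
      · fun_prop
      · apply pnH_cont.comp (by fun_prop)
        intro t _
        simpa using hε.1.le
    · have : ∀ᶠ ε : ℝ in 𝓝[>] 0, ε ∈ Ioo (0:ℝ) 1 := Ioo_mem_nhdsGT (by norm_num)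
      filter_upwards [this] with ε hε
      filter_upwards with t ht
      rw [uIoc_of_le (by norm_num)] at ht
      have h := hC (ε, t) ⟨⟨hε.1.le, hε.2.le⟩, ht.1.le, ht.2⟩
      simp only [norm_mul, Complex.norm_exp, Complex.norm_real, Real.norm_eq_abs]
      have e1 : |1 - (|t|)| ≤ 1 := by
        have h0 : |t| ≤ 1 := abs_le.2 ⟨ht.1.le, ht.2⟩
        rw [abs_le]; constructor <;> linarith [abs_nonneg t]
      have e3 : (Complex.I * t * (l * v : ℝ)).re = 0 := by simp
      rw [e3, Real.exp_zero, mul_one]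
      calc _ ≤ 1 * C := by gcongr
        _ = C := one_mul _
    · exact intervalIntegrable_const
    · filter_upwards with t _
      apply Tendsto.const_mul
      have h0 : ContinuousWithinAt pnH {w | 0 ≤ w.re} (Complex.I * (l * t : ℝ)) :=
        pnH_cont _ (by simp)
      refine h0.tendsto.comp ?_
      apply tendsto_nhdsWithin_of_tendsto_nhds_of_eventually_within
      · have : Continuous (fun ε : ℝ ↦ (ε : ℂ) + Complex.I * (l * t : ℝ)) := by fun_prop
        have := this.tendsto 0
        simp only [Complex.ofReal_zero, zero_add] at this
        exact this.mono_left nhdsWithin_le_nhds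
      · filter_upwards [self_mem_nhdsWithin] with ε hε
        have : (0:ℝ) < ε := hε
        simpa using this.le
  have hB : Tendsto (fun ε : ℝ ↦ ∫ u in Ioi (0:ℝ),
      (((pnf u - 1) * Real.exp (-ε * u) * pnK (l * (v - u)) : ℝ) : ℂ)) (𝓝[>] 0)
      (𝓝 (∫ u in Ioi (0:ℝ), (((pnf u - 1) * pnK (l * (v - u)) : ℝ) : ℂ))) := by
    apply tendsto_integral_filter_of_dominated_convergence
      (fun u ↦ (Real.log 4 + 5) * pnK (l * (v - u)))
    · filter_upwards with ε
      apply Measurable.aestronglyMeasurable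
      have := pnf_meas
      have := pnK_meas
      fun_prop
    · filter_upwards [self_mem_nhdsWithin] with ε hε
      have hε' : (0:ℝ) < ε := hε
      filter_upwards [ae_restrict_mem measurableSet_Ioi] with u hu
      have hu' : (0:ℝ) < u := hu
      rw [Complex.norm_real, Real.norm_eq_abs, abs_mul, abs_mul, abs_of_nonneg (pnK_nonneg _),
        abs_of_pos (Real.exp_pos _)]
      have e1 : Real.exp (-ε * u) ≤ 1 := Real.exp_le_one_iff.2 (by nlinarith)
      have := pnf_abs u
      have := pnK_nonneg (l * (v - u))
      calc _ ≤ (Real.log 4 + 5) * 1 * pnK (l * (v - u)) := by gcongr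
        _ = _ := by ring
    · exact ((pnK_shift_int hl v).const_mul _).integrableOn
    · filter_upwards with u
      have : Continuous (fun ε : ℝ ↦ (((pnf u - 1) * Real.exp (-ε * u) * pnK (l * (v - u)) : ℝ) : ℂ)) := by
        fun_prop
      have := this.tendsto 0
      simp only [neg_zero, zero_mul, Real.exp_zero, mul_one] at this
      exact this.mono_left nhdsWithin_le_nhds
  refine tendsto_nhds_unique hA (hB.congr' ?_)
  filter_upwards [self_mem_nhdsWithin] with ε hε
  exact (pn_fubini hl hε).symm

lemma pn_tendsto {l : ℝ} (hl : 0 < l) :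
    Tendsto (fun v ↦ ∫ u in Ioi (0:ℝ), (pnf u - 1) * pnK (l * (v - u))) atTop (𝓝 0) := by
  set G : ℝ → ℂ := fun t ↦ (Ioc (-1:ℝ) 1).indicator
    (fun t ↦ ((1 - |t| : ℝ) : ℂ) * pnH (Complex.I * (l * t : ℝ))) t with hG
  have h := Real.tendsto_integral_exp_smul_cocompact G
  have h2 : Tendsto (fun v : ℝ ↦ -(l * v / (2 * Real.pi))) atTop (cocompact ℝ) := by
    apply Tendsto.mono_right _ atBot_le_cocompact
    apply tendsto_neg_atTop_atBot.comp
    have : (fun v : ℝ ↦ l * v / (2 * Real.pi)) = fun v ↦ (l / (2 * Real.pi)) * v := by ext; ring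
    rw [this]
    exact tendsto_id.const_mul_atTop (by positivity)
  have h3 := h.comp h2
  have h4 : Tendsto (fun v ↦ (((∫ u in Ioi (0:ℝ), (pnf u - 1) * pnK (l * (v - u))) : ℝ) : ℂ))
      atTop (𝓝 0) := by
    refine h3.congr fun v ↦ ?_
    rw [← integral_complex_ofReal, ← pn_limit hl, intervalIntegral.integral_of_le (by norm_num),
      ← integral_indicator measurableSet_Ioc]
    simp only [Function.comp]
    congr 1
    ext t
    simp only [hG]
    by_cases ht : t ∈ Ioc (-1:ℝ) 1
    · rw [indicator_of_mem ht, indicator_of_mem ht, Circle.smul_def, Real.fourierChar_apply,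
        smul_eq_mul]
      have : ((2 * Real.pi * -(t * -(l * v / (2 * Real.pi))) : ℝ) : ℂ) * Complex.I =
        Complex.I * t * (l * v : ℝ) := by
        have hpi : (Real.pi : ℂ) ≠ 0 := by exact_mod_cast Real.pi_ne_zero
        push_cast
        field_simp
      rw [this]; ring
    · rw [indicator_of_notMem ht, indicator_of_notMem ht, smul_zero]
  have h5 := (Complex.continuous_re.tendsto 0).comp h4
  simpa [Function.comp_def] using h5
end

section
open MeasureTheory Filter Topology Set

lemma pnPhi_int {l : ℝ} (v : ℝ) : Integrable (fun w ↦ pnf (v - w / l) * pnK w) := by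
  apply pnK_int.bdd_mul (c := Real.log 4 + 4)
  · have := pnf_meas
    apply Measurable.aestronglyMeasurable
    fun_prop
  · filter_upwards with u
    rw [Real.norm_of_nonneg (pnf_nonneg _)]
    exact pnf_le _

lemma pn_subst {l : ℝ} (hl : 0 < l) (v : ℝ) (G : ℝ → ℝ) :
    ∫ u, G (l * (v - u)) = l⁻¹ * ∫ w, G w := by
  rw [integral_sub_left_eq_self (fun u ↦ G (l * u)), Measure.integral_comp_mul_left,
    abs_of_pos (inv_pos.2 hl), smul_eq_mul]

lemma pnPhi_tendsto {l : ℝ} (hl : 0 < l) :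
    Tendsto (fun v ↦ ∫ w, pnf (v - w / l) * pnK w) atTop (𝓝 (∫ w, pnK w)) := by
  have h1 := (pn_tendsto hl).const_mul l
  have h2 : Tendsto (fun v : ℝ ↦ ∫ w in Iio (l * v), pnK w) atTop (𝓝 (∫ w, pnK w)) :=
    (aecover_Iio (μ := volume) (tendsto_id.const_mul_atTop hl)).integral_tendsto_of_countably_generated
      pnK_int
  have h3 := h1.add h2
  rw [mul_zero, zero_add] at h3
  refine h3.congr fun v ↦ ?_
  have e1 : ∫ u in Ioi (0:ℝ), pnf u * pnK (l * (v - u)) =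
      l⁻¹ * ∫ w, pnf (v - w / l) * pnK w := by
    rw [← pn_subst hl v, ← integral_indicator measurableSet_Ioi]
    congr 1; ext u
    have : v - l * (v - u) / l = u := by field_simp; ring
    simp only [this]
    by_cases hu : u ∈ Ioi (0:ℝ)
    · rw [indicator_of_mem hu]
    · rw [indicator_of_notMem hu]
      have : pnf u = 0 := by
        rcases lt_or_eq_of_le (not_lt.1 (show ¬ (0:ℝ) < u from hu)) with h | h
        · exact pnf_neg h
        · subst h; simp [pnf]
      rw [this, zero_mul]
  have e2 : ∫ u in Ioi (0:ℝ), pnK (l * (v - u)) = l⁻¹ * ∫ w in Iio (l * v), pnK w := by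
    rw [← integral_indicator measurableSet_Iio, ← pn_subst hl v, ← integral_indicator measurableSet_Ioi]
    congr 1; ext u
    by_cases hu : u ∈ Ioi (0:ℝ)
    · have h0 : (0:ℝ) < u := hu
      rw [indicator_of_mem hu, indicator_of_mem]
      simp only [mem_Iio]; nlinarith
    · have h0 : ¬ (0:ℝ) < u := hu
      rw [indicator_of_notMem hu, indicator_of_notMem]
      simp only [mem_Iio]; nlinarith
  have e3 : ∫ u in Ioi (0:ℝ), (pnf u - 1) * pnK (l * (v - u)) =
      (∫ u in Ioi (0:ℝ), pnf u * pnK (l * (v - u))) - ∫ u in Ioi (0:ℝ), pnK (l * (v - u)) := by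
    rw [← integral_sub]
    · congr 1; ext u; ring
    · apply ((pnK_shift_int hl v).bdd_mul (c := Real.log 4 + 4) _ _).integrableOn
      · exact pnf_meas.aestronglyMeasurable
      · filter_upwards with u
        rw [Real.norm_of_nonneg (pnf_nonneg _)]
        exact pnf_le _
    · exact (pnK_shift_int hl v).integrableOn
  rw [e3, e1, e2]
  field_simp
  ring

lemma pnf_tendsto : Tendsto pnf atTop (𝓝 1) := by
  set c := ∫ w, pnK w with hc
  have hc0 : 0 < c := pnK_pos
  set cW : ℝ → ℝ := fun W ↦ ∫ w in Icc (-W) W, pnK w with hcW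
  have hcWt : Tendsto cW atTop (𝓝 c) :=
    (aecover_Icc (μ := volume) tendsto_neg_atTop_atBot tendsto_id).integral_tendsto_of_countably_generated
      pnK_int
  have hlt : ∀ W : ℝ, Tendsto (fun l : ℝ ↦ Real.exp (2 * W / l)) atTop (𝓝 1) := by
    intro W
    have : Tendsto (fun l : ℝ ↦ 2 * W / l) atTop (𝓝 0) := tendsto_const_nhds.div_atTop tendsto_id
    simpa [Function.comp_def] using (Real.continuous_exp.tendsto 0).comp this
  set B := Real.log 4 + 4 with hB
  apply tendsto_order.2 ⟨fun a ha ↦ ?_, fun b hb ↦ ?_⟩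
  · have h1 : Tendsto (fun W ↦ a * c + B * (c - cW W)) atTop (𝓝 (a * c + B * (c - c))) := by
      exact tendsto_const_nhds.add ((tendsto_const_nhds.sub hcWt).const_mul B)
    have h2 : ∀ᶠ W in atTop, a * c + B * (c - cW W) < c := h1.eventually_lt_const (by nlinarith)
    obtain ⟨W, hW, hW0⟩ := (h2.and (eventually_gt_atTop 0)).exists
    have h3 : Tendsto (fun l : ℝ ↦ Real.exp (2 * W / l) * (a * c) + B * (c - cW W)) atTop
        (𝓝 (1 * (a * c) + B * (c - cW W))) := ((hlt W).mul_const _).add_const _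
    have h4 : ∀ᶠ l in atTop, Real.exp (2 * W / l) * (a * c) + B * (c - cW W) < c :=
      h3.eventually_lt_const (by linarith)
    obtain ⟨l, hl, hl0⟩ := (h4.and (eventually_gt_atTop 0)).exists
    have h5 : Tendsto (fun v : ℝ ↦ v - W / l) atTop atTop := tendsto_atTop_add_const_right _ _ tendsto_id
    have h6 := ((pnPhi_tendsto hl0).comp h5).eventually_const_lt hl
    filter_upwards [h6] with v hv
    simp only [Function.comp] at hv
    have key : ∫ w, pnf (v - W / l - w / l) * pnK w ≤
        Real.exp (2 * W / l) * pnf v * c + B * (c - cW W) := by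
      rw [← integral_add_compl (measurableSet_Icc (a := -W) (b := W)) (pnPhi_int _)]
      have hcompl : c - cW W = ∫ w in (Icc (-W) W)ᶜ, pnK w := by
        rw [hc, ← integral_add_compl (measurableSet_Icc (a := -W) (b := W)) pnK_int]; simp [hcW]
      gcongr ?_ + ?_
      · calc _ ≤ ∫ w in Icc (-W) W, Real.exp (2 * W / l) * pnf v * pnK w := by
              apply setIntegral_mono_on (pnPhi_int _).integrableOn
                (pnK_int.const_mul _).integrableOn measurableSet_Icc
              intro w hw
              apply mul_le_mul_of_nonneg_right _ (pnK_nonneg w)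
              have hle : v - W / l - w / l ≤ v := by
                have : 0 ≤ (W + w) / l := div_nonneg (by linarith [hw.1]) hl0.le
                rw [add_div] at this; linarith
              have := pnf_shift hle
              have e : v - (v - W / l - w / l) ≤ 2 * W / l := by
                have : (W + w) / l ≤ (2 * W) / l := by
                  apply div_le_div_of_nonneg_right _ hl0.le; linarith [hw.2]
                rw [add_div] at this; linarith
              have e2 : Real.exp (-(2 * W / l)) ≤ Real.exp (-(v - (v - W / l - w / l))) :=
                Real.exp_le_exp.2 (by linarith)
              have e3 : Real.exp (-(2 * W / l)) * pnf (v - W / l - w / l) ≤ pnf v :=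
                (mul_le_mul_of_nonneg_right e2 (pnf_nonneg _)).trans this
              rw [Real.exp_neg] at e3
              have := Real.exp_pos (2 * W / l)
              rwa [inv_mul_le_iff₀ this] at e3
          _ = Real.exp (2 * W / l) * pnf v * cW W := by rw [integral_const_mul]
          _ ≤ _ := by
              apply mul_le_mul_of_nonneg_left _ (mul_nonneg (Real.exp_pos _).le (pnf_nonneg _))
              exact setIntegral_le_integral pnK_int (Eventually.of_forall pnK_nonneg)
      · rw [hcompl, ← integral_const_mul]
        apply setIntegral_mono_on (pnPhi_int _).integrableOn
                (pnK_int.const_mul _).integrableOn measurableSet_Icc.compl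
        intro w _
        exact mul_le_mul_of_nonneg_right (pnf_le _) (pnK_nonneg w)
    have : Real.exp (2 * W / l) * c * a < Real.exp (2 * W / l) * c * pnf v := by linarith
    exact lt_of_mul_lt_mul_left this (by positivity)
  · have h2 : ∀ᶠ W in atTop, c < b * cW W := (hcWt.const_mul b).eventually_const_lt (by nlinarith)
    obtain ⟨W, hW, hW0⟩ := (h2.and (eventually_gt_atTop 0)).exists
    have hcW0 : 0 < cW W := by
      by_contra h; push Not at h; nlinarith
    have h3 : Tendsto (fun l : ℝ ↦ Real.exp (2 * W / l) * c) atTop (𝓝 (1 * c)) := (hlt W).mul_const _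
    have h4 : ∀ᶠ l in atTop, Real.exp (2 * W / l) * c < b * cW W :=
      h3.eventually_lt_const (by linarith)
    obtain ⟨l, hl, hl0⟩ := (h4.and (eventually_gt_atTop 0)).exists
    have h5 : Tendsto (fun v : ℝ ↦ v + W / l) atTop atTop := tendsto_atTop_add_const_right _ _ tendsto_id
    have h6 := (((pnPhi_tendsto hl0).comp h5).const_mul (Real.exp (2 * W / l))).eventually_lt_const hl
    filter_upwards [h6] with v hv
    simp only [Function.comp] at hv
    have key : Real.exp (-(2 * W / l)) * pnf v * cW W ≤ ∫ w, pnf (v + W / l - w / l) * pnK w := by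
      calc _ = ∫ w in Icc (-W) W, Real.exp (-(2 * W / l)) * pnf v * pnK w := by
            rw [integral_const_mul]
        _ ≤ ∫ w in Icc (-W) W, pnf (v + W / l - w / l) * pnK w := by
            apply setIntegral_mono_on (pnK_int.const_mul _).integrableOn
              (pnPhi_int _).integrableOn measurableSet_Icc
            intro w hw
            apply mul_le_mul_of_nonneg_right _ (pnK_nonneg w)
            have hle : v ≤ v + W / l - w / l := by
              have : 0 ≤ (W - w) / l := div_nonneg (by linarith [hw.2]) hl0.le
              rw [sub_div] at this; linarith
            refine le_trans ?_ (pnf_shift hle)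
            apply mul_le_mul_of_nonneg_right _ (pnf_nonneg _)
            apply Real.exp_le_exp.2
            have : (W - w) / l ≤ (2 * W) / l := by
              apply div_le_div_of_nonneg_right _ hl0.le; linarith [hw.1]
            rw [sub_div] at this; linarith
        _ ≤ _ := setIntegral_le_integral (pnPhi_int _)
            (Eventually.of_forall fun w ↦ mul_nonneg (pnf_nonneg _) (pnK_nonneg _))
    rw [Real.exp_neg, mul_assoc, inv_mul_le_iff₀ (Real.exp_pos _)] at key
    exact lt_of_mul_lt_mul_right (key.trans_lt hv) hcW0.le

/-- The prime number theorem for the Chebyshev theta function. -/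
theorem theta_tendsto : Tendsto (fun x : ℝ ↦ Chebyshev.theta x / x) atTop (𝓝 1) := by
  have h1 : Tendsto (fun x : ℝ ↦ Chebyshev.psi x / x) atTop (𝓝 1) := by
    refine (pnf_tendsto.comp Real.tendsto_log_atTop).congr' ?_
    filter_upwards [eventually_gt_atTop 0] with x hx
    simp only [Function.comp, pnf]
    rw [Real.exp_neg, Real.exp_log hx, div_eq_mul_inv]
  have h2 : Tendsto (fun x : ℝ ↦ (Chebyshev.psi x - Chebyshev.theta x) / x) atTop (𝓝 0) := by
    obtain ⟨C, hC⟩ := Chebyshev.psi_sub_theta_le_mul_sqrt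
    have h3 : Tendsto (fun x : ℝ ↦ C / Real.sqrt x) atTop (𝓝 0) :=
      tendsto_const_nhds.div_atTop Real.tendsto_sqrt_atTop
    refine squeeze_zero' ?_ ?_ h3
    · filter_upwards [eventually_gt_atTop 0] with x hx
      exact div_nonneg (sub_nonneg.2 (Chebyshev.theta_le_psi x)) hx.le
    · filter_upwards [eventually_gt_atTop 0] with x hx
      rw [div_le_div_iff₀ hx (Real.sqrt_pos.2 hx)]
      calc _ ≤ C * √x * √x := mul_le_mul_of_nonneg_right (hC x) (Real.sqrt_nonneg x)
        _ = C * x := by rw [mul_assoc, Real.mul_self_sqrt hx.le]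
  have := h1.sub h2
  rw [sub_zero] at this
  refine this.congr fun x ↦ ?_
  rw [← sub_div]; congr 1; ring
end

section
open Polynomial Filter Topology

/-- `F(d/dξ) g` evaluated at `ξ`, as a linear function of the polynomial `F`. -/
noncomputable def Dop (g : ℂ → ℂ) (ξ : ℂ) : ℂ[X] →ₗ[ℂ] ℂ :=
  Polynomial.lsum fun i => LinearMap.toSpanSingleton ℂ ℂ (iteratedDeriv i g ξ)

lemma Dop_monomial (g : ℂ → ℂ) (ξ : ℂ) (i : ℕ) (a : ℂ) :
    Dop g ξ (C a * X ^ i) = a * iteratedDeriv i g ξ := by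
  rw [C_mul_X_pow_eq_monomial, Dop, Polynomial.lsum_apply]
  simp [Polynomial.sum_monomial_index]

lemma Dop_C (g : ℂ → ℂ) (ξ : ℂ) (a : ℂ) : Dop g ξ (C a) = a * g ξ := by
  simpa using Dop_monomial g ξ 0 a

lemma Dop_C_mul (g : ℂ → ℂ) (ξ : ℂ) (a : ℂ) (F : ℂ[X]) :
    Dop g ξ (C a * F) = a * Dop g ξ F := by
  rw [← smul_eq_C_mul, map_smul, smul_eq_mul]

lemma Dop_congr {g h : ℂ → ℂ} {ξ : ℂ} (e : g =ᶠ[𝓝 ξ] h) (F : ℂ[X]) :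
    Dop g ξ F = Dop h ξ F := by
  induction F using Polynomial.induction_on' with
  | add p q hp hq => rw [map_add, map_add, hp, hq]
  | monomial n a =>
    rw [← C_mul_X_pow_eq_monomial, Dop_monomial, Dop_monomial, e.iteratedDeriv_eq]

section
variable {U : Set ℂ} (hU : IsOpen U) {g : ℂ → ℂ} (hg : DifferentiableOn ℂ g U)
include hU hg

lemma Dop_hasDerivAt {ξ : ℂ} (hξ : ξ ∈ U) (F : ℂ[X]) :
    HasDerivAt (fun ζ => Dop g ζ F) (Dop g ξ (X * F)) ξ := by
  induction F using Polynomial.induction_on' with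
  | add p q hp hq =>
    simp only [map_add, mul_add]
    exact hp.add hq
  | monomial n a =>
    have e : X * monomial n a = C a * X ^ (n + 1) := by
      rw [← C_mul_X_pow_eq_monomial]; ring
    simp_rw [e, ← C_mul_X_pow_eq_monomial, Dop_monomial]
    apply HasDerivAt.const_mul
    rw [iteratedDeriv_succ]
    have h1 : AnalyticAt ℂ g ξ := hg.analyticAt (hU.mem_nhds hξ)
    have h2 : AnalyticAt ℂ (iteratedDeriv n g) ξ := by
      rw [iteratedDeriv_eq_iterate]; exact h1.iterated_deriv n
    exact h2.differentiableAt.hasDerivAt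

lemma Dop_differentiableOn (F : ℂ[X]) : DifferentiableOn ℂ (fun ζ => Dop g ζ F) U :=
  fun _ hξ => (Dop_hasDerivAt hU hg hξ F).differentiableAt.differentiableWithinAt

lemma Dop_unique {Φ : ℂ[X] → ℂ → ℂ} (h0 : ∀ a, ∀ ξ ∈ U, Φ (C a) ξ = a * g ξ)
    (hadd : ∀ p q, ∀ ξ ∈ U, Φ (p + q) ξ = Φ p ξ + Φ q ξ)
    (hX : ∀ p, ∀ ξ ∈ U, HasDerivAt (Φ p) (Φ (X * p) ξ) ξ) (F : ℂ[X]) :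
    ∀ ξ ∈ U, Dop g ξ F = Φ F ξ := by
  induction F using Polynomial.induction_on with
  | C a => intro ξ hξ; rw [Dop_C, h0 a ξ hξ]
  | add p q hp hq => intro ξ hξ; rw [map_add, hp ξ hξ, hq ξ hξ, hadd p q ξ hξ]
  | monomial n a ih =>
    intro ξ hξ
    have e : (C a * X ^ (n + 1) : ℂ[X]) = X * (C a * X ^ n) := by ring
    rw [e]
    have h1 := Dop_hasDerivAt hU hg hξ (C a * X ^ n)
    have h2 := hX (C a * X ^ n) ξ hξ
    apply h1.unique (h2.congr_of_eventuallyEq _)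
    filter_upwards [hU.mem_nhds hξ] with ζ hζ using ih ζ hζ

lemma Dop_mul (F G : ℂ[X]) {ξ : ℂ} (hξ : ξ ∈ U) :
    Dop g ξ (F * G) = Dop (fun ζ => Dop g ζ G) ξ F := by
  symm
  refine Dop_unique hU (Dop_differentiableOn hU hg G) (Φ := fun F ξ => Dop g ξ (F * G))
    ?_ ?_ ?_ F ξ hξ
  · intro a ξ _; rw [Dop_C_mul]
  · intro p q ξ _; rw [add_mul, map_add]
  · intro p ξ hξ; rw [mul_assoc]; exact Dop_hasDerivAt hU hg hξ _

/-- Multiplication by `ξ`. -/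
lemma Dop_id_mul (F : ℂ[X]) {ξ : ℂ} (hξ : ξ ∈ U) :
    Dop (fun ζ => ζ * g ζ) ξ F = ξ * Dop g ξ F + Dop g ξ (derivative F) := by
  refine Dop_unique hU (differentiableOn_id.mul hg)
    (Φ := fun F ξ => ξ * Dop g ξ F + Dop g ξ (derivative F)) ?_ ?_ ?_ F ξ hξ
  · intro a ξ _; simp [Dop_C]; ring
  · intro p q ξ _; simp only [derivative_add, map_add]; ring
  · intro p ξ hξ
    have h1 := ((hasDerivAt_id ξ).mul (Dop_hasDerivAt hU hg hξ p)).add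
      (Dop_hasDerivAt hU hg hξ (derivative p))
    refine h1.congr_deriv ?_
    simp only [derivative_mul, derivative_X, one_mul, map_add, id]
    ring

/-- Multiplication by `exp (c ξ)`. -/
lemma Dop_exp_mul (c : ℂ) (F : ℂ[X]) {ξ : ℂ} (hξ : ξ ∈ U) :
    Dop (fun ζ => Complex.exp (c * ζ) * g ζ) ξ F =
      Complex.exp (c * ξ) * Dop g ξ (F.comp (X + C c)) := by
  have he : ∀ ξ : ℂ, HasDerivAt (fun ζ => Complex.exp (c * ζ)) (c * Complex.exp (c * ξ)) ξ := by
    intro ξ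
    have := ((hasDerivAt_id ξ).const_mul c).cexp
    refine this.congr_deriv ?_
    simp; ring
  refine Dop_unique hU (DifferentiableOn.mul (fun ξ _ =>
    (he ξ).differentiableAt.differentiableWithinAt) hg)
    (Φ := fun F ξ => Complex.exp (c * ξ) * Dop g ξ (F.comp (X + C c))) ?_ ?_ ?_ F ξ hξ
  · intro a ξ _; simp [Dop_C]; ring
  · intro p q ξ _; simp only [add_comp, map_add]; ring
  · intro p ξ hξ
    refine ((he ξ).mul (Dop_hasDerivAt hU hg hξ _)).congr_deriv ?_
    simp only [mul_comp, X_comp, add_mul, map_add, Dop_C_mul]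
    ring
end
end

section
open Polynomial Filter Topology

noncomputable def sh (η : ℂ) : ℂ := 2 * Complex.sinh (η / 2)

lemma sh_norm (η : ℂ) : 4 * Real.sin (‖η‖ / 2) ^ 2 ≤ ‖sh η‖ ^ 2 := by
  set x := η.re / 2 with hx
  set y := η.im / 2 with hy
  have h1 : ‖sh η‖ ^ 2 = 4 * (Real.sinh x ^ 2 + Real.sin y ^ 2) := by
    have e : η / 2 = (x : ℂ) + (y : ℂ) * Complex.I := by
      rw [hx, hy]; push_cast; rw [div_mul_eq_mul_div, ← add_div, Complex.re_add_im]
    rw [sh, norm_mul, mul_pow, Complex.sq_norm (Complex.sinh _), e, Complex.sinh_add,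
      Complex.sinh_mul_I, Complex.cosh_mul_I, ← Complex.ofReal_sinh, ← Complex.ofReal_cosh,
      ← Complex.ofReal_cos, ← Complex.ofReal_sin, ← mul_assoc, ← Complex.ofReal_mul,
      ← Complex.ofReal_mul, Complex.normSq_add_mul_I]
    have := Real.cosh_sq x
    have := Real.sin_sq_add_cos_sq y
    simp
    have hc : Real.cos y ^ 2 = 1 - Real.sin y ^ 2 := by linarith
    rw [mul_pow, mul_pow, Real.cosh_sq x, hc]
    ring
  have h2 : x ^ 2 ≤ Real.sinh x ^ 2 := by
    rw [sq_le_sq]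
    rcases le_total 0 x with h | h
    · rw [abs_of_nonneg h, abs_of_nonneg (Real.sinh_nonneg_iff.2 h)]
      exact Real.self_le_sinh_iff.2 h
    · rw [abs_of_nonpos h, abs_of_nonpos (Real.sinh_nonpos_iff.2 h)]
      linarith [Real.sinh_le_self_iff.2 h]
  set A := ‖η‖ / 2 with hA
  have h3 : A ^ 2 = x ^ 2 + y ^ 2 := by
    rw [hA, div_pow, Complex.sq_norm, Complex.normSq_apply]; rw [hx, hy]; ring
  have h4 : Real.sin A ^ 2 - Real.sin y ^ 2 = Real.sin (A + y) * Real.sin (A - y) := by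
    rw [Real.sin_add, Real.sin_sub]
    have e1 := Real.sin_sq_add_cos_sq y
    have e2 := Real.sin_sq_add_cos_sq A
    linear_combination (-Real.sin A ^2) * e1 + Real.sin y ^ 2 * e2
  have h5 : Real.sin (A + y) * Real.sin (A - y) ≤ (A + y) * (A - y) := by
    calc _ ≤ |Real.sin (A + y) * Real.sin (A - y)| := le_abs_self _
      _ ≤ |A + y| * |A - y| := by
        rw [abs_mul]; exact mul_le_mul Real.abs_sin_le_abs Real.abs_sin_le_abs (abs_nonneg _) (abs_nonneg _)
      _ = |(A + y) * (A - y)| := (abs_mul _ _).symm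
      _ = _ := abs_of_nonneg (by nlinarith [sq_nonneg x])
  rw [h1]
  nlinarith

lemma sh_ne_zero {η : ℂ} (h0 : η ≠ 0) (h1 : ‖η‖ < 2 * Real.pi) : sh η ≠ 0 := by
  intro h
  have := sh_norm η
  have hs : 0 < Real.sin (‖η‖ / 2) :=
    Real.sin_pos_of_pos_of_lt_pi (by have := norm_pos_iff.2 h0; linarith) (by linarith)
  rw [h] at this
  simp at this
  nlinarith

lemma sh_hasDerivAt (η : ℂ) : HasDerivAt sh (Complex.cosh (η / 2)) η := by
  have := ((Complex.hasDerivAt_sinh (η / 2)).comp η ((hasDerivAt_id η).div_const 2)).const_mul 2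
  refine this.congr_deriv ?_
  ring

lemma ch_hasDerivAt (η : ℂ) : HasDerivAt (fun η => Complex.cosh (η / 2)) (sh η / 4) η := by
  have := ((Complex.hasDerivAt_cosh (η / 2)).comp η ((hasDerivAt_id η).div_const 2))
  refine this.congr_deriv ?_
  rw [sh]; ring

lemma ch_sq (η : ℂ) : Complex.cosh (η / 2) ^ 2 = 1 + sh η ^ 2 / 4 := by
  rw [Complex.cosh_sq, sh]; ring

lemma sh_inv_pow_hasDerivAt {η : ℂ} (h : sh η ≠ 0) (m : ℕ) :
    HasDerivAt (fun η => (sh η)⁻¹ ^ m) (-m * Complex.cosh (η / 2) * (sh η)⁻¹ ^ (m + 1)) η := by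
  have := ((sh_hasDerivAt η).inv h).pow m
  refine this.congr_deriv ?_
  rcases m with _ | m
  · simp
  · simp only [Nat.add_sub_cancel, Pi.inv_apply]
    rw [show -Complex.cosh (η / 2) / sh η ^ 2 = -Complex.cosh (η / 2) * (sh η)⁻¹ ^ 2 by
      rw [inv_pow]; rfl]
    ring

/-- The polynomials `X (X²-1) ... (X²-a²)`. -/
noncomputable def Pc : ℕ → ℂ[X]
  | 0 => X
  | (a + 1) => Pc a * (X ^ 2 - C ((a + 1 : ℂ) ^ 2))

/-- The dslope of `sh` at zero. -/
noncomputable def shE : ℂ → ℂ := dslope sh 0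

lemma sh_zero : sh 0 = 0 := by simp [sh]

lemma shE_eq (η : ℂ) : sh η = η * shE η := by
  have := sub_smul_dslope sh 0 η
  rw [sh_zero, sub_zero, sub_zero, smul_eq_mul] at this
  exact this.symm

lemma shE_zero : shE 0 = 1 := by
  rw [shE, dslope_same, (sh_hasDerivAt 0).deriv]; simp

lemma shE_diff : Differentiable ℂ shE := by
  have : Differentiable ℂ sh := fun η => (sh_hasDerivAt η).differentiableAt
  rw [← differentiableOn_univ] at this ⊢
  exact (Complex.differentiableOn_dslope Filter.univ_mem).2 this

lemma shE_ne {η : ℂ} (h1 : ‖η‖ < 2 * Real.pi) : shE η ≠ 0 := by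
  rcases eq_or_ne η 0 with rfl | h
  · rw [shE_zero]; exact one_ne_zero
  · intro h2
    apply sh_ne_zero h h1
    rw [shE_eq, h2, mul_zero]

lemma Dop_Pc {U : Set ℂ} (hU : IsOpen U) {g : ℂ → ℂ} (hg : DifferentiableOn ℂ g U)
    {ξ : ℂ} {ρ : ℝ} (hρ : 0 < ρ) (hρ2 : ρ < 2 * Real.pi) (hb : Metric.closedBall ξ ρ ⊆ U) (a : ℕ) :
    2 * Real.pi * Complex.I * Dop g ξ (Pc a) =
      (2 * a + 1).factorial * ∮ ζ in C(ξ, ρ), g ζ * (sh (ζ - ξ))⁻¹ ^ (2 * a + 2) := by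
  have hsph : ∀ ζ ∈ Metric.sphere ξ ρ, ζ ∈ U := fun ζ hζ => hb (Metric.sphere_subset_closedBall hζ)
  have hshn : ∀ ζ ∈ Metric.sphere ξ ρ, sh (ζ - ξ) ≠ 0 := by
    intro ζ hζ
    have : ‖ζ - ξ‖ = ρ := by rw [← dist_eq_norm]; exact hζ
    apply sh_ne_zero
    · rw [← norm_pos_iff, this]; exact hρ
    · rw [this]; exact hρ2
  have hshc : Continuous (fun ζ : ℂ => sh (ζ - ξ)) := by
    have : Continuous sh := continuous_iff_continuousAt.2 fun η => (sh_hasDerivAt η).continuousAt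
    fun_prop
  have hpw : ∀ m : ℕ, ContinuousOn (fun ζ => (sh (ζ - ξ))⁻¹ ^ m) (Metric.sphere ξ ρ) := by
    intro m
    exact (hshc.continuousOn.inv₀ hshn).pow m
  have hder : ∀ ζ, sh (ζ - ξ) ≠ 0 → ∀ m : ℕ, HasDerivAt (fun ζ => (sh (ζ - ξ))⁻¹ ^ m)
      (-m * Complex.cosh ((ζ - ξ) / 2) * (sh (ζ - ξ))⁻¹ ^ (m + 1)) ζ := by
    intro ζ h m
    have := (sh_inv_pow_hasDerivAt h m).comp ζ ((hasDerivAt_id ζ).sub_const ξ)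
    refine this.congr_deriv (by ring)
  have hderc : ∀ ζ, HasDerivAt (fun ζ => Complex.cosh ((ζ - ξ) / 2)) (sh (ζ - ξ) / 4) ζ := by
    intro ζ
    have := (ch_hasDerivAt (ζ - ξ)).comp ζ ((hasDerivAt_id ζ).sub_const ξ)
    refine this.congr_deriv (by ring)
  induction a generalizing g with
  | zero =>
    set g' := fun ζ => Dop g ζ X with hg'
    have hgd : ∀ ζ ∈ U, HasDerivAt g (g' ζ) ζ := by
      intro ζ hζ
      have := Dop_hasDerivAt hU hg hζ (C 1)
      simp only [Dop_C, one_mul] at this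
      simpa [hg'] using this
    have hg'd : DifferentiableOn ℂ g' U := Dop_differentiableOn hU hg X
    have hprim : ∮ ζ in C(ξ, ρ), (g' ζ * (Complex.cosh ((ζ - ξ) / 2) * (sh (ζ - ξ))⁻¹ ^ 1)
        - g ζ * (sh (ζ - ξ))⁻¹ ^ 2) = 0 := by
      apply circleIntegral.integral_eq_zero_of_hasDerivWithinAt'
        (f := fun ζ => g ζ * (Complex.cosh ((ζ - ξ) / 2) * (sh (ζ - ξ))⁻¹ ^ 1))
      rw [abs_of_pos hρ]
      intro ζ hζ
      apply HasDerivAt.hasDerivWithinAt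
      refine ((hgd ζ (hsph ζ hζ)).mul ((hderc ζ).mul (hder ζ (hshn ζ hζ) 1))).congr_deriv ?_
      have h2 := ch_sq (ζ - ξ)
      have hne := hshn ζ hζ
      have : sh (ζ - ξ) / 4 * (sh (ζ - ξ))⁻¹ ^ 1 + Complex.cosh ((ζ - ξ) / 2) *
          (-(1:ℕ) * Complex.cosh ((ζ - ξ) / 2) * (sh (ζ - ξ))⁻¹ ^ (1 + 1)) = - (sh (ζ - ξ))⁻¹ ^ 2 := by
        have e : Complex.cosh ((ζ - ξ) / 2) * (-(1:ℕ) * Complex.cosh ((ζ - ξ) / 2) *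
          (sh (ζ - ξ))⁻¹ ^ (1 + 1)) = - (Complex.cosh ((ζ - ξ) / 2) ^ 2) * (sh (ζ - ξ))⁻¹ ^ 2 := by
          push_cast; ring
        rw [e, h2]; field_simp; ring
      simp only [Pi.mul_apply]
      rw [this]
      ring
    rw [circleIntegral.integral_sub] at hprim
    · have hc := DifferentiableOn.circleIntegral_sub_inv_smul (R := ρ) (c := ξ) (w := ξ)
        (f := fun ζ => g' ζ * Complex.cosh ((ζ - ξ) / 2) / shE (ζ - ξ)) ?_ (Metric.mem_ball_self hρ)
      · have e : ∮ ζ in C(ξ, ρ), g' ζ * (Complex.cosh ((ζ - ξ) / 2) * (sh (ζ - ξ))⁻¹ ^ 1) =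
            2 * Real.pi * Complex.I * g' ξ := by
          simp only [sub_self, zero_div, Complex.cosh_zero, shE_zero, mul_one, div_one,
            smul_eq_mul] at hc
          rw [← hc]
          apply circleIntegral.integral_congr hρ.le
          intro ζ hζ
          simp only [shE_eq, mul_inv, pow_one]
          ring
        rw [e] at hprim
        simp only [Pc]
        rw [sub_eq_zero.1 hprim]
        simp
      · apply DifferentiableOn.div
        · apply (hg'd.mono hb).mul
          exact fun ζ _ => (hderc ζ).differentiableAt.differentiableWithinAt
        · exact (shE_diff.comp (differentiable_id.sub_const ξ)).differentiableOn
        · intro ζ hζ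
          apply shE_ne
          rw [← dist_eq_norm]
          exact lt_of_le_of_lt hζ hρ2
    · apply ContinuousOn.circleIntegrable hρ.le
      apply (hg'd.continuousOn.mono hsph).mul
      exact ContinuousOn.mul (fun ζ _ => (hderc ζ).continuousAt.continuousWithinAt) (hpw 1)
    · apply ContinuousOn.circleIntegrable hρ.le
      exact (hg.continuousOn.mono hsph).mul (hpw 2)
  | succ a ih =>
    set G := fun ζ => Dop g ζ (X ^ 2 - C ((a + 1 : ℂ) ^ 2)) with hG
    set g' := fun ζ => Dop g ζ X with hg'
    set g'' := fun ζ => Dop g ζ (X * X) with hg''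
    have hgd : ∀ ζ ∈ U, HasDerivAt g (g' ζ) ζ := by
      intro ζ hζ
      have := Dop_hasDerivAt hU hg hζ (C 1)
      simp only [Dop_C, one_mul] at this
      simpa [hg'] using this
    have hg'd : ∀ ζ ∈ U, HasDerivAt g' (g'' ζ) ζ := fun ζ hζ => Dop_hasDerivAt hU hg hζ X
    have hGe : ∀ ζ, G ζ = g'' ζ - (a + 1 : ℂ) ^ 2 * g ζ := by
      intro ζ
      simp only [hG, hg'', map_sub, Dop_C, sq X]
    have hGd := Dop_differentiableOn hU hg (X ^ 2 - C ((a + 1 : ℂ) ^ 2))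
    have h1 : Dop g ξ (Pc (a + 1)) = Dop G ξ (Pc a) :=
      Dop_mul hU hg _ _ (hb (Metric.mem_closedBall_self hρ.le))
    rw [h1, ih hGd]
    have hprim : ∮ ζ in C(ξ, ρ), (G ζ * (sh (ζ - ξ))⁻¹ ^ (2 * a + 2) -
        (2 * a + 2) * (2 * a + 3) * (g ζ * (sh (ζ - ξ))⁻¹ ^ (2 * (a + 1) + 2))) = 0 := by
      apply circleIntegral.integral_eq_zero_of_hasDerivWithinAt'
        (f := fun ζ => g' ζ * (sh (ζ - ξ))⁻¹ ^ (2 * a + 2) + (2 * a + 2) *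
          (g ζ * (Complex.cosh ((ζ - ξ) / 2) * (sh (ζ - ξ))⁻¹ ^ (2 * a + 3))))
      rw [abs_of_pos hρ]
      intro ζ hζ
      apply HasDerivAt.hasDerivWithinAt
      have hne := hshn ζ hζ
      refine (((hg'd ζ (hsph ζ hζ)).mul (hder ζ hne (2 * a + 2))).add
        (((hgd ζ (hsph ζ hζ)).mul ((hderc ζ).mul (hder ζ hne (2 * a + 3)))).const_mul _)).congr_deriv ?_
      rw [hGe]
      have h2 := ch_sq (ζ - ξ)
      set s := sh (ζ - ξ)
      set c := Complex.cosh ((ζ - ξ) / 2)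
      have e1 : s / 4 * s⁻¹ ^ (2 * a + 3) = s⁻¹ ^ (2 * a + 2) / 4 := by
        rw [show 2 * a + 3 = (2 * a + 2) + 1 by ring, pow_succ]; field_simp
      have e2 : c * (-((2 * a + 3 : ℕ) : ℂ) * c * s⁻¹ ^ (2 * a + 3 + 1)) =
          -(2 * a + 3) * (s⁻¹ ^ (2 * (a + 1) + 2) + s⁻¹ ^ (2 * a + 2) / 4) := by
        have e3 : c * (-((2 * a + 3 : ℕ) : ℂ) * c * s⁻¹ ^ (2 * a + 3 + 1)) =
          -(2 * a + 3) * (c ^ 2 * s⁻¹ ^ (2 * a + 2 + 2)) := by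
          push_cast; ring
        rw [e3, h2, show 2 * (a + 1) + 2 = 2 * a + 2 + 2 by ring, pow_add s⁻¹ (2 * a + 2) 2]
        field_simp
      simp only [Pi.mul_apply]
      rw [e1, e2]
      push_cast
      ring
    rw [circleIntegral.integral_sub, circleIntegral.integral_const_mul] at hprim
    · rw [sub_eq_zero.1 hprim]
      have : (2 * (a + 1) + 1).factorial = (2 * a + 3) * ((2 * a + 2) * (2 * a + 1).factorial) := by
        rw [show 2 * (a + 1) + 1 = (2 * a + 1) + 1 + 1 by ring, Nat.factorial_succ, Nat.factorial_succ]
      rw [this]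
      push_cast
      ring
    · apply ContinuousOn.circleIntegrable hρ.le
      exact (hGd.continuousOn.mono hsph).mul (hpw _)
    · apply ContinuousOn.circleIntegrable hρ.le
      exact continuousOn_const.mul ((hg.continuousOn.mono hsph).mul (hpw _))

lemma Dop_Pc_bound {U : Set ℂ} (hU : IsOpen U) {g : ℂ → ℂ} (hg : DifferentiableOn ℂ g U)
    {ξ : ℂ} {ρ B M : ℝ} (hρ : 0 < ρ) (hρ2 : ρ < 2 * Real.pi) (hb : Metric.closedBall ξ ρ ⊆ U)
    (hM : 1 ≤ M * (4 * Real.sin (ρ / 2) ^ 2)) (hM0 : 0 ≤ M)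
    (hB : ∀ ζ ∈ Metric.closedBall ξ ρ, ‖g ζ‖ ≤ B) (a : ℕ) :
    ‖Dop g ξ (Pc a)‖ ≤ (2 * a + 1).factorial * (ρ * (B * M ^ (a + 1))) := by
  have h := Dop_Pc hU hg hρ hρ2 hb a
  have hB0 : 0 ≤ B := (norm_nonneg _).trans (hB ξ (Metric.mem_closedBall_self hρ.le))
  have h2 : ‖∮ ζ in C(ξ, ρ), g ζ * (sh (ζ - ξ))⁻¹ ^ (2 * a + 2)‖ ≤
      2 * Real.pi * ρ * (B * M ^ (a + 1)) := by
    apply circleIntegral.norm_integral_le_of_norm_le_const hρ.le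
    intro ζ hζ
    rw [norm_mul, norm_pow, show 2 * a + 2 = 2 * (a + 1) by ring, pow_mul, norm_inv, inv_pow]
    have e : ‖ζ - ξ‖ = ρ := by rw [← dist_eq_norm]; exact hζ
    have h3 := sh_norm (ζ - ξ)
    rw [e] at h3
    have h5 : 0 < ‖sh (ζ - ξ)‖ ^ 2 := by
      rcases (sq_nonneg (‖sh (ζ - ξ)‖)).eq_or_lt with h | h
      · exfalso
        rw [← h] at h3
        nlinarith
      · exact h
    have h4 : (‖sh (ζ - ξ)‖ ^ 2)⁻¹ ≤ M := by
      rw [inv_le_iff_one_le_mul₀ h5]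
      nlinarith
    gcongr
    exact hB ζ (Metric.sphere_subset_closedBall hζ)
  have h3 : 2 * Real.pi * ‖Dop g ξ (Pc a)‖ =
      (2 * a + 1).factorial * ‖∮ ζ in C(ξ, ρ), g ζ * (sh (ζ - ξ))⁻¹ ^ (2 * a + 2)‖ := by
    have := congrArg norm h
    rw [norm_mul, norm_mul, norm_mul, norm_mul, Complex.norm_I, Complex.norm_real,
      Real.norm_of_nonneg Real.pi_pos.le, Complex.norm_natCast] at this
    simpa using this
  have hpi := Real.pi_pos
  have : 2 * Real.pi * ‖Dop g ξ (Pc a)‖ ≤ 2 * Real.pi *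
      ((2 * a + 1).factorial * (ρ * (B * M ^ (a + 1)))) := by
    rw [h3]
    calc _ ≤ ((2 * a + 1).factorial : ℝ) * (2 * Real.pi * ρ * (B * M ^ (a + 1))) := by gcongr
      _ = _ := by ring
  exact le_of_mul_le_mul_left this (by positivity)
end

section
open Polynomial Filter Topology

lemma Dop_Pc_ball {U : Set ℂ} (hU : IsOpen U) {g : ℂ → ℂ} (hg : DifferentiableOn ℂ g U)
    {ξ₀ : ℂ} {r ρ B M : ℝ} (hρ : 0 < ρ) (hρ2 : ρ < 2 * Real.pi)
    (hb : Metric.closedBall ξ₀ (r + ρ) ⊆ U)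
    (hM : 1 ≤ M * (4 * Real.sin (ρ / 2) ^ 2)) (hM0 : 0 ≤ M)
    (hB : ∀ ζ ∈ Metric.closedBall ξ₀ (r + ρ), ‖g ζ‖ ≤ B) (a : ℕ) :
    ∀ ξ ∈ Metric.closedBall ξ₀ r,
      ‖Dop g ξ (Pc a)‖ ≤ (2 * a + 1).factorial * (ρ * (B * M ^ (a + 1))) := by
  intro ξ hξ
  have hs : Metric.closedBall ξ ρ ⊆ Metric.closedBall ξ₀ (r + ρ) := by
    apply Metric.closedBall_subset_closedBall'
    have : dist ξ ξ₀ ≤ r := hξ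
    linarith
  exact Dop_Pc_bound hU hg hρ hρ2 (hs.trans hb) hM hM0 (fun ζ hζ => hB ζ (hs hζ)) a

/-- the product of the four polynomials -/
noncomputable def Wn (n : ℕ) : ℂ[X] :=
  Pc (2 * n) * (Pc (3 * n) * (Pc (4 * n) * Pc (5 * n)))

/-- normalising factor -/
def Fn (n : ℕ) : ℕ :=
  (2 * (2 * n)).factorial * ((2 * (3 * n)).factorial *
    ((2 * (4 * n)).factorial * (2 * (5 * n)).factorial))

noncomputable def Rn (n : ℕ) : ℂ[X] := C ((Fn n : ℂ)⁻¹) * Wn n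

lemma Fn_pos (n : ℕ) : 0 < Fn n := by unfold Fn; positivity

lemma Dop_Rn_bound {U : Set ℂ} (hU : IsOpen U) {g : ℂ → ℂ} (hg : DifferentiableOn ℂ g U)
    {ξ₀ : ℂ} {ρ₂ ρ₃ ρ₄ ρ₅ M₂ M₃ M₄ M₅ : ℝ}
    (h2 : 0 < ρ₂) (h3 : 0 < ρ₃) (h4 : 0 < ρ₄) (h5 : 0 < ρ₅)
    (k2 : ρ₂ < 6) (k3 : ρ₃ < 6) (k4 : ρ₄ < 6) (k5 : ρ₅ < 6)
    (hb : Metric.closedBall ξ₀ (ρ₂ + ρ₃ + ρ₄ + ρ₅) ⊆ U)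
    (m2 : 1 ≤ M₂ * (4 * Real.sin (ρ₂ / 2) ^ 2)) (n2 : 0 < M₂)
    (m3 : 1 ≤ M₃ * (4 * Real.sin (ρ₃ / 2) ^ 2)) (n3 : 0 < M₃)
    (m4 : 1 ≤ M₄ * (4 * Real.sin (ρ₄ / 2) ^ 2)) (n4 : 0 < M₄)
    (m5 : 1 ≤ M₅ * (4 * Real.sin (ρ₅ / 2) ^ 2)) (n5 : 0 < M₅) :
    ∃ C : ℝ, 0 < C ∧ ∀ n : ℕ, ‖Dop g ξ₀ (Rn n)‖ ≤
      C * ((n + 1 : ℝ) ^ 4 * (M₂ ^ 2 * M₃ ^ 3 * M₄ ^ 4 * M₅ ^ 5) ^ n) := by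
  obtain ⟨B, hB⟩ := (isCompact_closedBall ξ₀ (ρ₂ + ρ₃ + ρ₄ + ρ₅)).exists_bound_of_continuousOn
    (hg.continuousOn.mono hb)
  have hpi := Real.pi_gt_three
  have hB0 : 0 ≤ B := (norm_nonneg _).trans (hB ξ₀ (Metric.mem_closedBall_self (by positivity)))
  refine ⟨(5 * 7 * 9 * 11) * (ρ₂ * ρ₃ * ρ₄ * ρ₅) * (M₂ * M₃ * M₄ * M₅) * (B + 1), by positivity, ?_⟩
  intro n
  have b5 := Dop_Pc_ball hU hg h5 (by linarith) hb m5 n5.le hB (5 * n)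
  have g5 := Dop_differentiableOn hU hg (Pc (5 * n))
  have s4 : Metric.closedBall ξ₀ (ρ₂ + ρ₃ + ρ₄) ⊆ Metric.closedBall ξ₀ (ρ₂ + ρ₃ + ρ₄ + ρ₅) :=
    Metric.closedBall_subset_closedBall (by linarith)
  have b4 := Dop_Pc_ball hU g5 h4 (by linarith) (s4.trans hb) m4 n4.le b5 (4 * n)
  have g4 := Dop_differentiableOn hU g5 (Pc (4 * n))
  have s3 : Metric.closedBall ξ₀ (ρ₂ + ρ₃) ⊆ Metric.closedBall ξ₀ (ρ₂ + ρ₃ + ρ₄ + ρ₅) :=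
    Metric.closedBall_subset_closedBall (by linarith)
  have b3 := Dop_Pc_ball hU g4 h3 (by linarith) (s3.trans hb) m3 n3.le b4 (3 * n)
  have g3 := Dop_differentiableOn hU g4 (Pc (3 * n))
  have s2 : Metric.closedBall ξ₀ (ρ₂) ⊆ Metric.closedBall ξ₀ (ρ₂ + ρ₃ + ρ₄ + ρ₅) :=
    Metric.closedBall_subset_closedBall (by linarith)
  have b2 := Dop_Pc_bound hU g3 h2 (by linarith) (s2.trans hb) m2 n2.le b3 (2 * n)
  have hmem : ξ₀ ∈ U := hb (Metric.mem_closedBall_self (by positivity))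
  have e : Dop g ξ₀ (Wn n) = Dop (fun ζ => Dop (fun ζ => Dop (fun ζ => Dop g ζ (Pc (5 * n))) ζ
      (Pc (4 * n))) ζ (Pc (3 * n))) ξ₀ (Pc (2 * n)) := by
    rw [Wn, Dop_mul hU hg _ _ hmem]
    have i1 : ∀ ζ ∈ U, Dop g ζ (Pc (3 * n) * (Pc (4 * n) * Pc (5 * n))) =
        Dop (fun ζ => Dop (fun ζ => Dop g ζ (Pc (5 * n))) ζ
      (Pc (4 * n))) ζ (Pc (3 * n)) := by
      intro ζ hζ
      rw [Dop_mul hU hg _ _ hζ]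
      apply Dop_congr
      filter_upwards [hU.mem_nhds hζ] with w hw
      exact Dop_mul hU hg _ _ hw
    apply Dop_congr
    filter_upwards [hU.mem_nhds hmem] with w hw
    exact i1 w hw
  rw [← e] at b2
  rw [Rn, Dop_C_mul, norm_mul, norm_inv, Complex.norm_natCast]
  have hF : (0:ℝ) < Fn n := by exact_mod_cast Fn_pos n
  rw [inv_mul_le_iff₀ hF]
  refine b2.trans ?_
  simp only [Nat.factorial_succ]
  have l2 : ((2 * (2 * n) + 1 : ℕ) : ℝ) ≤ 5 * (n + 1) := by push_cast; linarith
  have l3 : ((2 * (3 * n) + 1 : ℕ) : ℝ) ≤ 7 * (n + 1) := by push_cast; linarith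
  have l4 : ((2 * (4 * n) + 1 : ℕ) : ℝ) ≤ 9 * (n + 1) := by push_cast; linarith
  have l5 : ((2 * (5 * n) + 1 : ℕ) : ℝ) ≤ 11 * (n + 1) := by push_cast; linarith
  have lB : B ≤ B + 1 := by linarith
  rw [Fn]
  push_cast at l2 l3 l4 l5 ⊢
  calc _ = ((2 * (2 * n) + 1 : ℝ) * (2 * (3 * n) + 1) * (2 * (4 * n) + 1) * (2 * (5 * n) + 1)) * B *
        (((2 * (2 * n)).factorial * ((2 * (3 * n)).factorial *
          ((2 * (4 * n)).factorial * (2 * (5 * n)).factorial))) * (ρ₂ * ρ₃ * ρ₄ * ρ₅) *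
          (M₂ * M₃ * M₄ * M₅) * (M₂ ^ 2 * M₃ ^ 3 * M₄ ^ 4 * M₅ ^ 5) ^ n) := by
        rw [pow_succ M₂, pow_succ M₃, pow_succ M₄, pow_succ M₅, mul_pow, mul_pow, mul_pow,
          ← pow_mul, ← pow_mul, ← pow_mul, ← pow_mul]
        ring
    _ ≤ ((5 * (n + 1)) * (7 * (n + 1)) * (9 * (n + 1)) * (11 * (n + 1))) * (B + 1) *
        (((2 * (2 * n)).factorial * ((2 * (3 * n)).factorial *
          ((2 * (4 * n)).factorial * (2 * (5 * n)).factorial))) * (ρ₂ * ρ₃ * ρ₄ * ρ₅) *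
          (M₂ * M₃ * M₄ * M₅) * (M₂ ^ 2 * M₃ ^ 3 * M₄ ^ 4 * M₅ ^ 5) ^ n) := by
        gcongr
    _ = _ := by ring

lemma poly_geom {Θ s C : ℝ} (hΘ : 0 ≤ Θ) (h : Θ < Real.exp s) :
    ∃ K : ℝ, 0 < K ∧ ∀ n : ℕ, C * ((n + 1 : ℝ) ^ 4 * Θ ^ n) ≤ K * Real.exp (s * n) := by
  have h1 : Θ / Real.exp s < 1 := (div_lt_one (Real.exp_pos s)).2 h
  have h0 : 0 ≤ Θ / Real.exp s := by positivity
  have ht : Tendsto (fun n : ℕ => C * ((n + 1 : ℝ) ^ 4 * (Θ / Real.exp s) ^ n)) atTop (𝓝 (C * 0)) := by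
    apply Tendsto.const_mul
    have := (fun k => tendsto_pow_const_mul_const_pow_of_lt_one k h0 h1)
    have h4 := ((((this 4).add ((this 3).const_mul 4)).add ((this 2).const_mul 6)).add
      ((this 1).const_mul 4)).add (this 0)
    simp only [mul_zero, add_zero] at h4
    refine h4.congr ?_
    intro n
    ring
  obtain ⟨K, hK⟩ := ht.bddAbove_range
  refine ⟨|K| + 1, by positivity, fun n => ?_⟩
  have := hK ⟨n, rfl⟩
  simp only [div_pow] at this
  rw [mul_comm s, Real.exp_nat_mul]
  have hp : 0 < Real.exp s ^ n := by positivity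
  have e : C * ((n + 1 : ℝ) ^ 4 * Θ ^ n) = C * ((n + 1 : ℝ) ^ 4 * (Θ ^ n / Real.exp s ^ n)) *
    Real.exp s ^ n := by field_simp
  rw [e]
  gcongr
  have := le_abs_self K
  linarith

lemma four_sin_sq (ρ : ℝ) : 4 * Real.sin (ρ / 2) ^ 2 = 2 - 2 * Real.cos ρ := by
  have := Real.cos_sq (ρ / 2)
  have h2 := Real.sin_sq_add_cos_sq (ρ / 2)
  rw [show 2 * (ρ / 2) = ρ by ring] at this
  linarith

lemma cos_up {x : ℝ} (h : |x| ≤ 1) : Real.cos x ≤ 1 - x ^ 2 / 2 + x ^ 4 * (5 / 96) := by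
  have := (abs_le.1 (Real.cos_bound h)).2
  rw [show |x| ^ 4 = x ^ 4 by rw [← abs_pow, abs_of_nonneg (by positivity)]] at this
  linarith

lemma cos_dbl {x c d : ℝ} (h0 : 0 ≤ x) (h1 : x ≤ 1.5) (h : Real.cos x ≤ c) (hd : 2 * c ^ 2 - 1 ≤ d) :
    Real.cos (2 * x) ≤ d := by
  have hp := Real.pi_gt_d2
  have : 0 ≤ Real.cos x := Real.cos_nonneg_of_neg_pi_div_two_le_of_le (by linarith) (by linarith)
  rw [Real.cos_two_mul]
  nlinarith

lemma sin_small {ρ M : ℝ} (h0 : 0 ≤ ρ) (h1 : ρ ≤ 1) (hM : 0 ≤ M)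
    (h : 1 ≤ M * (ρ ^ 2 - ρ ^ 4 * (5 / 48))) : 1 ≤ M * (4 * Real.sin (ρ / 2) ^ 2) := by
  rw [four_sin_sq]
  have := cos_up (abs_le.2 ⟨by linarith, h1⟩)
  exact h.trans (mul_le_mul_of_nonneg_left (by linarith) hM)

lemma sin_big {ρ M : ℝ} (c1 c2 c3 c4 c5 : ℝ) (h0 : 0 ≤ ρ) (h1 : ρ ≤ 2) (hM : 0 ≤ M)
    (hc1 : 1 - (ρ / 16) ^ 2 / 2 + (ρ / 16) ^ 4 * (5 / 96) ≤ c1)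
    (hc2 : 2 * c1 ^ 2 - 1 ≤ c2) (hc3 : 2 * c2 ^ 2 - 1 ≤ c3) (hc4 : 2 * c3 ^ 2 - 1 ≤ c4)
    (hc5 : 2 * c4 ^ 2 - 1 ≤ c5) (h : 1 ≤ M * (2 - 2 * c5)) :
    1 ≤ M * (4 * Real.sin (ρ / 2) ^ 2) := by
  rw [four_sin_sq]
  have g1 := (cos_up (x := ρ / 16) (abs_le.2 ⟨by linarith, by linarith⟩)).trans hc1
  have g2 := cos_dbl (by linarith) (by linarith) g1 hc2
  have g3 := cos_dbl (by linarith) (by linarith) g2 hc3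
  have g4 := cos_dbl (by linarith) (by linarith) g3 hc4
  have g5 := cos_dbl (by linarith) (by linarith) g4 hc5
  rw [show 2 * (2 * (2 * (2 * (ρ / 16)))) = ρ by ring] at g5
  refine h.trans ?_
  gcongr
end

section
open Polynomial Filter Topology

noncomputable def Lr : ℝ := Real.log ((Real.sqrt 13 - 1) / (Real.sqrt 13 + 1))

lemma s13_sq : Real.sqrt 13 * Real.sqrt 13 = 13 := Real.mul_self_sqrt (by norm_num)
lemma s13_lo : 3.6055 < Real.sqrt 13 := Real.lt_sqrt_of_sq_lt (by norm_num)
lemma s13_hi : Real.sqrt 13 < 3.6056 := (Real.sqrt_lt' (by norm_num)).2 (by norm_num)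

lemma exp_Lr : Real.exp Lr = (7 - Real.sqrt 13) / 6 := by
  have := s13_lo
  have := s13_sq
  rw [Lr, Real.exp_log (div_pos (by linarith) (by linarith)), div_eq_div_iff (by linarith) (by norm_num)]
  linarith

lemma Lr_lt : Lr < -0.5695 := by
  have h : Real.exp Lr < Real.exp (-0.5695) := by
    rw [exp_Lr]
    have h1 : Real.exp 0.5695 ≤ 1.7675 := by
      have := Real.exp_bound' (x := 0.5695) (by norm_num) (by norm_num) (n := 8) (by norm_num)
      refine this.trans ?_
      simp only [Finset.sum_range_succ, Finset.sum_range_zero, Nat.factorial]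
      norm_num
    rw [Real.exp_neg]
    have h2 : (1.7675 : ℝ)⁻¹ ≤ (Real.exp 0.5695)⁻¹ := by
      apply inv_anti₀ (Real.exp_pos _) h1
    refine lt_of_lt_of_le ?_ h2
    have := s13_lo
    norm_num
    norm_num at this
    linarith
  exact Real.exp_lt_exp.1 h

noncomputable def ht (ξ : ℂ) : ℂ := (1 / 2) * (1 + Complex.exp ξ) / (1 - Complex.exp ξ)

def U0 : Set ℂ := {ξ | ξ.re < 0}
lemma U0_open : IsOpen U0 := isOpen_lt Complex.continuous_re continuous_const

lemma U0_ne {ξ : ℂ} (h : ξ ∈ U0) : 1 - Complex.exp ξ ≠ 0 := by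
  intro h1
  have : ‖Complex.exp ξ‖ = 1 := by rw [← sub_eq_zero.1 h1]; simp
  rw [Complex.norm_exp, Real.exp_eq_one_iff] at this
  have h2 : ξ.re < 0 := h
  linarith

lemma ht_diff : DifferentiableOn ℂ ht U0 := by
  apply DifferentiableOn.div
  · exact (by fun_prop : Differentiable ℂ _).differentiableOn
  · exact (by fun_prop : Differentiable ℂ _).differentiableOn
  · intro ξ h; exact U0_ne h

lemma U0_ball : Metric.closedBall (Lr : ℂ) (0.0815 + 0.1221 + 0.1627 + 0.2032) ⊆ U0 := by
  intro ξ h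
  have h1 : ‖ξ - Lr‖ ≤ 0.0815 + 0.1221 + 0.1627 + 0.2032 := by rw [← dist_eq_norm]; exact h
  have h2 := (Complex.abs_re_le_norm (ξ - Lr)).trans h1
  have h3 := (abs_le.1 h2).2
  simp only [Complex.sub_re, Complex.ofReal_re] at h3
  have := Lr_lt
  show ξ.re < 0
  norm_num at h3 this
  linarith

lemma Q_bound : ∃ K : ℝ, 0 < K ∧ ∀ n : ℕ, ‖Dop ht Lr (Rn n)‖ ≤ K * Real.exp (53.2 * n) := by
  obtain ⟨C, hC, h⟩ := Dop_Rn_bound (M₂ := 150.656) (M₃ := 67.181) (M₄ := 37.882) (M₅ := 24.324)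
    U0_open ht_diff (by norm_num) (by norm_num)
    (by norm_num) (by norm_num) (by norm_num) (by norm_num) (by norm_num) (by norm_num) U0_ball
    (sin_small (by norm_num) (by norm_num) (by norm_num) (by norm_num)) (by norm_num)
    (sin_small (by norm_num) (by norm_num) (by norm_num) (by norm_num)) (by norm_num)
    (sin_small (by norm_num) (by norm_num) (by norm_num) (by norm_num)) (by norm_num)
    (sin_small (by norm_num) (by norm_num) (by norm_num) (by norm_num)) (by norm_num)
  have hb : (150.656 ^ 2 * 67.181 ^ 3 * 37.882 ^ 4 * 24.324 ^ 5 : ℝ) < Real.exp 53.2 := by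
    have h1 : (1.4918 : ℝ) ≤ Real.exp 0.4 := by
      have := Real.sum_le_exp_of_nonneg (x := 0.4) (by norm_num) 7
      refine le_trans ?_ this
      simp only [Finset.sum_range_succ, Finset.sum_range_zero, Nat.factorial]
      norm_num
    rw [show (53.2 : ℝ) = (133 : ℕ) * 0.4 by norm_num, Real.exp_nat_mul]
    refine lt_of_lt_of_le ?_ (pow_le_pow_left₀ (by norm_num) h1 133)
    norm_num
  obtain ⟨K, hK, h2⟩ := poly_geom (C := C) (by positivity) hb
  exact ⟨K, hK, fun n => (h n).trans (h2 n)⟩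

noncomputable def eE : ℂ → ℂ := dslope Complex.exp 0

lemma eE_eq (ξ : ℂ) : Complex.exp ξ - 1 = ξ * eE ξ := by
  have := sub_smul_dslope Complex.exp 0 ξ
  rw [Complex.exp_zero, sub_zero, smul_eq_mul] at this
  exact this.symm

lemma eE_diff : Differentiable ℂ eE := by
  have : Differentiable ℂ Complex.exp := Complex.differentiable_exp
  rw [← differentiableOn_univ] at this ⊢
  exact (Complex.differentiableOn_dslope Filter.univ_mem).2 this

def U1 : Set ℂ := {ξ | eE ξ ≠ 0}
lemma U1_open : IsOpen U1 := isOpen_ne_fun eE_diff.continuous continuous_const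

noncomputable def g1 (ξ : ℂ) : ℂ := (-(1 / 2)) * (1 + Complex.exp ξ) / eE ξ
noncomputable def g2 (ξ : ℂ) : ℂ := ξ * g1 ξ

lemma g1_diff : DifferentiableOn ℂ g1 U1 := by
  apply DifferentiableOn.div
  · exact (by fun_prop : Differentiable ℂ _).differentiableOn
  · exact eE_diff.differentiableOn
  · intro ξ h; exact h

lemma g2_diff : DifferentiableOn ℂ g2 U1 := differentiableOn_id.mul g1_diff

lemma g1_eq {ξ : ℂ} (h : ξ ∈ U0) : g1 ξ = ξ * ht ξ := by
  have h1 := U0_ne h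
  have h0 : ξ ≠ 0 := by rintro rfl; exact lt_irrefl (0:ℝ) h
  have h2 := eE_eq ξ
  have h3 : 1 - Complex.exp ξ = -(ξ * eE ξ) := by rw [← h2]; ring
  have h4 : eE ξ ≠ 0 := by intro h5; rw [h5] at h3; exact h1 (by rw [h3]; ring)
  rw [g1, ht, h3]
  field_simp

lemma U1_ball : Metric.closedBall (Lr : ℂ) (1.091 + 1.477 + 1.763 + 1.976) ⊆ U1 := by
  intro ξ h h0
  have h1 : ‖ξ - Lr‖ ≤ 1.091 + 1.477 + 1.763 + 1.976 := by rw [← dist_eq_norm]; exact h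
  have h2 := eE_eq ξ
  rw [h0, mul_zero] at h2
  obtain ⟨k, hk⟩ := Complex.exp_eq_one_iff.1 (sub_eq_zero.1 h2)
  have hk0 : k ≠ 0 := by
    rintro rfl
    simp at hk
    rw [hk, eE, dslope_same, Complex.deriv_exp, Complex.exp_zero] at h0
    exact one_ne_zero h0
  have hn : ‖ξ - Lr‖ ^ 2 = Lr ^ 2 + (k * (2 * Real.pi)) ^ 2 := by
    rw [Complex.sq_norm, Complex.normSq_apply, hk]
    simp
    ring
  have hk1 : (1 : ℝ) ≤ (k : ℝ) ^ 2 := by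
    have : 0 < k ^ 2 := by positivity
    exact_mod_cast this
  have hp := Real.pi_gt_d4
  have hL := Lr_lt
  have h3 : ‖ξ - Lr‖ ^ 2 ≤ (1.091 + 1.477 + 1.763 + 1.976) ^ 2 := by gcongr
  have h4 : (0.5695:ℝ) ^ 2 ≤ Lr ^ 2 := by nlinarith
  have h5 : (3.1415:ℝ) ^ 2 ≤ Real.pi ^ 2 := by gcongr
  have h6 : Real.pi ^ 2 ≤ k ^ 2 * Real.pi ^ 2 := by nlinarith [sq_nonneg Real.pi]
  norm_num at h3 h4 h5
  nlinarith

lemma E_bound {g : ℂ → ℂ} (hg : DifferentiableOn ℂ g U1) :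
    ∃ K : ℝ, 0 < K ∧ ∀ n : ℕ, ‖Dop g Lr (Rn n)‖ ≤ K * Real.exp ((-10.5) * n) := by
  obtain ⟨C, hC, h⟩ := Dop_Rn_bound (M₂ := 0.92876) (M₃ := 0.55175) (M₄ := 0.41989) (M₅ := 0.35871)
    U1_open hg (by norm_num) (by norm_num)
    (by norm_num) (by norm_num) (by norm_num) (by norm_num) (by norm_num) (by norm_num) U1_ball
    (sin_big 0.99767636 0.99071624 0.96303734 0.8548819 0.4616462 (by norm_num) (by norm_num)
      (by norm_num) (by norm_num) (by norm_num) (by norm_num) (by norm_num) (by norm_num) (by norm_num))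
    (by norm_num)
    (sin_big 0.99574299 0.98300821 0.93261029 0.739524 0.0937915 (by norm_num) (by norm_num)
      (by norm_num) (by norm_num) (by norm_num) (by norm_num) (by norm_num) (by norm_num) (by norm_num))
    (by norm_num)
    (sin_big 0.99393704 0.97582168 0.90445591 0.636081 (-0.1908019) (by norm_num) (by norm_num)
      (by norm_num) (by norm_num) (by norm_num) (by norm_num) (by norm_num) (by norm_num) (by norm_num))
    (by norm_num)
    (sin_big 0.992386 0.96965995 0.88048084 0.5504931 (-0.3939146) (by norm_num) (by norm_num)
      (by norm_num) (by norm_num) (by norm_num) (by norm_num) (by norm_num) (by norm_num) (by norm_num))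
    (by norm_num)
  have hb : (0.92876 ^ 2 * 0.55175 ^ 3 * 0.41989 ^ 4 * 0.35871 ^ 5 : ℝ) < Real.exp (-10.5) := by
    have h1 : Real.exp 0.5 ≤ 1.6488 := by
      have := Real.exp_bound' (x := 0.5) (by norm_num) (by norm_num) (n := 7) (by norm_num)
      refine this.trans ?_
      simp only [Finset.sum_range_succ, Finset.sum_range_zero, Nat.factorial]
      norm_num
    rw [show (-10.5 : ℝ) = -((21 : ℕ) * 0.5) by norm_num, Real.exp_neg, Real.exp_nat_mul]
    refine lt_of_lt_of_le ?_ (inv_anti₀ (by positivity) (pow_le_pow_left₀ (by positivity) h1 21))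
    norm_num
  obtain ⟨K, hK, h2⟩ := poly_geom (C := C) (by positivity) hb
  exact ⟨K, hK, fun n => (h n).trans (h2 n)⟩

lemma Lr_mem : (Lr : ℂ) ∈ U0 := by
  have := Lr_lt
  show (Lr : ℂ).re < 0
  rw [Complex.ofReal_re]
  linarith

lemma Dop_g1 (F : ℂ[X]) : Dop g1 Lr F = Lr * Dop ht Lr F + Dop ht Lr (derivative F) := by
  rw [← Dop_id_mul U0_open ht_diff F Lr_mem]
  apply Dop_congr
  filter_upwards [U0_open.mem_nhds Lr_mem] with ξ h
  exact g1_eq h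

lemma Dop_g2 (F : ℂ[X]) : Dop g2 Lr F = Lr ^ 2 * Dop ht Lr F + 2 * Lr * Dop ht Lr (derivative F)
    + Dop ht Lr (derivative (derivative F)) := by
  have hd : DifferentiableOn ℂ (fun ζ => ζ * ht ζ) U0 := differentiableOn_id.mul ht_diff
  have : Dop g2 Lr F = Dop (fun ζ => ζ * (ζ * ht ζ)) Lr F := by
    apply Dop_congr
    filter_upwards [U0_open.mem_nhds Lr_mem] with ξ h
    rw [g2, g1_eq h]
  rw [this, Dop_id_mul U0_open hd F Lr_mem, Dop_id_mul U0_open ht_diff F Lr_mem,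
    Dop_id_mul U0_open ht_diff _ Lr_mem]
  ring
end

section
open Polynomial Filter Topology

lemma S_shift (F : ℂ[X]) : Complex.exp Lr * Dop ht Lr (F.comp (X + C 1)) =
    Dop ht Lr F - F.eval 0 / 2 - Complex.exp Lr * F.eval 1 / 2 := by
  have h1 := Dop_exp_mul U0_open ht_diff 1 F Lr_mem
  rw [one_mul] at h1
  rw [← h1]
  refine Dop_unique U0_open (DifferentiableOn.mul (by fun_prop) ht_diff)
    (Φ := fun F ξ => Dop ht ξ F - F.eval 0 / 2 - Complex.exp ξ * F.eval 1 / 2) ?_ ?_ ?_ F _ Lr_mem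
  · intro a ξ hξ
    have h := U0_ne hξ
    simp only [Dop_C, eval_C, Pi.mul_apply, ht]
    rw [one_mul]
    field_simp
    ring
  · intro p q ξ _
    simp only [map_add, eval_add]; ring
  · intro p ξ hξ
    have := ((Dop_hasDerivAt U0_open ht_diff hξ p).sub_const (p.eval 0 / 2)).sub
      (((Complex.hasDerivAt_exp ξ).mul_const (p.eval 1)).div_const 2)
    refine this.congr_deriv ?_
    simp

/-- second central difference -/
noncomputable def dd (F : ℂ[X]) : ℂ[X] := F.comp (X + C 1) - 2 * F + F.comp (X - C 1)

lemma cexp_Lr : Complex.exp Lr = (7 - Real.sqrt 13) / 6 := by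
  rw [← Complex.ofReal_exp, exp_Lr]; push_cast; rfl

lemma c13_sq : (Real.sqrt 13 : ℂ) * Real.sqrt 13 = 13 := by
  rw [← Complex.ofReal_mul, s13_sq]; norm_num

lemma S_rec (F : ℂ[X]) : Dop ht Lr F = 3 * Dop ht Lr (dd F) + Real.sqrt 13 / 2 * F.eval 0 +
    3 / 2 * (F.eval 1 - F.eval (-1)) := by
  have h1 := S_shift F
  have h2 := S_shift (F.comp (X - C 1))
  have e : (F.comp (X - C 1)).comp (X + C 1) = F := by
    rw [comp_assoc]; simp
  rw [e] at h2
  simp only [eval_comp, eval_sub, eval_X, eval_C, sub_self, zero_sub] at h2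
  have h3 : Dop ht Lr (dd F) = Dop ht Lr (F.comp (X + C 1)) - 2 * Dop ht Lr F +
      Dop ht Lr (F.comp (X - C 1)) := by
    rw [dd, map_add, map_sub]
    congr 2
    rw [show (2 : ℂ[X]) = C 2 from rfl, Dop_C_mul]
  rw [h3]
  rw [cexp_Lr] at h1 h2
  have hs := c13_sq
  set s : ℂ := (Real.sqrt 13 : ℂ)
  have hi : (7 + s) / 6 * ((7 - s) / 6) = 1 := by linear_combination (-1/36) * hs
  linear_combination 3 * h2 + (-3 * ((7 + s) / 6)) * h1 +
    (3 * Dop ht Lr (F.comp (X + C 1)) + 3 / 2 * F.eval 1) * hi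

def IntV (F : ℂ[X]) : Prop := ∀ k : ℤ, ∃ m : ℤ, F.eval (k : ℂ) = m

lemma dd_eval (F : ℂ[X]) (k : ℤ) : (dd F).eval (k : ℂ) =
    F.eval ((k + 1 : ℤ) : ℂ) - 2 * F.eval (k : ℂ) + F.eval ((k - 1 : ℤ) : ℂ) := by
  simp [dd, eval_comp]

lemma IntV.dd {F : ℂ[X]} (h : IntV F) : IntV (dd F) := by
  intro k
  obtain ⟨a, ha⟩ := h (k + 1)
  obtain ⟨b, hb⟩ := h k
  obtain ⟨c, hc⟩ := h (k - 1)
  refine ⟨a - 2 * b + c, ?_⟩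
  rw [dd_eval, ha, hb, hc]; push_cast; ring

lemma parity_dd {F : ℂ[X]} {ε : ℂ} (h : ∀ k : ℤ, F.eval ((-k : ℤ) : ℂ) = ε * F.eval (k : ℂ)) (k : ℤ) :
    (dd F).eval ((-k : ℤ) : ℂ) = ε * (dd F).eval (k : ℂ) := by
  rw [dd_eval, dd_eval, h k, show -k + 1 = -(k - 1) by ring, show -k - 1 = -(k + 1) by ring, h, h]
  ring

lemma deg_shift_sub {F : ℂ[X]} (hF : F ≠ 0) (c : ℂ) : (F.comp (X + C c) - F).degree < F.degree := by
  have hd : (F.comp (X + C c)).degree = F.degree := by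
    have := taylor_apply c F
    rw [← this, degree_taylor]
  have h0 : F.comp (X + C c) ≠ 0 := by
    intro h; rw [h, degree_zero] at hd; exact hF (degree_eq_bot.1 hd.symm)
  rw [← hd]
  apply degree_sub_lt_left hd h0
  rw [leadingCoeff_comp (by rw [natDegree_X_add_C]; exact one_ne_zero), leadingCoeff_X_add_C]
  simp

lemma dd_degree {F : ℂ[X]} (hF : F ≠ 0) : (dd F).degree < F.degree := by
  have h1 := deg_shift_sub hF 1
  have h2 := deg_shift_sub hF (-1)
  have : dd F = (F.comp (X + C 1) - F) + (F.comp (X + C (-1)) - F) := by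
    rw [dd, C_neg, ← sub_eq_add_neg]; ring
  rw [this]
  exact lt_of_le_of_lt (degree_add_le _ _) (max_lt h1 h2)

lemma S_even (F : ℂ[X]) (hi : IntV F) (hp : ∀ k : ℤ, F.eval ((-k : ℤ) : ℂ) = F.eval (k : ℂ)) :
    ∃ m : ℤ, 2 * Dop ht Lr F = Real.sqrt 13 * m := by
  induction h : F.degree using WellFoundedLT.induction generalizing F with
  | ind d ih =>
    subst h
    by_cases hF : F = 0
    · exact ⟨0, by simp [hF]⟩
    · obtain ⟨m, hm⟩ := ih _ (dd_degree hF) (dd F) hi.dd (by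
        intro k
        have := parity_dd (F := F) (ε := 1) (by simpa using hp) k
        simpa using this) rfl
      obtain ⟨a, ha⟩ := hi 0
      refine ⟨3 * m + a, ?_⟩
      have h1 := hp 1
      push_cast at h1 ha ⊢
      rw [S_rec, h1, ha]
      linear_combination 3 * hm

lemma S_odd (F : ℂ[X]) (hi : IntV F) (hp : ∀ k : ℤ, F.eval ((-k : ℤ) : ℂ) = -F.eval (k : ℂ)) :
    ∃ m : ℤ, 2 * Dop ht Lr F = m := by
  induction h : F.degree using WellFoundedLT.induction generalizing F with
  | ind d ih =>
    subst h
    by_cases hF : F = 0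
    · exact ⟨0, by simp [hF]⟩
    · obtain ⟨m, hm⟩ := ih _ (dd_degree hF) (dd F) hi.dd (by
        intro k
        have := parity_dd (F := F) (ε := -1) (by simpa using hp) k
        simpa using this) rfl
      obtain ⟨a, ha⟩ := hi 1
      refine ⟨3 * m + 6 * a, ?_⟩
      have h1 := hp 1
      have h0 := hp 0
      push_cast at h1 ha h0 ⊢
      have h2 : F.eval 0 = 0 := by
        rw [neg_zero] at h0
        have : 2 * F.eval 0 = 0 := by linear_combination h0
        simpa using this
      rw [S_rec, h1, ha, h2]
      linear_combination 3 * hm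

lemma S_vanish (m : ℕ) (F : ℂ[X]) (hv : ∀ k : ℤ, |k| ≤ m → F.eval (k : ℂ) = 0) :
    Dop ht Lr F = 3 ^ m * Dop ht Lr (dd^[m] F) := by
  induction m generalizing F with
  | zero => simp
  | succ m ih =>
    have h0 := hv 0 (by simp; positivity)
    have h1 := hv 1 (by simp)
    have h2 := hv (-1) (by simp)
    push_cast at h0 h1 h2
    rw [S_rec, h0, h1, h2, ih (dd F), Function.iterate_succ_apply]
    · ring
    · intro k hk
      rw [dd_eval, hv, hv, hv]
      · ring
      · push_cast
        have := abs_sub k 1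
        simp at this
        linarith
      · push_cast; linarith
      · push_cast
        have := abs_add_le k 1
        simp at this
        linarith

lemma IntV.iter {F : ℂ[X]} (h : IntV F) (m : ℕ) : IntV (_root_.dd^[m] F) := by
  induction m generalizing F with
  | zero => exact h
  | succ m ih => exact ih h.dd

lemma parity_iter {F : ℂ[X]} {ε : ℂ} (h : ∀ k : ℤ, F.eval ((-k : ℤ) : ℂ) = ε * F.eval (k : ℂ))
    (m : ℕ) : ∀ k : ℤ, (dd^[m] F).eval ((-k : ℤ) : ℂ) = ε * (dd^[m] F).eval (k : ℂ) := by
  induction m generalizing F with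
  | zero => exact h
  | succ m ih => exact ih (parity_dd h)

lemma S_even' {m : ℕ} {F : ℂ[X]} (hi : IntV F)
    (hp : ∀ k : ℤ, F.eval ((-k : ℤ) : ℂ) = F.eval (k : ℂ))
    (hv : ∀ k : ℤ, |k| ≤ m → F.eval (k : ℂ) = 0) :
    ∃ a : ℤ, 2 * Dop ht Lr F = Real.sqrt 13 * (3 ^ m * a) := by
  obtain ⟨a, ha⟩ := S_even _ (hi.iter m) (by
    have := parity_iter (F := F) (ε := 1) (by simpa using hp) m
    simpa using this)
  refine ⟨a, ?_⟩
  rw [S_vanish m F hv]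
  linear_combination 3 ^ m * ha

lemma S_odd' {m : ℕ} {F : ℂ[X]} (hi : IntV F)
    (hp : ∀ k : ℤ, F.eval ((-k : ℤ) : ℂ) = -F.eval (k : ℂ))
    (hv : ∀ k : ℤ, |k| ≤ m → F.eval (k : ℂ) = 0) :
    ∃ a : ℤ, 2 * Dop ht Lr F = 3 ^ m * a := by
  obtain ⟨a, ha⟩ := S_odd _ (hi.iter m) (by
    have := parity_iter (F := F) (ε := -1) (by simpa using hp) m
    simpa using this)
  refine ⟨a, ?_⟩
  rw [S_vanish m F hv]
  linear_combination 3 ^ m * ha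
end

section
open Polynomial Filter Topology

noncomputable def PZ : ℕ → ℤ[X]
  | 0 => X
  | (a + 1) => PZ a * (X ^ 2 - C ((a + 1 : ℤ) ^ 2))

lemma PZ_map (a : ℕ) : (PZ a).map (Int.castRingHom ℂ) = Pc a := by
  induction a with
  | zero => simp [PZ, Pc]
  | succ a ih => simp [PZ, Pc, ih]

noncomputable def WZ (n : ℕ) : ℤ[X] := PZ (2 * n) * (PZ (3 * n) * (PZ (4 * n) * PZ (5 * n)))

lemma WZ_map (n : ℕ) : (WZ n).map (Int.castRingHom ℂ) = Wn n := by
  simp [WZ, Wn, PZ_map]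

lemma PZ_taylor (a : ℕ) (k : ℤ) : taylor k (PZ a) =
    ((Finset.Icc (k - a) (k + a)).val.map fun c => X + C c).prod := by
  show _ = ∏ c ∈ Finset.Icc (k - a : ℤ) (k + a), (X + C c)
  induction a with
  | zero => simp [PZ]
  | succ a ih =>
    rw [PZ, taylor_mul, ih]
    have e : Finset.Icc (k - (a + 1 : ℕ) : ℤ) (k + (a + 1 : ℕ)) =
        insert (k - (a + 1 : ℤ)) (insert (k + (a + 1 : ℤ)) (Finset.Icc (k - a : ℤ) (k + a))) := by
      ext x; simp only [Finset.mem_Icc, Finset.mem_insert]; push_cast; omega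
    rw [e, Finset.prod_insert, Finset.prod_insert]
    · simp only [taylor_apply, sub_comp, pow_comp, X_comp, C_comp]
      simp only [C_add, C_sub, C_pow]
      ring
    · simp only [Finset.mem_Icc]; omega
    · simp only [Finset.mem_Icc, Finset.mem_insert]; omega

noncomputable def Bm (n : ℕ) (k : ℤ) : Multiset ℤ :=
  (Finset.Icc (k - (2 * n : ℕ)) (k + (2 * n : ℕ))).val +
  ((Finset.Icc (k - (3 * n : ℕ)) (k + (3 * n : ℕ))).val +
  ((Finset.Icc (k - (4 * n : ℕ)) (k + (4 * n : ℕ))).val +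
  (Finset.Icc (k - (5 * n : ℕ)) (k + (5 * n : ℕ))).val))

lemma WZ_taylor (n : ℕ) (k : ℤ) : taylor k (WZ n) = ((Bm n k).map fun c => X + C c).prod := by
  simp only [WZ, taylor_mul, PZ_taylor, Bm, Multiset.map_add, Multiset.prod_add]

lemma pow_count_dvd (p : ℕ) (b : ℕ) (c : ℤ) :
    (p : ℤ) ^ (∑ e ∈ Finset.Ico 1 b, if (p : ℤ) ^ e ∣ c then 1 else 0) ∣ c := by
  induction b with
  | zero => simp
  | succ b ih =>
    rcases Nat.eq_zero_or_pos b with rfl | hb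
    · simp
    rw [Finset.sum_Ico_succ_top (show 1 ≤ b from hb)]
    split_ifs with h
    · refine dvd_trans (pow_dvd_pow _ ?_) h
      have : ∑ e ∈ Finset.Ico 1 b, (if (p : ℤ) ^ e ∣ c then 1 else 0) ≤ ∑ e ∈ Finset.Ico 1 b, 1 := by
        apply Finset.sum_le_sum
        intro i _
        split_ifs <;> simp
      simp only [Finset.sum_const, smul_eq_mul, mul_one, Nat.card_Ico] at this
      omega
    · simpa using ih

lemma pow_prod_dvd (p : ℕ) (b : ℕ) (T : Multiset ℤ) :
    (p : ℤ) ^ (∑ e ∈ Finset.Ico 1 b, T.countP (fun c => (p : ℤ) ^ e ∣ c)) ∣ T.prod := by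
  induction T using Multiset.induction_on with
  | empty => simp
  | cons c T ih =>
    rw [Multiset.prod_cons]
    simp only [Multiset.countP_cons]
    rw [Finset.sum_add_distrib, add_comm, pow_add]
    exact mul_dvd_mul (pow_count_dvd p b c) ih

lemma coeff_dvd (p b : ℕ) (B : Multiset ℤ) (hB : 2 ≤ Multiset.card B) {i : ℕ} (hi : i ≤ 2) :
    (p : ℤ) ^ (∑ e ∈ Finset.Ico 1 b, (B.countP (fun c => (p : ℤ) ^ e ∣ c) - 2)) ∣
      ((B.map fun c => X + C c).prod).coeff i := by
  have h : i ≤ Multiset.card B := hi.trans hB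
  · rw [Multiset.prod_X_add_C_coeff _ h, Multiset.esymm]
    apply Multiset.dvd_sum
    intro x hx
    obtain ⟨T, hT, rfl⟩ := Multiset.mem_map.1 hx
    rw [Multiset.mem_powersetCard] at hT
    refine dvd_trans (pow_dvd_pow _ ?_) (pow_prod_dvd p b T)
    apply Finset.sum_le_sum
    intro e _
    obtain ⟨T', hT'⟩ := Multiset.le_iff_exists_add.1 hT.1
    have h1 := Multiset.countP_le_card (fun c => (p : ℤ) ^ e ∣ c) T'
    have h2 := hT.2
    rw [hT', Multiset.countP_add]
    rw [hT', Multiset.card_add] at h2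
    rw [hT', Multiset.card_add] at h
    omega

lemma WZ_derivs (n : ℕ) (k : ℤ) : (WZ n).eval k = (taylor k (WZ n)).coeff 0 ∧
    (derivative (WZ n)).eval k = (taylor k (WZ n)).coeff 1 ∧
    (derivative (derivative (WZ n))).eval k = 2 * (taylor k (WZ n)).coeff 2 := by
  refine ⟨by simp, by simp [taylor_coeff_one], ?_⟩
  rw [taylor_coeff]
  have := congrArg (fun f => f (WZ n)) (factorial_smul_hasseDeriv (R := ℤ) (k := 2))
  simp at this
  rw [← this]
  simp

/-- number of multiples of `q` in the window -/
noncomputable def nu (q : ℤ) (k : ℤ) (a : ℕ) : ℕ :=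
  (Finset.Icc (k - (a : ℕ)) (k + (a : ℕ))).val.countP (fun c => q ∣ c)

lemma nu_ge {q k : ℤ} {a : ℕ} (hq : 0 < q) {j₁ j₂ : ℤ} (h1 : k - a ≤ q * j₁) (h2 : q * j₂ ≤ k + a) :
    j₂ - j₁ + 1 ≤ nu q k a := by
  have : (Finset.Icc j₁ j₂).card ≤ nu q k a := by
    rw [nu, Multiset.countP_eq_card_filter]
    show _ ≤ (Finset.filter (fun c => q ∣ c) (Finset.Icc (k - (a : ℕ)) (k + (a : ℕ)))).card
    apply Finset.card_le_card_of_injOn (fun j => q * j)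
    · intro j hj
      simp only [Finset.coe_Icc, Set.mem_Icc] at hj
      simp only [Finset.coe_filter, Finset.mem_Icc, Set.mem_ofPred_eq, dvd_mul_right, and_true]
      constructor <;> nlinarith
    · intro x _ y _ h
      exact mul_left_cancel₀ hq.ne' h
  rw [Int.card_Icc] at this
  omega

lemma nu_ge_div {q : ℕ} (hq : 0 < q) (k : ℤ) (a : ℕ) : 2 * a / q ≤ nu q k a := by
  have hq' : (0:ℤ) < q := by exact_mod_cast hq
  set F := 2 * a / q with hF
  have h1 : F * q ≤ 2 * a := Nat.div_mul_le_self _ _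
  have h1' : (F : ℤ) * q ≤ 2 * a := by exact_mod_cast h1
  have hm := Int.emod_add_mul_ediv (k + a) q
  have hm1 := Int.emod_nonneg (k + a) hq'.ne'
  have hm2 := Int.emod_lt_of_pos (k + a) hq'
  have := nu_ge (a := a) (k := k) hq' (j₁ := (k + a) / q - F + 1) (j₂ := (k + a) / q) (by nlinarith)
    (by nlinarith)
  omega

lemma pair_lemma {p b c u w : ℕ} (k : ℤ) (hp : 0 < p) (h1 : u * p ≤ b) (h2 : 2 * b < (2 * u + 1) * p)
    (h3 : (2 * w + 1) * p ≤ 2 * c) (h4 : c < (w + 1) * p) (h5 : (u + w + 1) * p ≤ b + c) :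
    2 * b / p + 2 * c / p + 1 ≤ nu p k b + nu p k c := by
  have e1 : 2 * b / p = 2 * u := by
    apply Nat.div_eq_of_lt_le <;> nlinarith
  have e2 : 2 * c / p = 2 * w + 1 := by
    apply Nat.div_eq_of_lt_le <;> nlinarith
  rw [e1, e2]
  have hp' : (0:ℤ) < p := by exact_mod_cast hp
  zify at h1 h2 h3 h4 h5
  obtain ⟨m, k0, hk, hk1, hk2⟩ : ∃ m k0 : ℤ, k = p * m + k0 ∧ -(p:ℤ) ≤ 2 * k0 ∧ 2 * k0 ≤ p := by
    have hm := Int.emod_add_mul_ediv k p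
    have hm1 := Int.emod_nonneg k hp'.ne'
    have hm2 := Int.emod_lt_of_pos k hp'
    by_cases h : 2 * (k % p) ≤ p
    · exact ⟨k / p, k % p, by linarith, by linarith, h⟩
    · exact ⟨k / p + 1, k % p - p, by linarith, by linarith, by linarith⟩
  rcases le_total 0 k0 with h0 | h0
  · by_cases hb : (u : ℤ) * p + k0 ≤ b
    · have := nu_ge (a := b) (k := k) hp' (j₁ := m - u) (j₂ := m + u) (by linarith) (by linarith)
      have := nu_ge (a := c) (k := k) hp' (j₁ := m - w) (j₂ := m + w) (by linarith) (by linarith)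
      omega
    · have := nu_ge (a := b) (k := k) hp' (j₁ := m - u + 1) (j₂ := m + u) (by linarith) (by linarith)
      have := nu_ge (a := c) (k := k) hp' (j₁ := m - w) (j₂ := m + w + 1) (by linarith) (by linarith)
      omega
  · by_cases hb : (u : ℤ) * p - k0 ≤ b
    · have := nu_ge (a := b) (k := k) hp' (j₁ := m - u) (j₂ := m + u) (by linarith) (by linarith)
      have := nu_ge (a := c) (k := k) hp' (j₁ := m - w) (j₂ := m + w) (by linarith) (by linarith)
      omega
    · have := nu_ge (a := b) (k := k) hp' (j₁ := m - u) (j₂ := m + u - 1) (by linarith) (by linarith)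
      have := nu_ge (a := c) (k := k) hp' (j₁ := m - w - 1) (j₂ := m + w) (by linarith) (by linarith)
      omega

lemma pair_lemma' {p n b c u w t r : ℕ} (k : ℤ) (hp : 0 < p) (hn : n = p * t + r)
    (h1 : u * p ≤ b * r) (h2 : 2 * b * r < (2 * u + 1) * p)
    (h3 : (2 * w + 1) * p ≤ 2 * c * r) (h4 : c * r < (w + 1) * p) (h5 : (u + w + 1) * p ≤ (b + c) * r) :
    2 * (b * n) / p + 2 * (c * n) / p + 1 ≤ nu p k (b * n) + nu p k (c * n) := by
  subst hn
  apply pair_lemma (u := b * t + u) (w := c * t + w) k hp <;> nlinarith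
end

section
open Polynomial Filter Topology

/-- indicator of an interval condition -/
def ivl (l1 l2 r1 r2 r p : ℕ) : ℕ := if l1 * p ≤ l2 * r ∧ r2 * r < r1 * p then 1 else 0

def savO (r p : ℕ) : ℕ := ivl 1 9 1 2 r p + ivl 5 9 9 10 r p
def savZ (r p : ℕ) : ℕ := ivl 1 7 1 6 r p + ivl 2 9 1 4 r p + ivl 2 7 3 10 r p + ivl 3 7 1 2 r p +
  ivl 4 7 3 5 r p + ivl 5 7 3 4 r p + ivl 6 7 7 8 r p

section
variable {p n t r : ℕ} (k : ℤ) (hp : 0 < p) (hn : n = p * t + r)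

lemma sum_ge_O (hp : 0 < p) (hn : n = p * t + r)
    (h : (1 * p ≤ 9 * r ∧ 2 * r < 1 * p) ∨ (5 * p ≤ 9 * r ∧ 10 * r < 9 * p)) :
    2 * (2 * n) / p + 2 * (3 * n) / p + 2 * (4 * n) / p + 2 * (5 * n) / p + 1 ≤
      nu p k (2 * n) + nu p k (3 * n) + nu p k (4 * n) + nu p k (5 * n) := by
  have h2 := nu_ge_div hp k (2 * n)
  have h3 := nu_ge_div hp k (3 * n)
  have h4 := nu_ge_div hp k (4 * n)
  have h5 := nu_ge_div hp k (5 * n)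
  have P : ∀ b c u w : ℕ, u * p ≤ b * r → 2 * b * r < (2 * u + 1) * p →
    (2 * w + 1) * p ≤ 2 * c * r → c * r < (w + 1) * p → (u + w + 1) * p ≤ (b + c) * r →
    2 * (b * n) / p + 2 * (c * n) / p + 1 ≤ nu p k (b * n) + nu p k (c * n) :=
    fun b c u w => pair_lemma' k hp hn
  rcases h with ⟨ha, hb⟩ | ⟨ha, hb⟩
  · by_cases c1 : 8 * r < p
    · have := P 4 5 0 0 (by omega) (by omega) (by omega) (by omega) (by omega); omega
    by_cases c2 : 6 * r < p
    · have := P 3 5 0 0 (by omega) (by omega) (by omega) (by omega) (by omega); omega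
    by_cases c3 : 4 * r < p
    · have := P 2 4 0 0 (by omega) (by omega) (by omega) (by omega) (by omega); omega
    by_cases c4 : 10 * r < 3 * p
    · have := P 5 3 1 0 (by omega) (by omega) (by omega) (by omega) (by omega); omega
    by_cases c5 : 3 * r < p
    · have := P 4 3 1 0 (by omega) (by omega) (by omega) (by omega) (by omega); omega
    by_cases c6 : 8 * r < 3 * p
    · have := P 4 2 1 0 (by omega) (by omega) (by omega) (by omega) (by omega); omega
    by_cases c7 : 5 * r < 2 * p
    · have := P 3 5 1 1 (by omega) (by omega) (by omega) (by omega) (by omega); omega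
    have := P 3 2 1 0 (by omega) (by omega) (by omega) (by omega) (by omega); omega
  · by_cases c1 : 5 * r < 3 * p
    · have := P 4 5 2 2 (by omega) (by omega) (by omega) (by omega) (by omega); omega
    by_cases c2 : 3 * r < 2 * p
    · have := P 2 3 1 1 (by omega) (by omega) (by omega) (by omega) (by omega); omega
    by_cases c3 : 4 * r < 3 * p
    · have := P 2 4 1 2 (by omega) (by omega) (by omega) (by omega) (by omega); omega
    by_cases c4 : 5 * r < 4 * p
    · have := P 3 5 2 3 (by omega) (by omega) (by omega) (by omega) (by omega); omega
    by_cases c5 : 6 * r < 5 * p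
    · have := P 3 2 2 1 (by omega) (by omega) (by omega) (by omega) (by omega); omega
    by_cases c6 : 8 * r < 7 * p
    · have := P 4 2 3 1 (by omega) (by omega) (by omega) (by omega) (by omega); omega
    have := P 5 3 4 2 (by omega) (by omega) (by omega) (by omega) (by omega); omega

lemma sum_ge_sav (hp : 0 < p) (hn : n = p * t + r) :
    2 * (2 * n) / p + 2 * (3 * n) / p + 2 * (4 * n) / p + 2 * (5 * n) / p + (savO r p + savZ r p) ≤
      nu p k (2 * n) + nu p k (3 * n) + nu p k (4 * n) + nu p k (5 * n) := by
  have h2 := nu_ge_div hp k (2 * n)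
  have h3 := nu_ge_div hp k (3 * n)
  have h4 := nu_ge_div hp k (4 * n)
  have h5 := nu_ge_div hp k (5 * n)
  have P : ∀ b c u w : ℕ, u * p ≤ b * r → 2 * b * r < (2 * u + 1) * p →
    (2 * w + 1) * p ≤ 2 * c * r → c * r < (w + 1) * p → (u + w + 1) * p ≤ (b + c) * r →
    2 * (b * n) / p + 2 * (c * n) / p + 1 ≤ nu p k (b * n) + nu p k (c * n) :=
    fun b c u w => pair_lemma' k hp hn
  have hO1 : savO r p ≤ 1 := by
    unfold savO ivl; split_ifs <;> omega
  have hO : savO r p = 0 ∨ 2 * (2 * n) / p + 2 * (3 * n) / p + 2 * (4 * n) / p + 2 * (5 * n) / p + 1 ≤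
      nu p k (2 * n) + nu p k (3 * n) + nu p k (4 * n) + nu p k (5 * n) := by
    by_cases h : (1 * p ≤ 9 * r ∧ 2 * r < 1 * p) ∨ (5 * p ≤ 9 * r ∧ 10 * r < 9 * p)
    · exact Or.inr (sum_ge_O k hp hn h)
    · left; rw [not_or] at h; unfold savO ivl; rw [if_neg h.1, if_neg h.2]
  have hZ : savZ r p ≤ 1 ∧ (savZ r p = 0 ∨ 
    2 * (2 * n) / p + 2 * (3 * n) / p + 2 * (4 * n) / p + 2 * (5 * n) / p + 2 ≤
      nu p k (2 * n) + nu p k (3 * n) + nu p k (4 * n) + nu p k (5 * n)) := by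
    unfold savZ ivl
    by_cases z1 : 1 * p ≤ 7 * r ∧ 6 * r < 1 * p
    · have := P 2 5 0 0 (by omega) (by omega) (by omega) (by omega) (by omega)
      have := P 3 4 0 0 (by omega) (by omega) (by omega) (by omega) (by omega)
      refine ⟨?_, Or.inr (by omega)⟩
      split_ifs <;> omega
    by_cases z2 : 2 * p ≤ 9 * r ∧ 4 * r < 1 * p
    · have := P 2 3 0 0 (by omega) (by omega) (by omega) (by omega) (by omega)
      have := P 5 4 1 0 (by omega) (by omega) (by omega) (by omega) (by omega)
      refine ⟨?_, Or.inr (by omega)⟩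
      split_ifs <;> omega
    by_cases z3 : 2 * p ≤ 7 * r ∧ 10 * r < 3 * p
    · have := P 5 2 1 0 (by omega) (by omega) (by omega) (by omega) (by omega)
      have := P 4 3 1 0 (by omega) (by omega) (by omega) (by omega) (by omega)
      refine ⟨?_, Or.inr (by omega)⟩
      split_ifs <;> omega
    by_cases z4 : 3 * p ≤ 7 * r ∧ 2 * r < 1 * p
    · have := P 5 2 2 0 (by omega) (by omega) (by omega) (by omega) (by omega)
      have := P 3 4 1 1 (by omega) (by omega) (by omega) (by omega) (by omega)
      refine ⟨?_, Or.inr (by omega)⟩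
      split_ifs <;> omega
    by_cases z5 : 4 * p ≤ 7 * r ∧ 5 * r < 3 * p
    · have := P 2 5 1 2 (by omega) (by omega) (by omega) (by omega) (by omega)
      have := P 4 3 2 1 (by omega) (by omega) (by omega) (by omega) (by omega)
      refine ⟨?_, Or.inr (by omega)⟩
      split_ifs <;> omega
    by_cases z6 : 5 * p ≤ 7 * r ∧ 4 * r < 3 * p
    · have := P 2 5 1 3 (by omega) (by omega) (by omega) (by omega) (by omega)
      have := P 3 4 2 2 (by omega) (by omega) (by omega) (by omega) (by omega)
      refine ⟨?_, Or.inr (by omega)⟩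
      split_ifs <;> omega
    by_cases z7 : 6 * p ≤ 7 * r ∧ 8 * r < 7 * p
    · have := P 5 2 4 1 (by omega) (by omega) (by omega) (by omega) (by omega)
      have := P 4 3 3 2 (by omega) (by omega) (by omega) (by omega) (by omega)
      refine ⟨?_, Or.inr (by omega)⟩
      split_ifs <;> omega
    rw [if_neg z1, if_neg z2, if_neg z3, if_neg z4, if_neg z5, if_neg z6, if_neg z7]
    exact ⟨by norm_num, Or.inl rfl⟩
  omega

lemma sav_le_two : savO r p + savZ r p ≤ 2 := by
  have hO1 : savO r p ≤ 1 := by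
    unfold savO ivl; split_ifs <;> omega
  have : savZ r p ≤ 1 := by
    unfold savZ ivl; split_ifs <;> omega
  omega

lemma sav_zero (h : 9 * r < p) : savO r p + savZ r p = 0 := by
  unfold savO savZ ivl
  split_ifs <;> omega
end

def sav (n p : ℕ) : ℕ := if n / p < 3 then savO (n % p) p + savZ (n % p) p else 0

def lim2 (n p : ℕ) : ℕ := if p ≤ 9 * n then 2 else 1

lemma sav_le {n p : ℕ} (hp : 0 < p) : sav n p ≤ lim2 n p := by
  unfold sav lim2
  split_ifs with h1 h2 h2
  · exact sav_le_two
  · rw [sav_zero]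
    · omega
    · have := Nat.mod_le n p
      omega
  · omega
  · omega

lemma nu_Bm (n : ℕ) (k : ℤ) (q : ℤ) : (Bm n k).countP (fun c => q ∣ c) =
    nu q k (2 * n) + nu q k (3 * n) + nu q k (4 * n) + nu q k (5 * n) := by
  simp only [Bm, Multiset.countP_add, nu]
  ring

lemma key_bound {n p : ℕ} (hp : 0 < p) (hp10 : p ≤ 10 * n) (k : ℤ) :
    2 * (2 * n) / p + 2 * (3 * n) / p + 2 * (4 * n) / p + 2 * (5 * n) / p ≤
      ((Bm n k).countP (fun c => (p : ℤ) ∣ c) - 2) + (lim2 n p - sav n p) := by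
  rw [nu_Bm]
  have h1 := sum_ge_sav (n := n) k hp (t := n / p) (r := n % p) (Nat.div_add_mod n p).symm
  have h2 := sav_le (n := n) hp
  have h3 : sav n p ≤ savO (n % p) p + savZ (n % p) p := by
    unfold sav; split_ifs <;> omega
  by_cases h : p ≤ 9 * n
  · have : lim2 n p = 2 := if_pos h
    omega
  · have e : lim2 n p = 1 := if_neg h
    have e0 : sav n p = 0 := by
      have := sav_zero (r := n % p) (p := p) (by have := Nat.mod_le n p; omega)
      omega
    have e2 : 2 * (2 * n) / p = 0 := Nat.div_eq_of_lt (by omega)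
    have e3 : 2 * (3 * n) / p = 0 := Nat.div_eq_of_lt (by omega)
    have e4 : 2 * (4 * n) / p = 0 := Nat.div_eq_of_lt (by omega)
    have e5 : 2 * (5 * n) / p < 2 := by
      rw [Nat.div_lt_iff_lt_mul hp]; omega
    omega

lemma key_bound2 {n q : ℕ} (hq : 0 < q) (k : ℤ) :
    2 * (2 * n) / q + 2 * (3 * n) / q + 2 * (4 * n) / q + 2 * (5 * n) / q ≤
      ((Bm n k).countP (fun c => (q : ℤ) ∣ c) - 2) + 2 := by
  rw [nu_Bm]
  have h2 := nu_ge_div hq k (2 * n)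
  have h3 := nu_ge_div hq k (3 * n)
  have h4 := nu_ge_div hq k (4 * n)
  have h5 := nu_ge_div hq k (5 * n)
  omega

def Dexp (n p : ℕ) : ℕ := (lim2 n p - sav n p) + 2 * (Nat.log p (10 * n) - 1)

def Dn (n : ℕ) : ℕ := ∏ p ∈ Nat.primesLE (10 * n), p ^ Dexp n p

lemma Dn_pos (n : ℕ) : 0 < Dn n := by
  apply Finset.prod_pos
  intro p hp
  exact pow_pos (Nat.prime_of_mem_primesLE hp).pos _

lemma pow_dvd_Fn {n p j : ℕ} (hp : p.Prime) (h : p ^ j ∣ Fn n) :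
    j ≤ ∑ e ∈ Finset.Ico 1 (Nat.log p (10 * n) + 1), (2 * (2 * n) / p ^ e + 2 * (3 * n) / p ^ e +
      2 * (4 * n) / p ^ e + 2 * (5 * n) / p ^ e) := by
  have hF := (Fn_pos n).ne'
  have hj := (hp.pow_dvd_iff_le_factorization hF).1 h
  have fac : ∀ m, m ≤ 10 * n → (m.factorial).factorization p =
      ∑ e ∈ Finset.Ico 1 (Nat.log p (10 * n) + 1), m / p ^ e := by
    intro m hm
    have hl : Nat.log p m < Nat.log p (10 * n) + 1 := Nat.lt_succ_of_le (Nat.log_mono_right hm)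
    apply le_antisymm
    · rw [← hp.pow_dvd_factorial_iff hl, hp.pow_dvd_iff_le_factorization (Nat.factorial_ne_zero _)]
    · rw [← hp.pow_dvd_iff_le_factorization (Nat.factorial_ne_zero _), hp.pow_dvd_factorial_iff hl]
  rw [Fn, Nat.factorization_mul (by positivity) (by positivity),
    Nat.factorization_mul (by positivity) (by positivity),
    Nat.factorization_mul (by positivity) (by positivity)] at hj
  simp only [Finsupp.add_apply] at hj
  rw [fac _ (by omega), fac _ (by omega), fac _ (by omega), fac _ (by omega)] at hj
  simp only [Finset.sum_add_distrib]
  omega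

lemma Fn_dvd {n : ℕ} (k : ℤ) {i : ℕ} (hi : i ≤ 2) :
    (Fn n : ℤ) ∣ Dn n * (taylor k (WZ n)).coeff i := by
  rw [Int.natCast_dvd, Int.natAbs_mul, Int.natAbs_natCast, Nat.dvd_iff_prime_pow_dvd_dvd]
  intro p j hp hj
  have hj1 := pow_dvd_Fn hp hj
  by_cases hpn : p ≤ 10 * n
  · have hlog : 1 ≤ Nat.log p (10 * n) := Nat.log_pos hp.one_lt hpn
    set l := Nat.log p (10 * n) with hl
    have hcard : 2 ≤ Multiset.card (Bm n k) := by
      simp only [Bm, Multiset.card_add, Finset.card_val, Int.card_Icc]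
      omega
    have hc := coeff_dvd p (l + 1) (Bm n k) hcard hi
    rw [← WZ_taylor] at hc
    have hD : p ^ Dexp n p ∣ Dn n :=
      Finset.dvd_prod_of_mem (fun p => p ^ Dexp n p) (Nat.mem_primesLE.2 ⟨hpn, hp⟩)
    have hc' : p ^ (∑ e ∈ Finset.Ico 1 (l + 1), ((Bm n k).countP (fun c => (p : ℤ) ^ e ∣ c) - 2)) ∣
        ((taylor k (WZ n)).coeff i).natAbs := by
      rw [← Int.natCast_dvd_natCast, Int.dvd_natAbs]
      exact_mod_cast hc
    refine dvd_trans ?_ (mul_dvd_mul hD hc')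
    rw [← pow_add]
    apply pow_dvd_pow
    refine hj1.trans ?_
    have bot : ∀ f : ℕ → ℕ, ∑ e ∈ Finset.Ico 1 (l + 1), f e =
        f 1 + ∑ e ∈ Finset.Ico (1 + 1) (l + 1), f e := fun f =>
      Finset.sum_eq_sum_Ico_succ_bot (by omega) f
    rw [bot, bot]
    have k1 := key_bound hp.pos hpn k
    have k2 : ∑ e ∈ Finset.Ico (1 + 1) (l + 1), (2 * (2 * n) / p ^ e + 2 * (3 * n) / p ^ e +
      2 * (4 * n) / p ^ e + 2 * (5 * n) / p ^ e) ≤ ∑ e ∈ Finset.Ico (1 + 1) (l + 1),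
        (((Bm n k).countP (fun c => (p : ℤ) ^ e ∣ c) - 2) + 2) := by
      apply Finset.sum_le_sum
      intro e _
      have := key_bound2 (n := n) (pow_pos hp.pos e) k
      push_cast at this
      exact this
    have k3 : ∑ e ∈ Finset.Ico (1 + 1) (l + 1),
        (((Bm n k).countP (fun c => (p : ℤ) ^ e ∣ c) - 2) + 2) =
        ∑ e ∈ Finset.Ico (1 + 1) (l + 1), ((Bm n k).countP (fun c => (p : ℤ) ^ e ∣ c) - 2) +
          (l - 1) * 2 := by
      rw [Finset.sum_add_distrib, Finset.sum_const, Nat.card_Ico, smul_eq_mul]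
      congr 2
    rw [k3] at k2
    simp only [pow_one]
    rw [Dexp, ← hl]
    omega
  · have : Nat.log p (10 * n) = 0 := Nat.log_of_lt (by omega)
    rw [this] at hj1
    simp at hj1
    rw [hj1]; simp
end

section
open Polynomial Filter Topology

def Iv : Finset (ℕ × ℕ × ℕ × ℕ) := {(1, 9, 1, 2), (5, 9, 9, 10), (1, 7, 1, 6), (2, 9, 1, 4),
  (2, 7, 3, 10), (3, 7, 1, 2), (4, 7, 3, 5), (5, 7, 3, 4), (6, 7, 7, 8)}

lemma Iv_sum (f : ℕ × ℕ × ℕ × ℕ → ℝ) : ∑ I ∈ Iv, f I = f (1, 9, 1, 2) + f (5, 9, 9, 10) +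
    (f (1, 7, 1, 6) + f (2, 9, 1, 4) + f (2, 7, 3, 10) + f (3, 7, 1, 2) + f (4, 7, 3, 5) +
      f (5, 7, 3, 4) + f (6, 7, 7, 8)) := by
  unfold Iv
  repeat rw [Finset.sum_insert (by decide)]
  rw [Finset.sum_singleton]
  ring

lemma Iv_prop (I) (hI : I ∈ Iv) : 1 ≤ I.1 ∧ 1 ≤ I.2.1 ∧ 1 ≤ I.2.2.1 ∧ I.2.2.1 ≤ I.2.2.2 ∧
    I.2.1 ≤ 10 * I.1 ∧ I.2.2.2 ≤ 10 * I.2.2.1 := by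
  revert I; decide

lemma sav_eq (n p : ℕ) : (sav n p : ℝ) = ∑ t ∈ Finset.range 3, if n / p = t then
    ∑ I ∈ Iv, (ivl I.1 I.2.1 I.2.2.1 I.2.2.2 (n % p) p : ℝ) else 0 := by
  rw [Finset.sum_ite_eq]
  simp only [Finset.mem_range, Iv_sum, sav, savO, savZ]
  split_ifs <;> push_cast <;> rfl

/-- truncated log -/
noncomputable def tl (x : ℝ) (p : ℕ) : ℝ := if (p : ℝ) ≤ x then Real.log p else 0

lemma theta_tl {n : ℕ} {x : ℝ} (h0 : 0 ≤ x) (hx : x ≤ 10 * n) :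
    Chebyshev.theta x = ∑ p ∈ Nat.primesLE (10 * n), tl x p := by
  have e : Chebyshev.theta x = ∑ p ∈ Nat.primesLE ⌊x⌋₊, Real.log p := by
    rw [Chebyshev.theta_eq_theta_coe_floor, Chebyshev.theta_eq_sum_primesLE_log]
    try simp
  rw [e]
  unfold tl
  rw [← Finset.sum_filter]
  apply Finset.sum_congr _ fun _ _ => rfl
  ext p
  simp only [Finset.mem_filter, Nat.mem_primesLE, Nat.le_floor_iff h0]
  constructor
  · rintro ⟨a, b⟩
    refine ⟨⟨?_, b⟩, a⟩
    exact_mod_cast a.trans hx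
  · rintro ⟨⟨_, b⟩, a⟩
    exact ⟨a, b⟩

lemma ivl_ge {n p t l1 l2 r1 r2 : ℕ} (hp : 0 < p) (h1 : 1 ≤ l1) (h2 : 1 ≤ r1) (h3 : r1 ≤ r2) :
    tl (l2 * n / (l1 + l2 * t)) p - tl (r2 * n / (r1 + r2 * t)) p ≤
      (if n / p = t then (ivl l1 l2 r1 r2 (n % p) p : ℝ) else 0) * Real.log p := by
  have hlog : 0 ≤ Real.log p := Real.log_natCast_nonneg p
  have hpos : (0:ℝ) ≤ (if n / p = t then (ivl l1 l2 r1 r2 (n % p) p : ℝ) else 0) * Real.log p := by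
    apply mul_nonneg _ hlog
    split_ifs <;> positivity
  unfold tl
  by_cases ha : (p : ℝ) ≤ l2 * n / (l1 + l2 * t)
  swap
  · rw [if_neg ha]
    split_ifs at * <;> linarith
  by_cases hb : (p : ℝ) ≤ r2 * n / (r1 + r2 * t)
  · rw [if_pos ha, if_pos hb]; linarith
  rw [if_pos ha, if_neg hb]
  have l1' : (0:ℝ) < l1 + l2 * t := by
    have : (0:ℝ) < l1 := by exact_mod_cast h1
    positivity
  have r1' : (0:ℝ) < r1 + r2 * t := by
    have : (0:ℝ) < r1 := by exact_mod_cast h2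
    positivity
  rw [le_div_iff₀ l1'] at ha
  rw [not_le, div_lt_iff₀ r1'] at hb
  have ha' : p * (l1 + l2 * t) ≤ l2 * n := by exact_mod_cast ha
  have hb' : r2 * n < p * (r1 + r2 * t) := by exact_mod_cast hb
  have ht1 : t * p ≤ n := by
    by_contra h
    push Not at h
    have := Nat.mul_le_mul_left l2 h.le
    have : 1 ≤ p * l1 := Nat.mul_pos hp h1
    nlinarith
  have ht2 : n < (t + 1) * p := by
    by_contra h
    push Not at h
    have := Nat.mul_le_mul_left r2 h
    have := Nat.mul_le_mul_left p h3
    nlinarith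
  have htp : n / p = t := by
    apply le_antisymm
    · exact Nat.le_of_lt_succ ((Nat.div_lt_iff_lt_mul hp).2 ht2)
    · exact (Nat.le_div_iff_mul_le hp).2 ht1
  rw [if_pos htp]
  have hm := Nat.div_add_mod n p
  rw [htp] at hm
  have : ivl l1 l2 r1 r2 (n % p) p = 1 := by
    unfold ivl
    apply if_pos
    constructor
    · nlinarith
    · nlinarith
  rw [this]; simp

noncomputable def thD (n : ℕ) : ℝ := ∑ t ∈ Finset.range 3, ∑ I ∈ Iv,
  (Chebyshev.theta ((I.2.1 : ℝ) * n / (I.1 + I.2.1 * t)) -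
    Chebyshev.theta ((I.2.2.2 : ℝ) * n / (I.2.2.1 + I.2.2.2 * t)))

lemma frac_le {a b n t : ℕ} (h : 1 ≤ a) (h2 : b ≤ 10 * a) :
    0 ≤ (b : ℝ) * n / (a + b * t) ∧ (b : ℝ) * n / (a + b * t) ≤ 10 * n := by
  constructor
  · positivity
  have h' : (1:ℝ) ≤ a := by exact_mod_cast h
  have h2' : (b:ℝ) ≤ 10 * a := by exact_mod_cast h2
  rw [div_le_iff₀ (by positivity)]
  have : (0:ℝ) ≤ n * b * t := by positivity
  have := mul_le_mul_of_nonneg_right h2' (Nat.cast_nonneg (α := ℝ) n)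
  nlinarith

lemma sav_sum_ge (n : ℕ) : thD n ≤ ∑ p ∈ Nat.primesLE (10 * n), (sav n p : ℝ) * Real.log p := by
  have e : thD n = ∑ p ∈ Nat.primesLE (10 * n), ∑ t ∈ Finset.range 3, ∑ I ∈ Iv,
      (tl ((I.2.1 : ℝ) * n / (I.1 + I.2.1 * t)) p -
      tl ((I.2.2.2 : ℝ) * n / (I.2.2.1 + I.2.2.2 * t)) p) := by
    rw [Finset.sum_comm]
    apply Finset.sum_congr rfl
    intro t _
    rw [Finset.sum_comm]
    apply Finset.sum_congr rfl
    intro I hI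
    obtain ⟨a, b, c, d, e, f⟩ := Iv_prop I hI
    rw [Finset.sum_sub_distrib, ← theta_tl (frac_le a e).1 (frac_le a e).2,
      ← theta_tl (frac_le c f).1 (frac_le c f).2]
  rw [e]
  apply Finset.sum_le_sum
  intro p hp
  have hp := (Nat.prime_of_mem_primesLE hp).pos
  rw [sav_eq, Finset.sum_mul]
  apply Finset.sum_le_sum
  intro t _
  have : (if n / p = t then ∑ I ∈ Iv, (ivl I.1 I.2.1 I.2.2.1 I.2.2.2 (n % p) p : ℝ) else 0) =
    ∑ I ∈ Iv, if n / p = t then (ivl I.1 I.2.1 I.2.2.1 I.2.2.2 (n % p) p : ℝ) else 0 := by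
    split_ifs <;> simp
  rw [this, Finset.sum_mul]
  apply Finset.sum_le_sum
  intro I hI
  obtain ⟨a, b, c, d, e, f⟩ := Iv_prop I hI
  exact ivl_ge hp a c d

lemma log_Dn_le (n : ℕ) : Real.log (Dn n) ≤ Chebyshev.theta (10 * n) + Chebyshev.theta (9 * n) - thD n
    + 2 * (Chebyshev.psi (10 * n) - Chebyshev.theta (10 * n)) := by
  have h1 : Real.log (Dn n) = ∑ p ∈ Nat.primesLE (10 * n), (Dexp n p : ℝ) * Real.log p := by
    unfold Dn
    rw [Nat.cast_prod, Real.log_prod]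
    · apply Finset.sum_congr rfl
      intro p _
      rw [Nat.cast_pow, Real.log_pow]
    · intro p hp
      have := (Nat.prime_of_mem_primesLE hp).pos
      positivity
  have h2 : Chebyshev.theta (9 * n) = ∑ p ∈ Nat.primesLE (10 * n), tl (9 * n) p :=
    theta_tl (by positivity) (by have : (0:ℝ) ≤ n := by positivity
                                 linarith)
  have h3 : Chebyshev.theta (10 * n) = ∑ p ∈ Nat.primesLE (10 * n), tl (10 * n) p :=
    theta_tl (by positivity) le_rfl
  have h4 : Chebyshev.psi (10 * n) = ∑ p ∈ Nat.primesLE (10 * n), (Nat.log p (10 * n) : ℝ) * Real.log p := by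
    have := Chebyshev.psi_eq_sum_mul_log_prime (10 * n)
    push_cast at this
    exact this
  have h5 : Real.log (Dn n) = Chebyshev.theta (10 * n) + Chebyshev.theta (9 * n)
    - ∑ p ∈ Nat.primesLE (10 * n), (sav n p : ℝ) * Real.log p
    + 2 * (Chebyshev.psi (10 * n) - Chebyshev.theta (10 * n)) := by
    rw [h1, h2, h3, h4, ← Finset.sum_add_distrib, ← Finset.sum_sub_distrib, ← Finset.sum_sub_distrib,
      Finset.mul_sum, ← Finset.sum_add_distrib]
    apply Finset.sum_congr rfl
    intro p hp
    have hpp := Nat.prime_of_mem_primesLE hp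
    have hle := (Nat.mem_primesLE.1 hp).1
    have hl : 1 ≤ Nat.log p (10 * n) := Nat.log_pos hpp.one_lt hle
    rw [Dexp, Nat.cast_add, Nat.cast_sub (sav_le hpp.pos), Nat.cast_mul, Nat.cast_sub hl]
    have : (p : ℝ) ≤ 10 * n := by exact_mod_cast hle
    unfold tl lim2
    rw [if_pos this]
    by_cases h9 : p ≤ 9 * n
    · have : (p : ℝ) ≤ 9 * n := by exact_mod_cast h9
      rw [if_pos h9, if_pos this]; push_cast; ring
    · have : ¬ (p : ℝ) ≤ 9 * n := by exact_mod_cast h9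
      rw [if_neg h9, if_neg this]; push_cast; ring
  have := sav_sum_ge n
  linarith

lemma theta_lin {c : ℝ} (hc : 0 < c) :
    Tendsto (fun n : ℕ => Chebyshev.theta (c * n) / n) atTop (𝓝 c) := by
  have h := theta_tendsto.comp (tendsto_natCast_atTop_atTop.const_mul_atTop hc : Tendsto (fun n : ℕ => c * (n : ℝ)) atTop atTop)
  have h2 := h.const_mul c
  rw [mul_one] at h2
  refine h2.congr fun n => ?_
  simp only [Function.comp]
  rcases eq_or_ne (n:ℝ) 0 with h | h
  · rw [h]; simp
  · field_simp

noncomputable def dR : ℝ := 19 - ∑ t ∈ Finset.range 3, ∑ I ∈ Iv,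
  ((I.2.1 : ℝ) / (I.1 + I.2.1 * t) - (I.2.2.2 : ℝ) / (I.2.2.1 + I.2.2.2 * t))

lemma dR_lt : dR < 8.6 := by
  unfold dR
  simp only [Finset.sum_range_succ, Finset.sum_range_zero, Iv_sum]
  norm_num

lemma logD_lim : Tendsto (fun n : ℕ => (Chebyshev.theta (10 * n) + Chebyshev.theta (9 * n) - thD n
    + 2 * (Chebyshev.psi (10 * n) - Chebyshev.theta (10 * n))) / n) atTop (𝓝 dR) := by
  have h1 := theta_lin (c := 10) (by norm_num)
  have h2 := theta_lin (c := 9) (by norm_num)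
  have h3 : Tendsto (fun n : ℕ => thD n / n) atTop (𝓝 (∑ t ∈ Finset.range 3, ∑ I ∈ Iv,
    ((I.2.1 : ℝ) / (I.1 + I.2.1 * t) - (I.2.2.2 : ℝ) / (I.2.2.1 + I.2.2.2 * t)))) := by
    unfold thD
    simp only [Finset.sum_div]
    apply tendsto_finsetSum
    intro t _
    apply tendsto_finsetSum
    intro I hI
    obtain ⟨a, b, c, d, e, f⟩ := Iv_prop I hI
    have a' : (0:ℝ) < I.1 := by exact_mod_cast a
    have b' : (0:ℝ) < I.2.1 := by exact_mod_cast b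
    have c' : (0:ℝ) < I.2.2.1 := by exact_mod_cast c
    have d' : (0:ℝ) < I.2.2.2 := by exact_mod_cast c.trans d
    have k1 := theta_lin (c := (I.2.1 : ℝ) / (I.1 + I.2.1 * t)) (by positivity)
    have k2 := theta_lin (c := (I.2.2.2 : ℝ) / (I.2.2.1 + I.2.2.2 * t)) (by positivity)
    refine (k1.sub k2).congr fun n => ?_
    rw [← sub_div]
    congr 3 <;> ring
  have h4 : Tendsto (fun n : ℕ => (Chebyshev.psi (10 * n) - Chebyshev.theta (10 * n)) / n) atTop (𝓝 0) := by
    obtain ⟨C, hC⟩ := Chebyshev.psi_sub_theta_le_mul_sqrt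
    have g : Tendsto (fun n : ℕ => C * √10 * (√(n:ℝ))⁻¹) atTop (𝓝 0) := by
      have : Tendsto (fun n : ℕ => (√(n:ℝ))⁻¹) atTop (𝓝 0) :=
        tendsto_inv_atTop_zero.comp (Real.tendsto_sqrt_atTop.comp tendsto_natCast_atTop_atTop)
      simpa using this.const_mul (C * √10)
    refine tendsto_of_tendsto_of_tendsto_of_le_of_le tendsto_const_nhds g (fun n => ?_) (fun n => ?_)
    · apply div_nonneg _ (by positivity)
      have := Chebyshev.theta_le_psi (10 * n)
      linarith
    · have := hC (10 * n)
      rw [Real.sqrt_mul (by norm_num)] at this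
      rcases Nat.eq_zero_or_pos n with rfl | hn
      · simp
      have hn' : (0:ℝ) < n := by exact_mod_cast hn
      have hs : 0 < √(n:ℝ) := Real.sqrt_pos.2 hn'
      change (_ : ℝ) / _ ≤ _
      rw [div_le_iff₀ hn']
      refine this.trans (le_of_eq ?_)
      have : (n:ℝ) = √n * √n := (Real.mul_self_sqrt hn'.le).symm
      conv_rhs => rw [this]
      field_simp
      rw [Real.sqrt_sq hs.le]
  have h := ((h1.add h2).sub h3).add (h4.const_mul 2)
  have e : (10 + 9 - (∑ t ∈ Finset.range 3, ∑ I ∈ Iv,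
    ((I.2.1 : ℝ) / (I.1 + I.2.1 * t) - (I.2.2.2 : ℝ) / (I.2.2.1 + I.2.2.2 * t)))) + 2 * 0 = dR := by
    unfold dR; ring
  rw [e] at h
  refine h.congr fun n => ?_
  ring

lemma log3_gt : 1.09 < Real.log 3 := by
  have h : Real.exp 1.09 < 3 := by
    have h1 := Real.exp_one_lt_d9
    have h2 : Real.exp 0.09 ≤ 1 + 0.09 + 0.09^2 := by
      have := Real.abs_exp_sub_one_sub_id_le (x := 0.09) (by norm_num [abs_of_pos])
      have := (abs_le.1 this).2
      linarith
    have : Real.exp 1.09 = Real.exp 1 * Real.exp 0.09 := by rw [← Real.exp_add]; norm_num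
    rw [this]
    have := Real.exp_pos 0.09
    nlinarith
  rwa [← Real.lt_log_iff_exp_lt (by norm_num)] at h

lemma Dn_bound : ∃ K > 0, ∀ n : ℕ, (Dn n : ℝ) / 3 ^ (3 * n) ≤ K * Real.exp (5.33 * n) := by
  have ev : ∀ᶠ n : ℕ in atTop, (Dn n : ℝ) / 3 ^ (3 * n) ≤ 1 * Real.exp (5.33 * n) := by
    filter_upwards [logD_lim.eventually (eventually_lt_nhds dR_lt), eventually_gt_atTop 0] with n hn h0
    have h0' : (0:ℝ) < n := by exact_mod_cast h0
    rw [div_lt_iff₀ h0'] at hn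
    have h1 := log_Dn_le n
    have hD : (0:ℝ) < Dn n := by exact_mod_cast Dn_pos n
    have h3 : (3:ℝ) ^ (3 * n) = Real.exp (3 * n * Real.log 3) := by
      rw [← Real.rpow_natCast, Real.rpow_def_of_pos (by norm_num)]
      push_cast; ring_nf
    rw [h3, div_le_iff₀ (Real.exp_pos _), one_mul, ← Real.exp_add, ← Real.log_le_iff_le_exp hD]
    have := mul_lt_mul_of_pos_left log3_gt h0'
    nlinarith
  obtain ⟨N, hN⟩ := eventually_atTop.1 ev
  refine ⟨1 + ∑ n ∈ Finset.range N, (Dn n : ℝ) / 3 ^ (3 * n), by positivity, fun n => ?_⟩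
  by_cases h : N ≤ n
  · refine (hN n h).trans ?_
    gcongr
    simp only [le_add_iff_nonneg_right]
    positivity
  · have h1 : (Dn n : ℝ) / 3 ^ (3 * n) ≤ ∑ n ∈ Finset.range N, (Dn n : ℝ) / 3 ^ (3 * n) :=
      Finset.single_le_sum (f := fun n => (Dn n : ℝ) / 3 ^ (3 * n)) (fun i _ => by positivity)
        (Finset.mem_range.2 (not_le.1 h))
    have h2 : 1 ≤ Real.exp (5.33 * n) := Real.one_le_exp (by positivity)
    have h3 : 0 ≤ ∑ n ∈ Finset.range N, (Dn n : ℝ) / 3 ^ (3 * n) := by positivity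
    nlinarith
end

section
open Polynomial Filter Topology

lemma Pc_root {a : ℕ} {k : ℤ} (h : |k| ≤ a) : (Pc a).eval (k : ℂ) = 0 := by
  induction a with
  | zero =>
    have : k = 0 := by simpa using h
    simp [Pc, this]
  | succ a ih =>
    rw [Pc, eval_mul]
    by_cases h1 : |k| ≤ a
    · rw [ih h1, zero_mul]
    · have : |k| = a + 1 := by push_cast at h; omega
      have h2 : (k : ℤ) ^ 2 = (a + 1) ^ 2 := by rw [← sq_abs, this]
      have h3 : (k : ℂ) ^ 2 = (a + 1) ^ 2 := by exact_mod_cast h2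
      simp [h3]

lemma Pc_neg (a : ℕ) : (Pc a).comp (-X) = -Pc a := by
  induction a with
  | zero => simp [Pc]
  | succ a ih => rw [Pc, mul_comp, ih]; simp

lemma Rn_neg (n : ℕ) : (Rn n).comp (-X) = Rn n := by
  simp [Rn, Wn, Pc_neg]

lemma Rn_neg1 (n : ℕ) : (derivative (Rn n)).comp (-X) = - derivative (Rn n) := by
  have := congrArg derivative (Rn_neg n)
  rw [derivative_comp] at this
  simp at this
  exact neg_eq_iff_eq_neg.1 this

lemma Rn_neg2 (n : ℕ) : (derivative (derivative (Rn n))).comp (-X) = derivative (derivative (Rn n)) := by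
  have := congrArg derivative (Rn_neg1 n)
  rw [derivative_comp] at this
  simp at this
  exact this

lemma comp_neg_eval {F : ℂ[X]} (k : ℤ) : F.eval ((-k : ℤ) : ℂ) = (F.comp (-X)).eval (k : ℂ) := by
  simp [eval_comp]

lemma Rn_van {n : ℕ} {k : ℤ} (h : |k| ≤ (3 * n : ℕ)) : (Rn n).eval (k : ℂ) = 0 ∧
    (derivative (Rn n)).eval (k : ℂ) = 0 ∧ (derivative (derivative (Rn n))).eval (k : ℂ) = 0 := by
  have r : ∀ a, |k| ≤ (a : ℕ) → ∃ q, Pc a = (X - C (k : ℂ)) * q := fun a ha =>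
    dvd_iff_isRoot.2 (Pc_root ha)
  obtain ⟨q3, h3⟩ := r (3 * n) h
  obtain ⟨q4, h4⟩ := r (4 * n) (by push_cast at *; omega)
  obtain ⟨q5, h5⟩ := r (5 * n) (by push_cast at *; omega)
  have e : Rn n = (X - C (k : ℂ)) ^ 3 * (C ((Fn n : ℂ)⁻¹) * Pc (2 * n) * q3 * q4 * q5) := by
    rw [Rn, Wn, h3, h4, h5]; ring
  rw [e]
  generalize (C ((Fn n : ℂ)⁻¹) * Pc (2 * n) * q3 * q4 * q5) = G
  refine ⟨by simp, by simp [derivative_mul, derivative_pow], by simp [derivative_mul, derivative_pow]⟩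

lemma IntV_aux {n : ℕ} (G : ℤ[X]) (h : ∀ k : ℤ, (Fn n : ℤ) ∣ Dn n * G.eval k) :
    IntV (C (Dn n : ℂ) * (C ((Fn n : ℂ)⁻¹) * G.map (Int.castRingHom ℂ))) := by
  intro k
  obtain ⟨m, hm⟩ := h k
  refine ⟨m, ?_⟩
  have e : (G.map (Int.castRingHom ℂ)).eval (k : ℂ) = (G.eval k : ℤ) := by
    have := Polynomial.eval_intCast_map (Int.castRingHom ℂ) G k
    simpa using this
  rw [eval_mul, eval_mul, eval_C, eval_C, e]
  have h0 : (Fn n : ℂ) ≠ 0 := by exact_mod_cast (Fn_pos n).ne'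
  have hm' : (Dn n : ℂ) * (G.eval k : ℤ) = Fn n * m := by exact_mod_cast hm
  field_simp
  linear_combination hm'

lemma Rn_S (n : ℕ) : ∃ a b c : ℤ,
    2 * (Dn n * Dop ht Lr (Rn n)) = Real.sqrt 13 * (3 ^ (3 * n) * a) ∧
    2 * (Dn n * Dop ht Lr (derivative (Rn n))) = 3 ^ (3 * n) * b ∧
    2 * (Dn n * Dop ht Lr (derivative (derivative (Rn n)))) = Real.sqrt 13 * (3 ^ (3 * n) * c) := by
  have e0 : Rn n = C ((Fn n : ℂ)⁻¹) * (WZ n).map (Int.castRingHom ℂ) := by rw [WZ_map, Rn]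
  have e1 : derivative (Rn n) = C ((Fn n : ℂ)⁻¹) * (derivative (WZ n)).map (Int.castRingHom ℂ) := by
    rw [← derivative_map, e0, derivative_C_mul]
  have e2 : derivative (derivative (Rn n)) =
      C ((Fn n : ℂ)⁻¹) * (derivative (derivative (WZ n))).map (Int.castRingHom ℂ) := by
    rw [← derivative_map, e1, derivative_C_mul]
  have i0 : IntV (C (Dn n : ℂ) * Rn n) := by
    rw [e0]; apply IntV_aux; intro k; rw [(WZ_derivs n k).1]; exact Fn_dvd k (by norm_num)
  have i1 : IntV (C (Dn n : ℂ) * derivative (Rn n)) := by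
    rw [e1]; apply IntV_aux; intro k; rw [(WZ_derivs n k).2.1]; exact Fn_dvd k (by norm_num)
  have i2 : IntV (C (Dn n : ℂ) * derivative (derivative (Rn n))) := by
    rw [e2]; apply IntV_aux; intro k
    rw [(WZ_derivs n k).2.2, mul_left_comm]; exact Dvd.dvd.mul_left (Fn_dvd k (by norm_num)) 2
  obtain ⟨a, ha⟩ := S_even' (m := 3 * n) i0
    (fun k => by rw [comp_neg_eval, mul_comp, C_comp, Rn_neg])
    (fun k hk => by rw [eval_mul, (Rn_van hk).1, mul_zero])
  obtain ⟨b, hb⟩ := S_odd' (m := 3 * n) i1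
    (fun k => by rw [comp_neg_eval, mul_comp, C_comp, Rn_neg1]; simp)
    (fun k hk => by rw [eval_mul, (Rn_van hk).2.1, mul_zero])
  obtain ⟨c, hc⟩ := S_even' (m := 3 * n) i2
    (fun k => by rw [comp_neg_eval, mul_comp, C_comp, Rn_neg2])
    (fun k hk => by rw [eval_mul, (Rn_van hk).2.2, mul_zero])
  rw [Dop_C_mul] at ha hb hc
  exact ⟨a, b, c, ha, hb, hc⟩
end

section
open Polynomial Filter Topology

lemma S_iter (F : ℂ[X]) (N : ℕ) : Dop ht Lr F - F.eval 0 / 2 =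
    ∑ k ∈ Finset.range N, Complex.exp Lr ^ (k + 1) * F.eval ((k + 1 : ℕ) : ℂ) +
    Complex.exp Lr ^ N * (Dop ht Lr (F.comp (X + C (N : ℂ))) - F.eval (N : ℂ) / 2) := by
  induction N with
  | zero => simp
  | succ N ih =>
    rw [ih, Finset.sum_range_succ]
    have h := S_shift (F.comp (X + C (N : ℂ)))
    have e : (F.comp (X + C (N : ℂ))).comp (X + C 1) = F.comp (X + C ((N + 1 : ℕ) : ℂ)) := by
      rw [comp_assoc]; congr 1; simp; ring
    rw [e] at h
    simp only [eval_comp, eval_add, eval_X, eval_C, zero_add] at h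
    push_cast at h ⊢
    rw [add_comm (1 : ℂ) N] at h
    linear_combination -Complex.exp Lr ^ N * h

lemma exp_Lr_lt : Real.exp Lr < 1 := by
  rw [← Real.exp_zero]; exact Real.exp_lt_exp.2 (by have := Lr_lt; linarith)

lemma zN_tendsto (j : ℕ) : Tendsto (fun N : ℕ => (N : ℂ) ^ j * Complex.exp Lr ^ N) atTop (𝓝 0) := by
  have h := tendsto_pow_const_mul_const_pow_of_lt_one j (Real.exp_pos Lr).le exp_Lr_lt
  have h2 := (Complex.continuous_ofReal.tendsto 0).comp h
  simp only [Complex.ofReal_zero] at h2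
  refine h2.congr fun N => ?_
  simp

lemma rem_tendsto (F : ℂ[X]) : Tendsto (fun N : ℕ => Complex.exp Lr ^ N *
    (Dop ht Lr (F.comp (X + C (N : ℂ))) - F.eval (N : ℂ) / 2)) atTop (𝓝 0) := by
  induction F using Polynomial.induction_on' with
  | add p q hp hq =>
    have := hp.add hq
    rw [add_zero] at this
    refine this.congr fun N => ?_
    simp only [add_comp, map_add, eval_add]
    ring
  | monomial i a =>
    have h1 : Tendsto (fun N : ℕ => ∑ m ∈ Finset.range (i + 1),
        (a * (i.choose m) * Dop ht Lr (X ^ m)) * ((N : ℂ) ^ (i - m) * Complex.exp Lr ^ N)) atTop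
        (𝓝 (∑ m ∈ Finset.range (i + 1), (a * (i.choose m) * Dop ht Lr (X ^ m)) * 0)) :=
      tendsto_finsetSum _ fun m _ => (zN_tendsto (i - m)).const_mul _
    have h2 := (zN_tendsto i).const_mul (a / 2)
    have h3 := h1.sub h2
    simp only [mul_zero, Finset.sum_const_zero, sub_zero] at h3
    refine h3.congr fun N => ?_
    rw [← C_mul_X_pow_eq_monomial]
    simp only [mul_comp, C_comp, pow_comp, X_comp, Dop_C_mul, eval_mul, eval_C, eval_pow, eval_X]
    rw [add_pow, map_sum, mul_sub, Finset.mul_sum, Finset.mul_sum]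
    congr 1
    · apply Finset.sum_congr rfl
      intro m _
      have : (X ^ m * C (N : ℂ) ^ (i - m) * ((i.choose m : ℕ) : ℂ[X])) =
          C ((N : ℂ) ^ (i - m) * (i.choose m : ℕ)) * X ^ m := by
        simp; ring
      rw [this, Dop_C_mul]
      ring
    · ring

/-- values of `Pc` -/
noncomputable def pr : ℕ → ℕ → ℝ
  | 0, k => k
  | (a + 1), k => pr a k * ((k : ℝ) ^ 2 - ((a : ℝ) + 1) ^ 2)

lemma pr_eval (a k : ℕ) : (Pc a).eval (k : ℂ) = (pr a k : ℝ) := by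
  induction a with
  | zero => simp [Pc, pr]
  | succ a ih => rw [Pc, eval_mul, ih, pr]; simp

lemma pr_zero {a k : ℕ} (h : k ≤ a) : pr a k = 0 := by
  have := Pc_root (a := a) (k := (k : ℤ)) (by simpa using h)
  have h2 := pr_eval a k
  push_cast at this
  rw [this] at h2
  exact_mod_cast h2.symm

lemma pr_nonneg (a k : ℕ) : 0 ≤ pr a k := by
  induction a with
  | zero => simp [pr]
  | succ a ih =>
    rcases le_or_gt k a with h | h
    · rw [pr_zero (by omega)]
    · rw [pr]
      apply mul_nonneg ih
      have : ((a : ℝ) + 1) ≤ k := by exact_mod_cast h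
      have : (0:ℝ) ≤ a := by positivity
      nlinarith

lemma pr_succ (a k : ℕ) : pr (a + 1) k ≤ pr a k * (k : ℝ) ^ 2 := by
  rw [pr]
  apply mul_le_mul_of_nonneg_left _ (pr_nonneg a k)
  nlinarith [sq_nonneg ((a : ℝ) + 1)]

lemma pr_add (a m k : ℕ) : pr (a + m) k ≤ pr a k * (k : ℝ) ^ (2 * m) := by
  induction m with
  | zero => simp
  | succ m ih =>
    refine (pr_succ (a + m) k).trans ?_
    refine (mul_le_mul_of_nonneg_right ih (by positivity)).trans (le_of_eq ?_)
    ring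

/-- normalised values -/
noncomputable def pn (a k : ℕ) : ℝ := pr a k / (2 * a).factorial

lemma pn_nonneg (a k : ℕ) : 0 ≤ pn a k := div_nonneg (pr_nonneg a k) (by positivity)

lemma pn_add (a m k M : ℕ) (h : k ≤ M * (2 * a + 1)) : pn (a + m) k ≤ pn a k * (M : ℝ) ^ (2 * m) := by
  unfold pn
  have h1 := pr_add a m k
  have h2 : ((2 * a).factorial : ℝ) * (2 * a + 1) ^ (2 * m) ≤ (2 * (a + m)).factorial := by
    have := Nat.factorial_mul_pow_le_factorial (m := 2 * a) (n := 2 * m)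
    rw [show 2 * a + 2 * m = 2 * (a + m) by ring] at this
    exact_mod_cast this
  have h3 : (k : ℝ) ^ (2 * m) ≤ (M * (2 * a + 1)) ^ (2 * m) := by
    gcongr
    exact_mod_cast h
  have hp := pr_nonneg a k
  rw [div_le_iff₀ (by positivity)]
  calc pr (a + m) k ≤ pr a k * (M * (2 * a + 1)) ^ (2 * m) :=
        h1.trans (mul_le_mul_of_nonneg_left h3 hp)
    _ = pr a k / (2 * a).factorial * M ^ (2 * m) * ((2 * a).factorial * (2 * a + 1) ^ (2 * m)) := by
        have : ((2 * a).factorial : ℝ) ≠ 0 := by positivity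
        rw [mul_pow]
        field_simp
    _ ≤ _ := by gcongr

lemma pn_le (a k : ℕ) : pn a k ≤ k * (10 ^ (2 * a) * Real.exp (0.1 * k)) := by
  have h := pr_add 0 a k
  rw [zero_add, pr] at h
  unfold pn
  have h2 := Real.pow_div_factorial_le_exp (0.1 * k) (by positivity) (2 * a)
  have h3 : (k:ℝ) ^ (2 * a) / (2 * a).factorial = 10 ^ (2 * a) * ((0.1 * k) ^ (2 * a) / (2 * a).factorial) := by
    rw [← mul_div_assoc, ← mul_pow]; congr 2; ring
  calc _ ≤ (k * (k:ℝ) ^ (2 * a)) / (2 * a).factorial := by gcongr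
    _ = k * (10 ^ (2 * a) * ((0.1 * k) ^ (2 * a) / (2 * a).factorial)) := by rw [← h3]; ring
    _ ≤ _ := by gcongr

lemma pn_one {a : ℕ} : ∀ k, a < k → 1 ≤ pn a k := by
  have h : ∀ a k : ℕ, a < k → ((2 * a).factorial : ℝ) ≤ pr a k ∧ True := by
    intro a k hk
    refine ⟨?_, trivial⟩
    -- integer valued and divisible; use monotonicity in `k`
    have key : ∀ b : ℕ, b ≤ a → ((a + b).factorial : ℝ) ≤ pr b k * (a - b).factorial := by
      intro b hb
      induction b with
      | zero =>
        simp only [pr, add_zero, Nat.sub_zero]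
        have : (1:ℝ) ≤ k := by exact_mod_cast (by omega : 1 ≤ k)
        nlinarith [Nat.cast_nonneg (α := ℝ) a.factorial]
      | succ b ih =>
        have ih := ih (by omega)
        rw [pr, ← add_assoc, Nat.factorial_succ]
        have e : a - b = (a - (b + 1)) + 1 := by omega
        rw [e, Nat.factorial_succ] at ih
        have e2 : ((a - (b + 1) + 1 : ℕ) : ℝ) = a - b := by
          rw [← e, Nat.cast_sub (by omega)]
        push_cast at ih ⊢
        push_cast at e2
        rw [e2] at ih
        have hka : (a:ℝ) + 1 ≤ k := by exact_mod_cast hk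
        have hb' : (b:ℝ) + 1 ≤ a := by exact_mod_cast hb
        have hb0 : (0:ℝ) ≤ b := by positivity
        have hk2 : (a + b + 1 : ℝ) * (a - b) ≤ (k:ℝ) ^ 2 - (b + 1) ^ 2 := by nlinarith
        have hp := pr_nonneg b k
        have hf : (0:ℝ) ≤ (a - (b + 1)).factorial := by positivity
        calc ((a + b + 1 : ℝ) * (a + b).factorial) ≤ (a + b + 1 : ℝ) * (pr b k * ((a - b) * (a - (b + 1)).factorial)) := by
              gcongr
          _ = (pr b k * (a - (b + 1)).factorial) * ((a + b + 1 : ℝ) * (a - b)) := by ring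
          _ ≤ (pr b k * (a - (b + 1)).factorial) * ((k:ℝ) ^ 2 - (b + 1) ^ 2) := by gcongr
          _ = _ := by ring
    have := key a le_rfl
    simpa [two_mul] using this
  intro k hk
  unfold pn
  rw [le_div_iff₀ (by positivity), one_mul]
  exact (h a k hk).1

noncomputable def rr (n k : ℕ) : ℝ := pn (2 * n) k * (pn (3 * n) k * (pn (4 * n) k * pn (5 * n) k))

lemma rr_eval (n k : ℕ) : (Rn n).eval (k : ℂ) = (rr n k : ℝ) := by
  rw [Rn, Wn]
  simp only [eval_mul, eval_C, pr_eval, rr, pn, Fn]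
  push_cast
  field_simp

lemma rr_nonneg (n k : ℕ) : 0 ≤ rr n k := by
  have := pn_nonneg (2 * n) k
  have := pn_nonneg (3 * n) k
  have := pn_nonneg (4 * n) k
  have := pn_nonneg (5 * n) k
  unfold rr; positivity

noncomputable def qn (n : ℕ) : ℝ := ∑' k : ℕ, rr n (k + 1) * Real.exp Lr ^ (k + 1)

lemma qn_spec (n : ℕ) : Dop ht Lr (Rn n) = (qn n : ℝ) ∧
    HasSum (fun k : ℕ => rr n (k + 1) * Real.exp Lr ^ (k + 1)) (qn n) := by
  have h0 : (Rn n).eval 0 = 0 := by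
    have := (Rn_van (n := n) (k := 0) (by simp)).1
    simpa using this
  have h1 : Tendsto (fun N : ℕ => ((∑ k ∈ Finset.range N, rr n (k + 1) * Real.exp Lr ^ (k + 1) : ℝ) : ℂ))
      atTop (𝓝 (Dop ht Lr (Rn n))) := by
    have h := (tendsto_const_nhds (x := Dop ht Lr (Rn n))).sub (rem_tendsto (Rn n))
    rw [sub_zero] at h
    refine h.congr fun N => ?_
    have := S_iter (Rn n) N
    rw [h0, zero_div, sub_zero] at this
    rw [this, add_sub_cancel_right]
    push_cast
    apply Finset.sum_congr rfl
    intro k _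
    have e := rr_eval n (k + 1)
    push_cast at e
    rw [e]; ring
  have h2 := (Complex.continuous_re.tendsto _).comp h1
  simp only [Function.comp_def, Complex.ofReal_re] at h2
  have h3 : HasSum (fun k : ℕ => rr n (k + 1) * Real.exp Lr ^ (k + 1)) (Dop ht Lr (Rn n)).re := by
    rw [hasSum_iff_tendsto_nat_of_nonneg]
    · exact h2
    · intro k
      have := rr_nonneg n (k + 1)
      positivity
  have h4 : qn n = (Dop ht Lr (Rn n)).re := h3.tsum_eq
  refine ⟨?_, by rw [h4]; exact h3⟩
  rw [h4]
  exact tendsto_nhds_unique h1 ((Complex.continuous_ofReal.tendsto _).comp h2)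
end

section
open Polynomial Filter Topology

lemma Lr_gt : -2 < Lr := by
  by_contra h
  push Not at h
  have h1 := Real.exp_le_exp.2 h
  rw [exp_Lr] at h1
  have h2 : Real.exp (-2) ≤ 1 / 3 := by
    rw [Real.exp_neg, ← one_div]
    apply one_div_le_one_div_of_le (by norm_num)
    have := Real.add_one_le_exp 2
    linarith
  have := s13_hi
  linarith

lemma qn_lower (n : ℕ) : Real.exp (-(10 * (n + 1))) ≤ qn n := by
  have h := (qn_spec n).2
  have h1 := h.summable.sum_le_tsum {5 * n} (fun k _ => by
    have := rr_nonneg n (k + 1)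
    positivity)
  rw [h.tsum_eq, Finset.sum_singleton] at h1
  refine le_trans ?_ h1
  have p2 := pn_one (a := 2 * n) (5 * n + 1) (by omega)
  have p3 := pn_one (a := 3 * n) (5 * n + 1) (by omega)
  have p4 := pn_one (a := 4 * n) (5 * n + 1) (by omega)
  have p5 := pn_one (a := 5 * n) (5 * n + 1) (by omega)
  have h2 : 1 ≤ rr n (5 * n + 1) := by
    unfold rr
    exact one_le_mul_of_one_le_of_one_le p2 (one_le_mul_of_one_le_of_one_le p3
      (one_le_mul_of_one_le_of_one_le p4 p5))
  have h3 : Real.exp (-(10 * (n + 1))) ≤ Real.exp Lr ^ (5 * n + 1) := by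
    rw [← Real.exp_nat_mul]
    apply Real.exp_le_exp.2
    push_cast
    have := Lr_gt
    have : (0:ℝ) ≤ n := by positivity
    nlinarith
  have h4 : 0 < Real.exp Lr ^ (5 * n + 1) := by positivity
  nlinarith

lemma qn_pos (n : ℕ) : 0 < qn n := (Real.exp_pos _).trans_le (qn_lower n)

lemma rr_tail (n k : ℕ) : ∃ K : ℝ, K = 24 * (1 / 0.06) ^ 4 ∧ rr n k * Real.exp Lr ^ k ≤
    K * (Real.exp (70 * n) * Real.exp (-0.1 * k)) := by
  refine ⟨_, rfl, ?_⟩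
  have h2 := pn_le (2 * n) k
  have h3 := pn_le (3 * n) k
  have h4 := pn_le (4 * n) k
  have h5 := pn_le (5 * n) k
  have z2 := pn_nonneg (2 * n) k
  have z3 := pn_nonneg (3 * n) k
  have z4 := pn_nonneg (4 * n) k
  have z5 := pn_nonneg (5 * n) k
  have h : rr n k ≤ (k * (10 ^ (2 * (2 * n)) * Real.exp (0.1 * k))) *
    ((k * (10 ^ (2 * (3 * n)) * Real.exp (0.1 * k))) * ((k * (10 ^ (2 * (4 * n)) * Real.exp (0.1 * k))) *
    (k * (10 ^ (2 * (5 * n)) * Real.exp (0.1 * k))))) := by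
    unfold rr
    gcongr
  have e : (k * (10 ^ (2 * (2 * n)) * Real.exp (0.1 * k))) *
    ((k * (10 ^ (2 * (3 * n)) * Real.exp (0.1 * k))) * ((k * (10 ^ (2 * (4 * n)) * Real.exp (0.1 * k))) *
    (k * (10 ^ (2 * (5 * n)) * Real.exp (0.1 * k))))) = (k:ℝ) ^ 4 * (10 ^ (28 * n) * Real.exp (0.4 * k)) := by
    have : Real.exp (0.4 * k) = Real.exp (0.1 * k) ^ 4 := by
      rw [← Real.exp_nat_mul]; congr 1; push_cast; ring
    rw [this]; ring
  rw [e] at h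
  have hk : (k:ℝ) ^ 4 ≤ 24 * (1 / 0.06) ^ 4 * Real.exp (0.06 * k) := by
    have := Real.pow_div_factorial_le_exp (0.06 * k) (by positivity) 4
    rw [div_le_iff₀ (by positivity)] at this
    norm_num [Nat.factorial] at this ⊢
    nlinarith
  have h10 : (10:ℝ) ^ (28 * n) ≤ Real.exp (70 * n) := by
    have : (10:ℝ) ≤ Real.exp 2.5 := by
      have h1 := Real.exp_one_gt_d9
      have e : Real.exp 2.5 = Real.exp 1 ^ 2 * Real.exp 0.5 := by
        rw [← Real.exp_nat_mul, ← Real.exp_add]; norm_num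
      rw [e]
      have := Real.add_one_le_exp (0.5 : ℝ)
      have h7 : 7 ≤ Real.exp 1 ^ 2 := by nlinarith
      nlinarith
    calc (10:ℝ) ^ (28 * n) ≤ Real.exp 2.5 ^ (28 * n) := by gcongr
      _ = _ := by rw [← Real.exp_nat_mul]; congr 1; push_cast; ring
  have hL : Real.exp Lr ^ k ≤ Real.exp (-0.5695 * k) := by
    rw [← Real.exp_nat_mul]
    apply Real.exp_le_exp.2
    have := Lr_lt
    have : (0:ℝ) ≤ k := by positivity
    nlinarith
  calc rr n k * Real.exp Lr ^ k ≤ ((24 * (1 / 0.06) ^ 4 * Real.exp (0.06 * k)) *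
        (Real.exp (70 * n) * Real.exp (0.4 * k))) * Real.exp (-0.5695 * k) := by
        gcongr
        refine h.trans ?_
        gcongr
    _ = 24 * (1 / 0.06) ^ 4 * (Real.exp (70 * n) * (Real.exp (0.06 * k) * Real.exp (0.4 * k) * Real.exp (-0.5695 * k))) := by
        ring
    _ ≤ _ := by
        rw [← Real.exp_add, ← Real.exp_add]
        gcongr
        have : (0:ℝ) ≤ k := by positivity
        linarith

lemma rr_small {n k : ℕ} (h : k ≤ 1000 * (n + 1)) : rr (n + 1) k ≤ 1000 ^ 28 * rr n k := by
  rcases Nat.eq_zero_or_pos n with rfl | hn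
  · have p : ∀ m, pn (0 + m) k ≤ pn 0 k * ((1000 : ℕ) : ℝ) ^ (2 * m) := fun m => pn_add 0 m k 1000 (by omega)
    have z := fun m => pn_nonneg m k
    unfold rr
    have p2 := p 2; have p3 := p 3; have p4 := p 4; have p5 := p 5
    simp only [zero_add, mul_one, mul_zero] at *
    calc _ ≤ (pn 0 k * ((1000 : ℕ) : ℝ) ^ (2 * 2)) * ((pn 0 k * ((1000 : ℕ) : ℝ) ^ (2 * 3)) *
        ((pn 0 k * ((1000 : ℕ) : ℝ) ^ (2 * 4)) * (pn 0 k * ((1000 : ℕ) : ℝ) ^ (2 * 5)))) := by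
          have := z 0; have := z 2; have := z 3; have := z 4; have := z 5
          gcongr
      _ = _ := by push_cast; ring
  have p2 := pn_add (2 * n) 2 k 1000 (by omega)
  have p3 := pn_add (3 * n) 3 k 1000 (by omega)
  have p4 := pn_add (4 * n) 4 k 1000 (by omega)
  have p5 := pn_add (5 * n) 5 k 1000 (by omega)
  have z := fun m => pn_nonneg m k
  unfold rr
  calc _ ≤ (pn (2 * n) k * ((1000 : ℕ) : ℝ) ^ (2 * 2)) * ((pn (3 * n) k * ((1000 : ℕ) : ℝ) ^ (2 * 3)) *
        ((pn (4 * n) k * ((1000 : ℕ) : ℝ) ^ (2 * 4)) * (pn (5 * n) k * ((1000 : ℕ) : ℝ) ^ (2 * 5)))) := by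
          have := z (2 * n); have := z (3 * n); have := z (4 * n); have := z (5 * n)
          have := z (2 * (n + 1)); have := z (3 * (n + 1)); have := z (4 * (n + 1)); have := z (5 * (n + 1))
          rw [← mul_add_one] at p2 p3 p4 p5
          gcongr
      _ = _ := by push_cast; ring

lemma qn_reg : ∃ K > 0, ∀ n, qn (n + 1) ≤ K * qn n := by
  have hsum : Summable (fun k : ℕ => Real.exp (-0.01 * (k + 1 : ℕ))) := by
    have : Summable (fun k : ℕ => Real.exp (-0.01) ^ (k + 1)) :=
      (summable_nat_add_iff 1).2 (summable_geometric_of_lt_one (Real.exp_pos _).le (by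
        rw [← Real.exp_zero]; exact Real.exp_lt_exp.2 (by norm_num)))
    refine this.congr fun k => ?_
    rw [← Real.exp_nat_mul]; congr 1; ring
  set T := ∑' k : ℕ, Real.exp (-0.01 * (k + 1 : ℕ)) with hT
  have hT0 : 0 ≤ T := tsum_nonneg fun k => (Real.exp_pos _).le
  set K0 : ℝ := 24 * (1 / 0.06) ^ 4 with hK0
  have hK : 0 < K0 := by rw [hK0]; norm_num
  refine ⟨1000 ^ 28 + K0 * T, by positivity, fun n => ?_⟩
  have h1 := (qn_spec (n + 1)).2
  have h2 := ((qn_spec n).2.mul_left (1000 ^ 28)).add (hsum.hasSum.mul_left (K0 * qn n))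
  rw [← hT] at h2
  refine (hasSum_le (fun k => ?_) h1 h2).trans (le_of_eq (by ring))
  have hq := qn_pos n
  have hr := rr_nonneg n (k + 1)
  rcases le_or_gt (k + 1) (1000 * (n + 1)) with h | h
  · have := rr_small h
    have e := mul_le_mul_of_nonneg_right this (pow_pos (Real.exp_pos Lr) (k + 1)).le
    have : 0 ≤ K0 * qn n * Real.exp (-0.01 * (k + 1 : ℕ)) := by positivity
    linarith
  · obtain ⟨K, hKe, hKt⟩ := rr_tail (n + 1) (k + 1)
    rw [← hK0] at hKe
    subst hKe
    have : 0 ≤ 1000 ^ 28 * (rr n (k + 1) * Real.exp Lr ^ (k + 1)) := by positivity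
    have h3 : Real.exp (70 * (n + 1 : ℕ)) * Real.exp (-0.1 * (k + 1 : ℕ)) ≤
        Real.exp (-(10 * (n + 1))) * Real.exp (-0.01 * (k + 1 : ℕ)) := by
      rw [← Real.exp_add, ← Real.exp_add]
      apply Real.exp_le_exp.2
      have : (1000:ℝ) * (n + 1) ≤ (k + 1 : ℕ) := by exact_mod_cast h.le
      push_cast at *
      linarith
    have h4 : Real.exp (-(10 * (n + 1))) * Real.exp (-0.01 * (k + 1 : ℕ)) ≤ qn n * Real.exp (-0.01 * (k + 1 : ℕ)) :=
      mul_le_mul_of_nonneg_right (qn_lower n) (Real.exp_pos _).le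
    have := mul_le_mul_of_nonneg_left (h3.trans h4) hK.le
    linarith
end

section
open Polynomial Filter Topology

/-- the number -/
noncomputable def al : ℝ := Real.sqrt 13 * Lr

noncomputable def tn (n : ℕ) : ℝ := 3 ^ (3 * n) / (2 * Dn n)

lemma tn_pos (n : ℕ) : 0 < tn n := by
  have : (0:ℝ) < Dn n := by exact_mod_cast Dn_pos n
  unfold tn; positivity

lemma tn_bound : ∃ K > 0, ∀ n : ℕ, 1 ≤ tn n * (K * Real.exp (5.33 * n)) := by
  obtain ⟨K, hK, h⟩ := Dn_bound
  refine ⟨2 * K, by positivity, fun n => ?_⟩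
  have hD : (0:ℝ) < Dn n := by exact_mod_cast Dn_pos n
  have := h n
  rw [div_le_iff₀ (by positivity)] at this
  unfold tn
  rw [div_mul_eq_mul_div, le_div_iff₀ (by positivity)]
  linarith

lemma forms : ∃ K > 0, ∀ n : ℕ, ∃ a b c : ℤ, qn n = Real.sqrt 13 * tn n * a ∧
    tn n * |al * a + b| ≤ K * Real.exp (-10.5 * n) ∧
    tn n * |al ^ 2 * a + 2 * al * b + 13 * c| ≤ K * Real.exp (-10.5 * n) := by
  obtain ⟨K1, hK1, h1⟩ := E_bound g1_diff
  obtain ⟨K2, hK2, h2⟩ := E_bound g2_diff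
  refine ⟨K1 + 4 * K2, by positivity, fun n => ?_⟩
  obtain ⟨a, b, c, ha, hb, hc⟩ := Rn_S n
  refine ⟨a, b, c, ?_, ?_, ?_⟩
  all_goals
    have hD0 : (Dn n : ℂ) ≠ 0 := by exact_mod_cast (Dn_pos n).ne'
    have htn : (tn n : ℂ) = 3 ^ (3 * n) / (2 * Dn n) := by unfold tn; push_cast; rfl
    have ha' : Dop ht Lr (Rn n) = Real.sqrt 13 * tn n * a := by
      rw [htn]; field_simp; linear_combination ha
    have hb' : Dop ht Lr (derivative (Rn n)) = tn n * b := by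
      rw [htn]; field_simp; linear_combination hb
    have hc' : Dop ht Lr (derivative (derivative (Rn n))) = Real.sqrt 13 * tn n * c := by
      rw [htn]; field_simp; linear_combination hc
  · rw [(qn_spec n).1] at ha'
    exact_mod_cast ha'
  · have e := Dop_g1 (Rn n)
    rw [ha', hb'] at e
    have e' : Dop g1 Lr (Rn n) = ((tn n * (al * a + b) : ℝ) : ℂ) := by
      rw [e, al]; push_cast; ring
    have := h1 n
    rw [e', Complex.norm_real, Real.norm_eq_abs, abs_mul, abs_of_pos (tn_pos n)] at this
    refine this.trans ?_
    gcongr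
    linarith
  · have e := Dop_g2 (Rn n)
    rw [ha', hb', hc'] at e
    have e' : Real.sqrt 13 * Dop g2 Lr (Rn n) = ((tn n * (al ^ 2 * a + 2 * al * b + 13 * c) : ℝ) : ℂ) := by
      rw [e, al]; push_cast
      linear_combination (tn n * c) * c13_sq
    have h := h2 n
    have h3 := congrArg norm e'
    rw [norm_mul, Complex.norm_real, Complex.norm_real, Real.norm_eq_abs, Real.norm_eq_abs, abs_mul (tn n), abs_of_pos (tn_pos n)] at h3
    rw [← h3]
    have : |Real.sqrt 13| ≤ 4 := by
      rw [abs_of_nonneg (Real.sqrt_nonneg _)]; linarith [s13_hi]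
    calc _ ≤ 4 * (K2 * Real.exp (-10.5 * n)) := by gcongr
      _ = (4 * K2) * Real.exp (-10.5 * n) := by ring
      _ ≤ _ := by gcongr; linarith

lemma qn_upper : ∃ K > 0, ∀ n : ℕ, qn n ≤ K * Real.exp (53.2 * n) := by
  obtain ⟨K, hK, h⟩ := Q_bound
  refine ⟨K, hK, fun n => ?_⟩
  have := h n
  rw [(qn_spec n).1, Complex.norm_real, Real.norm_eq_abs, abs_of_pos (qn_pos n)] at this
  exact this

/-- For each quadratic polynomial with small coefficients and each large `n`, a dichotomy. -/
lemma dicho : ∃ K1 > 0, ∃ K2 > 0, ∃ K3 > 0, ∀ (A B C : ℤ) (H : ℝ), 1 ≤ H → |(A : ℝ)| ≤ H → |(B : ℝ)| ≤ H →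
    ∀ n : ℕ, K1 * H ≤ Real.exp (5.17 * n) →
    (qn n * |A * al ^ 2 + B * al + C| ≤ K2 * H * Real.exp (-10.5 * n)) ∨
    (K3 * Real.exp (-5.33 * n) ≤ qn n * |A * al ^ 2 + B * al + C|) := by
  obtain ⟨K, hK, hf⟩ := forms
  obtain ⟨L, hL, ht⟩ := tn_bound
  set M : ℝ := (2 * |al| + 2) * K with hM
  have hM0 : 0 < M := by positivity
  have hs := Real.sqrt_pos.2 (show (0:ℝ) < 13 by norm_num)
  refine ⟨2 * M * L, by positivity, Real.sqrt 13 * M, by positivity, Real.sqrt 13 / (2 * L), by positivity,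
    fun A B C H hH hA hB n hn => ?_⟩
  obtain ⟨a, b, c, hq, h1, h2⟩ := hf n
  set e1 := al * a + b with he1
  set e2 := al ^ 2 * a + 2 * al * b + 13 * c with he2
  set ε := A * (2 * al * e1 - e2) + B * e1 with hε
  set t := tn n with htn
  have t0 : 0 < t := tn_pos n
  have key : (a : ℝ) * (A * al ^ 2 + B * al + C) = ((13 * c * A - b * B + a * C : ℤ) : ℝ) + ε := by
    push_cast
    rw [hε, he1, he2]; ring
  have hεb : t * |ε| ≤ H * M * Real.exp (-10.5 * n) := by
    have i1 : |ε| ≤ H * (2 * |al| * |e1| + |e2|) + H * |e1| := by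
      calc |ε| ≤ |A * (2 * al * e1 - e2)| + |B * e1| := abs_add_le _ _
        _ = |(A:ℝ)| * |2 * al * e1 - e2| + |(B:ℝ)| * |e1| := by rw [abs_mul, abs_mul]
        _ ≤ H * (2 * |al| * |e1| + |e2|) + H * |e1| := by
          gcongr
          refine (abs_sub _ _).trans (le_of_eq ?_)
          rw [abs_mul, abs_mul, abs_two]
    calc t * |ε| ≤ t * (H * (2 * |al| * |e1| + |e2|) + H * |e1|) := by gcongr
      _ = H * ((2 * |al| + 1) * (t * |e1|) + t * |e2|) := by ring
      _ ≤ H * ((2 * |al| + 1) * (K * Real.exp (-10.5 * n)) + (K * Real.exp (-10.5 * n))) := by gcongr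
      _ = _ := by rw [hM]; ring
  have hqp : qn n * |A * al ^ 2 + B * al + C| = Real.sqrt 13 * (t * |(a : ℝ) * (A * al ^ 2 + B * al + C)|) := by
    have ha0 : (0:ℝ) < a := by
      have := qn_pos n
      rw [hq] at this
      exact pos_of_mul_pos_right this (by positivity)
    rw [hq, abs_mul, abs_of_pos ha0]; ring
  rw [hqp, key]
  by_cases hN : 13 * c * A - b * B + a * C = 0
  · left
    rw [hN, Int.cast_zero, zero_add]
    calc _ ≤ Real.sqrt 13 * (H * M * Real.exp (-10.5 * n)) := by gcongr
      _ = _ := by ring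
  · right
    have hN1 : (1:ℝ) ≤ |((13 * c * A - b * B + a * C : ℤ) : ℝ)| := by
      exact_mod_cast Int.one_le_abs hN
    have hεs : |ε| ≤ 1 / 2 := by
      have i1 := ht n
      have ex : Real.exp (-10.5 * n) * Real.exp (5.33 * n) * Real.exp (5.17 * n) = 1 := by
        rw [← Real.exp_add, ← Real.exp_add, ← Real.exp_zero]; congr 1; ring
      have i2 : |ε| ≤ H * M * L * (Real.exp (-10.5 * n) * Real.exp (5.33 * n)) := by
        calc |ε| = |ε| * 1 := (mul_one _).symm
          _ ≤ |ε| * (t * (L * Real.exp (5.33 * n))) := by gcongr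
          _ = (t * |ε|) * (L * Real.exp (5.33 * n)) := by ring
          _ ≤ (H * M * Real.exp (-10.5 * n)) * (L * Real.exp (5.33 * n)) := by gcongr
          _ = _ := by ring
      have i3 := mul_le_mul_of_nonneg_right hn (show 0 ≤ Real.exp (-10.5 * n) * Real.exp (5.33 * n) by positivity)
      nlinarith
    have i4 : 1 / 2 ≤ |((13 * c * A - b * B + a * C : ℤ) : ℝ) + ε| := by
      have := abs_sub_abs_le_abs_sub (((13 * c * A - b * B + a * C : ℤ) : ℝ)) (-ε)
      rw [abs_neg, sub_neg_eq_add] at this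
      linarith
    have i5 : Real.exp (-5.33 * n) / L ≤ t := by
      rw [div_le_iff₀ hL]
      have i1 := ht n
      have ex : Real.exp (5.33 * n) * Real.exp (-5.33 * n) = 1 := by
        rw [← Real.exp_add, ← Real.exp_zero]; congr 1; ring
      have := mul_le_mul_of_nonneg_right i1 (Real.exp_pos (-5.33 * n)).le
      rw [one_mul] at this
      refine this.trans (le_of_eq ?_)
      rw [← htn]
      linear_combination t * L * ex
    calc _ = Real.sqrt 13 * (Real.exp (-5.33 * n) / L * (1 / 2)) := by field_simp
      _ ≤ _ := by gcongr

lemma lower_bound : ∃ c > 0, ∀ (A B C : ℤ) (H : ℝ), 1 ≤ H → |(A : ℝ)| ≤ H → |(B : ℝ)| ≤ H →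
    A * al ^ 2 + B * al + C ≠ 0 → c * H ^ (-11.33 : ℝ) ≤ |A * al ^ 2 + B * al + C| := by
  obtain ⟨K1, hK1, K2, hK2, K3, hK3, hd⟩ := dicho
  obtain ⟨R, hR, hreg⟩ := qn_reg
  obtain ⟨Q, hQ, hup⟩ := qn_upper
  set G : ℝ := K1 * Real.exp 5.17 + Real.exp 5.17 + R * K2 * Real.exp 10.5 / K3 with hG
  have hG1 : 1 ≤ G := by
    have : 1 ≤ Real.exp 5.17 := Real.one_le_exp (by norm_num)
    have : 0 ≤ K1 * Real.exp 5.17 + R * K2 * Real.exp 10.5 / K3 := by positivity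
    linarith
  refine ⟨K3 / Q * G ^ (-11.33 : ℝ), by positivity, fun A B C H hH hA hB h0 => ?_⟩
  set p := |A * al ^ 2 + B * al + C| with hp
  have hp0 : 0 < p := abs_pos.2 h0
  have hd := hd A B C H hH hA hB
  -- it suffices to find a good `n`
  suffices ∃ n : ℕ, Real.exp (5.17 * n) ≤ G * H ∧ K3 * Real.exp (-5.33 * n) ≤ qn n * p by
    obtain ⟨n, hn1, hn2⟩ := this
    have i1 : K3 * Real.exp (-5.33 * n) ≤ Q * Real.exp (53.2 * n) * p :=
      hn2.trans (mul_le_mul_of_nonneg_right (hup n) hp0.le)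
    have ex : Real.exp (-5.33 * n) = Real.exp (53.2 * n) * Real.exp (-58.53 * n) := by
      rw [← Real.exp_add]; congr 1; ring
    have i2 : K3 / Q * Real.exp (-58.53 * n) ≤ p := by
      rw [ex] at i1
      rw [div_mul_eq_mul_div, div_le_iff₀ hQ]
      have hx := Real.exp_pos (53.2 * n)
      refine le_of_mul_le_mul_left ?_ hx
      linarith
    refine le_trans ?_ i2
    rw [mul_assoc]
    gcongr
    rw [← Real.mul_rpow (by positivity) (by positivity)]
    calc (G * H) ^ (-11.33 : ℝ) ≤ Real.exp (5.17 * n) ^ (-11.33 : ℝ) :=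
          Real.rpow_le_rpow_of_nonpos (Real.exp_pos _) hn1 (by norm_num)
      _ = Real.exp (5.17 * n * (-11.33)) := by rw [← Real.exp_mul]
      _ ≤ _ := by
        apply Real.exp_le_exp.2
        have : (0:ℝ) ≤ n := by positivity
        linarith
  classical
  -- `n0`
  have ex0 : ∃ n : ℕ, K1 * H ≤ Real.exp (5.17 * n) := by
    have : Tendsto (fun n : ℕ => Real.exp (5.17 * n)) atTop atTop :=
      Real.tendsto_exp_atTop.comp (tendsto_natCast_atTop_atTop.const_mul_atTop (by norm_num))
    exact (this.eventually_ge_atTop (K1 * H)).exists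
  set n0 := Nat.find ex0 with hn0
  have hn0s := Nat.find_spec ex0
  rw [← hn0] at hn0s
  have hn0u : Real.exp (5.17 * n0) ≤ G * H := by
    rcases Nat.eq_zero_or_pos n0 with h | h
    · rw [h]; simp; nlinarith
    · have := Nat.find_min ex0 (m := n0 - 1) (by omega)
      rw [not_le] at this
      have e : Real.exp (5.17 * n0) = Real.exp 5.17 * Real.exp (5.17 * (n0 - 1 : ℕ)) := by
        rw [← Real.exp_add, Nat.cast_sub h]; congr 1; push_cast; ring
      rw [e]
      have h2 := mul_le_mul_of_nonneg_left this.le (Real.exp_pos 5.17).le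
      have h3 : 0 ≤ (Real.exp 5.17 + R * K2 * Real.exp 10.5 / K3) * H := by positivity
      rw [hG]
      linarith
  have hge : ∀ n, n0 ≤ n → K1 * H ≤ Real.exp (5.17 * n) := fun n hn =>
    hn0s.trans (Real.exp_le_exp.2 (by gcongr))
  have ex1 : ∃ n, n0 ≤ n ∧ K3 * Real.exp (-5.33 * n) ≤ qn n * p := by
    by_contra hcon
    push Not at hcon
    have hb : ∀ n, n0 ≤ n → p ≤ K2 * H * Real.exp 10 * Real.exp (-0.5 * n) := by
      intro n hn
      rcases hd n (hge n hn) with h | h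
      · have i1 := mul_le_mul_of_nonneg_right (qn_lower n) hp0.le
        have i2 := i1.trans h
        have ex : Real.exp (-10.5 * n) = Real.exp (-(10 * (n + 1))) * (Real.exp 10 * Real.exp (-0.5 * n)) := by
          rw [← Real.exp_add, ← Real.exp_add]; congr 1; ring
        rw [ex] at i2
        refine le_of_mul_le_mul_left ?_ (Real.exp_pos (-(10 * ((n:ℝ) + 1))))
        linarith
      · exact absurd h (not_le.2 (hcon n hn))
    have hl : Tendsto (fun n : ℕ => K2 * H * Real.exp 10 * Real.exp (-0.5 * n)) atTop (𝓝 (K2 * H * Real.exp 10 * 0)) := by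
      apply Tendsto.const_mul
      apply Real.tendsto_exp_atBot.comp
      exact tendsto_natCast_atTop_atTop.const_mul_atTop_of_neg (by norm_num)
    rw [mul_zero] at hl
    have := ge_of_tendsto hl (eventually_atTop.2 ⟨n0, hb⟩)
    linarith
  set n1 := Nat.find ex1 with hn1
  obtain ⟨hs1, hs2⟩ := Nat.find_spec ex1
  rw [← hn1] at hs1 hs2
  refine ⟨n1, ?_, hs2⟩
  rcases eq_or_lt_of_le hs1 with h | h
  · rw [← h]; exact hn0u
  · have hm := Nat.find_min ex1 (m := n1 - 1) (by omega)
    have hm' : ¬ K3 * Real.exp (-5.33 * (n1 - 1 : ℕ)) ≤ qn (n1 - 1) * p := fun hh => hm ⟨by omega, hh⟩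
    have h1 := (hd (n1 - 1) (hge _ (by omega))).resolve_right hm'
    have h2 := hreg (n1 - 1)
    rw [Nat.sub_add_cancel (by omega)] at h2
    have h3 : K3 * Real.exp (-5.33 * n1) ≤ R * (K2 * H * Real.exp (-10.5 * (n1 - 1 : ℕ))) := by
      refine hs2.trans ((mul_le_mul_of_nonneg_right h2 hp0.le).trans ?_)
      rw [mul_assoc]; gcongr
    have e1 : Real.exp (-10.5 * (n1 - 1 : ℕ)) = Real.exp 10.5 * (Real.exp (-5.33 * n1) * Real.exp (-5.17 * n1)) := by
      rw [← Real.exp_add, ← Real.exp_add, Nat.cast_sub (by omega)]; congr 1; push_cast; ring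
    rw [e1] at h3
    have h4 : K3 ≤ R * K2 * H * Real.exp 10.5 * Real.exp (-5.17 * n1) := by
      refine le_of_mul_le_mul_left ?_ (Real.exp_pos (-5.33 * n1))
      linarith
    have e2 : Real.exp (-5.17 * n1) * Real.exp (5.17 * n1) = 1 := by
      rw [← Real.exp_add, ← Real.exp_zero]; congr 1; ring
    have h5 : K3 * Real.exp (5.17 * n1) ≤ R * K2 * Real.exp 10.5 * H := by
      have := mul_le_mul_of_nonneg_right h4 (Real.exp_pos (5.17 * n1)).le
      calc _ ≤ _ := this
        _ = R * K2 * Real.exp 10.5 * H * (Real.exp (-5.17 * n1) * Real.exp (5.17 * n1)) := by ring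
        _ = _ := by rw [e2, mul_one]
    have h6 : Real.exp (5.17 * n1) ≤ R * K2 * Real.exp 10.5 / K3 * H := by
      rw [div_mul_eq_mul_div, le_div_iff₀ hK3]; linarith
    have h7 : 0 ≤ (K1 * Real.exp 5.17 + Real.exp 5.17) * H := by positivity
    rw [hG]; linarith
end

section
open Polynomial Filter Topology


lemma coeff_le_height (P : ℤ[X]) (i : ℕ) : |P.coeff i| ≤ (polyHeight P : ℤ) := by
  by_cases h : P.coeff i = 0
  · rw [h]; simp
  · have : (P.coeff i).natAbs ≤ polyHeight P :=
      Finset.le_sup (f := fun i => (P.coeff i).natAbs) (mem_support_iff.2 h)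
    rw [Int.abs_eq_natAbs]; exact_mod_cast this

lemma poly_form {P : ℤ[X]} (h : P.natDegree ≤ 2) (x : ℝ) :
    aeval x P = P.coeff 2 * x ^ 2 + P.coeff 1 * x + P.coeff 0 := by
  rw [aeval_eq_sum_range' (show P.natDegree < 3 by omega)]
  simp [Finset.sum_range_succ]
  ring

lemma finite_small (M : ℕ) : {β : ℝ | ∃ P : ℤ[X], P ≠ 0 ∧ P.natDegree ≤ 2 ∧ polyHeight P ≤ M ∧
    aeval β P = 0}.Finite := by
  have hf : {P : ℤ[X] | P ≠ 0 ∧ P.natDegree ≤ 2 ∧ polyHeight P ≤ M}.Finite := by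
    have hI := (Set.finite_Icc (-(M : ℤ)) M)
    refine ((hI.prod (hI.prod hI)).image
      (fun t : ℤ × ℤ × ℤ => C t.1 * X ^ 2 + C t.2.1 * X + C t.2.2)).subset ?_
    rintro P ⟨_, h2, h3⟩
    refine ⟨(P.coeff 2, P.coeff 1, P.coeff 0), ?_, ?_⟩
    · have k : ∀ i, P.coeff i ∈ Set.Icc (-(M : ℤ)) M := fun i => by
        have := coeff_le_height P i
        have h4 : (polyHeight P : ℤ) ≤ M := by exact_mod_cast h3
        exact abs_le.1 (this.trans h4)
      exact ⟨k 2, k 1, k 0⟩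
    · have := as_sum_range_C_mul_X_pow' (p := P) (show P.natDegree < 3 by omega)
      conv_rhs => rw [this]
      simp [Finset.sum_range_succ]
      ring
  refine (hf.biUnion (t := fun P => P.rootSet ℝ) (fun P _ => P.rootSet_finite ℝ)).subset ?_
  rintro β ⟨P, h0, h2, h3, h4⟩
  refine Set.mem_biUnion (show P ∈ _ from ⟨h0, h2, h3⟩) ?_
  rw [mem_rootSet]
  exact ⟨h0, h4⟩

lemma finite_bad : {β : ℝ | ∃ P : ℤ[X], Irreducible P ∧ aeval β P = 0 ∧ aeval al P = 0}.Finite := by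
  by_cases hint : IsIntegral ℚ al
  · refine ((minpoly ℚ al).rootSet_finite ℝ).subset ?_
    rintro β ⟨P, hP, hb, ha⟩
    rw [mem_rootSet]
    refine ⟨minpoly.ne_zero hint, ?_⟩
    have hd : P.natDegree ≠ 0 := by
      intro h
      rw [eq_C_of_natDegree_eq_zero h] at ha hP
      simp at ha
      rw [ha] at hP
      simp at hP
    have hprim := hP.isPrimitive hd
    have hQ := (Polynomial.IsPrimitive.Int.irreducible_iff_irreducible_map_cast hprim).1 hP
    have e := minpoly.eq_of_irreducible (x := al) hQ (by
      rw [← ha, ← algebraMap_int_eq, aeval_map_algebraMap])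
    rw [← e, map_mul, ← algebraMap_int_eq, aeval_map_algebraMap, hb, zero_mul]
  · convert Set.finite_empty
    ext β
    simp only [Set.mem_setOf_eq, Set.mem_empty_iff_false, iff_false]
    rintro ⟨P, hP, hb, ha⟩
    apply hint
    rw [← isAlgebraic_iff_isIntegral]
    refine ⟨P.map (algebraMap ℤ ℚ), ?_, ?_⟩
    · rw [Ne, Polynomial.map_eq_zero_iff (by exact Int.cast_injective)]
      exact hP.ne_zero
    · rw [aeval_map_algebraMap, ha]

theorem non_quadraticity_measure_alpha_9 :
    ∀ κ : ℝ, κ > 12.4085 →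
      {β : ℝ | ∃ P : Polynomial ℤ, Irreducible P ∧ P.natDegree ≤ 2 ∧
          Polynomial.aeval β P = 0 ∧
          |Real.sqrt 13 * Real.log ((Real.sqrt 13 - 1) / (Real.sqrt 13 + 1)) - β| <
            ((polyHeight P : ℕ) : ℝ) ^ (-κ)}.Finite := by
  intro κ hκ
  obtain ⟨c, hc, hlow⟩ := lower_bound
  have e : Real.sqrt 13 * Real.log ((Real.sqrt 13 - 1) / (Real.sqrt 13 + 1)) = al := rfl
  rw [e]
  set T : ℝ := (2 * |al| + 2) / c with hT
  set M : ℕ := ⌈T ^ (1 / (κ - 12.33))⌉₊ with hM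
  refine (finite_bad.union (finite_small M)).subset ?_
  rintro β ⟨P, hP, h2, hb, hlt⟩
  by_cases ha : aeval al P = 0
  · exact Or.inl ⟨P, hP, hb, ha⟩
  right
  refine ⟨P, hP.ne_zero, h2, ?_, hb⟩
  set h := polyHeight P with hh
  have hi : ∀ i, |(P.coeff i : ℝ)| ≤ h := fun i => by
    have := coeff_le_height P i
    exact_mod_cast this
  have hpos : 1 ≤ h := by
    by_contra hcon
    have h0 : h = 0 := by omega
    apply hP.ne_zero
    ext i
    have := coeff_le_height P i
    rw [← hh, h0] at this
    simpa using this
  have hH : (1:ℝ) ≤ h := by exact_mod_cast hpos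
  have hform := poly_form h2 al
  have hformb := poly_form h2 β
  rw [hb] at hformb
  have hl := hlow (P.coeff 2) (P.coeff 1) (P.coeff 0) h hH (hi 2) (hi 1) (by rw [← hform]; exact ha)
  have hsmall : |al - β| < 1 := hlt.trans_le (Real.rpow_le_one_of_one_le_of_nonpos hH (by linarith))
  have hfac : (P.coeff 2 * al ^ 2 + P.coeff 1 * al + P.coeff 0 : ℝ) =
      (al - β) * (P.coeff 2 * (2 * al - (al - β)) + P.coeff 1) := by
    linear_combination (-1 : ℝ) * hformb
  have hub : |(P.coeff 2 * al ^ 2 + P.coeff 1 * al + P.coeff 0 : ℝ)| ≤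
      (h : ℝ) ^ (-κ) * (h * (2 * |al| + 2)) := by
    rw [hfac, abs_mul]
    have i2 : |2 * al - (al - β)| ≤ 2 * |al| + 1 := by
      refine (abs_sub _ _).trans ?_
      rw [abs_mul, abs_two]; linarith
    have i1 : |(P.coeff 2 * (2 * al - (al - β)) + P.coeff 1 : ℝ)| ≤ h * (2 * |al| + 2) := by
      calc _ ≤ |(P.coeff 2 * (2 * al - (al - β)) : ℝ)| + |(P.coeff 1 : ℝ)| := abs_add_le _ _
        _ ≤ h * (2 * |al| + 1) + h := by
          rw [abs_mul]
          have := hi 2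
          have := hi 1
          gcongr
        _ = _ := by ring
    gcongr
  have hfin := hl.trans hub
  have hh0 : (0:ℝ) < h := by linarith
  have hT' : (h : ℝ) ^ (κ - 12.33) ≤ T := by
    rw [hT, le_div_iff₀ hc]
    have e1 : (h : ℝ) ^ (κ - 12.33) = (h:ℝ) ^ (-11.33 : ℝ) * (h : ℝ) ^ (κ - 1) := by
      rw [← Real.rpow_add hh0]; congr 1; ring
    have e2 : (h : ℝ) ^ (-κ) * h * (h : ℝ) ^ (κ - 1) = 1 := by
      nth_rewrite 2 [← Real.rpow_one (h : ℝ)]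
      rw [← Real.rpow_add hh0, ← Real.rpow_add hh0, ← Real.rpow_zero (h : ℝ)]
      congr 1; ring
    have := mul_le_mul_of_nonneg_right hfin (Real.rpow_pos_of_pos hh0 (κ - 1)).le
    rw [e1]
    calc _ = c * (h:ℝ) ^ (-11.33 : ℝ) * (h : ℝ) ^ (κ - 1) := by ring
      _ ≤ _ := this
      _ = ((h : ℝ) ^ (-κ) * h * (h : ℝ) ^ (κ - 1)) * (2 * |al| + 2) := by ring
      _ = _ := by rw [e2, one_mul]
  have hk : 0 < κ - 12.33 := by linarith
  have hle : (h : ℝ) ≤ T ^ (1 / (κ - 12.33)) := by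
    calc (h : ℝ) = ((h : ℝ) ^ (κ - 12.33)) ^ (1 / (κ - 12.33)) := by
          rw [← Real.rpow_mul hh0.le, mul_one_div_cancel hk.ne', Real.rpow_one]
      _ ≤ _ := by gcongr
  have := hle.trans (Nat.le_ceil _)
  rw [← hM] at this
  exact_mod_cast this

end
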